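/- Let b ∈ ℝ, c < 0, m1 > 0 real, and q > 0 real be fixed, and consider the operator with potential v(x) = b·q^{m1}·cos 2x + c·q^{2m1}·cos 4x. Set A_m := (q^{2m1·m}·|c|^m / (2^{3m−3}·((2m−2)!!)²))·|cos(bπ/(4√(−2c)))|. Then there exist constants C > 0 and a positive integer M such that for all integers m ≥ M, |γ_{2m} − A_m| ≤ C·A_m·(log m)/m. -/

import Mathlib

open Real

noncomputable section

/-- `f` is a (possibly zero) solution of `-f'' + v f = λ f` that is `π`-periodic. -/
def IsPerEF (v : ℝ → ℝ) (lam : ℝ) (f : ℝ → ℝ) : Prop :=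
  ContDiff ℝ 2 f ∧ (∀ x, -(deriv (deriv f) x) + v x * f x = lam * f x) ∧
    ∀ x, f (x + Real.pi) = f x

/-- `f` is a (possibly zero) solution of `-f'' + v f = λ f` with `f(x+π) = -f(x)`. -/
def IsSemiEF (v : ℝ → ℝ) (lam : ℝ) (f : ℝ → ℝ) : Prop :=
  ContDiff ℝ 2 f ∧ (∀ x, -(deriv (deriv f) x) + v x * f x = lam * f x) ∧
    ∀ x, f (x + Real.pi) = -f x

/-- Multiplicity of `λ` as a periodic eigenvalue: the dimension of the space of
π-periodic solutions. -/
def perMult (v : ℝ → ℝ) (lam : ℝ) : ℕ :=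
  Module.finrank ℝ (Submodule.span ℝ {f : ℝ → ℝ | IsPerEF v lam f})

/-- Multiplicity of `λ` as a semi-periodic eigenvalue. -/
def semiMult (v : ℝ → ℝ) (lam : ℝ) : ℕ :=
  Module.finrank ℝ (Submodule.span ℝ {f : ℝ → ℝ | IsSemiEF v lam f})

/-- `lamP` enumerates the periodic eigenvalues of `-D² + v` in nondecreasing order
with multiplicity (indices `0, 1, 2, …`). -/
def EnumPer (v : ℝ → ℝ) (lamP : ℕ → ℝ) : Prop :=
  Monotone lamP ∧ (∀ n, ∃ f, f ≠ 0 ∧ IsPerEF v (lamP n) f) ∧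
    ∀ lam : ℝ, Nat.card {n : ℕ // lamP n = lam} = perMult v lam

/-- `lamM` enumerates the semi-periodic eigenvalues of `-D² + v` in nondecreasing order
with multiplicity (indices `1, 2, 3, …`). -/
def EnumSemi (v : ℝ → ℝ) (lamM : ℕ → ℝ) : Prop :=
  MonotoneOn lamM {n : ℕ | 1 ≤ n} ∧ (∀ n, 1 ≤ n → ∃ f, f ≠ 0 ∧ IsSemiEF v (lamM n) f) ∧
    ∀ lam : ℝ, Nat.card {n : ℕ // 1 ≤ n ∧ lamM n = lam} = semiMult v lam

/-- The length of the `n`-th instability interval: `λ_{n+1}^- - λ_n^-` for odd `n`,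
`λ_n^+ - λ_{n-1}^+` for even `n`. -/
def gapLen (lamP lamM : ℕ → ℝ) (n : ℕ) : ℝ :=
  if Odd n then lamM (n + 1) - lamM n else lamP n - lamP (n - 1)

section
/-- mean value over a period -/
def av (g : ℝ → ℝ) : ℝ := (1 / π) * ∫ x in (0:ℝ)..π, g x

def cas (x : ℝ) : ℝ := cos x + sin x

/-- Hartley coefficients -/
def Hc (g : ℝ → ℝ) (k : ℤ) : ℝ := av (fun x => g x * cas (2 * k * x))

lemma av_add {f g : ℝ → ℝ} (hf : Continuous f) (hg : Continuous g) :
    av (fun x => f x + g x) = av f + av g := by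
  unfold av
  rw [intervalIntegral.integral_add (hf.intervalIntegrable _ _) (hg.intervalIntegrable _ _)]
  ring

lemma av_sub {f g : ℝ → ℝ} (hf : Continuous f) (hg : Continuous g) :
    av (fun x => f x - g x) = av f - av g := by
  unfold av
  rw [intervalIntegral.integral_sub (hf.intervalIntegrable _ _) (hg.intervalIntegrable _ _)]
  ring

lemma av_smul (c : ℝ) (f : ℝ → ℝ) : av (fun x => c * f x) = c * av f := by
  unfold av
  rw [intervalIntegral.integral_const_mul]
  ring

lemma av_const (c : ℝ) : av (fun _ => c) = c := by
  unfold av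
  simp

lemma av_mono {f g : ℝ → ℝ} (hf : Continuous f) (hg : Continuous g) (h : ∀ x, f x ≤ g x) :
    av f ≤ av g := by
  unfold av
  apply mul_le_mul_of_nonneg_left _ (by positivity)
  exact intervalIntegral.integral_mono_on Real.pi_pos.le (hf.intervalIntegrable _ _)
    (hg.intervalIntegrable _ _) (fun x _ => h x)

lemma av_nonneg {f : ℝ → ℝ} (hf : Continuous f) (h : ∀ x, 0 ≤ f x) : 0 ≤ av f := by
  have := av_mono continuous_const hf h
  rwa [av_const] at this

@[fun_prop]
lemma continuous_cas : Continuous cas := by unfold cas; fun_prop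

lemma abs_cas_le (x : ℝ) : |cas x| ≤ 2 := by
  unfold cas
  have h1 := Real.abs_cos_le_one x
  have h2 := Real.abs_sin_le_one x
  calc _ ≤ |cos x| + |sin x| := abs_add_le _ _
    _ ≤ 2 := by linarith

lemma Hc_add {f g : ℝ → ℝ} (hf : Continuous f) (hg : Continuous g) (k : ℤ) :
    Hc (fun x => f x + g x) k = Hc f k + Hc g k := by
  unfold Hc
  rw [← av_add (by fun_prop) (by fun_prop)]
  congr 1; ext x; ring

lemma Hc_sub {f g : ℝ → ℝ} (hf : Continuous f) (hg : Continuous g) (k : ℤ) :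
    Hc (fun x => f x - g x) k = Hc f k - Hc g k := by
  unfold Hc
  rw [← av_sub (by fun_prop) (by fun_prop)]
  congr 1; ext x; ring

lemma Hc_smul (c : ℝ) (f : ℝ → ℝ) (k : ℤ) :
    Hc (fun x => c * f x) k = c * Hc f k := by
  unfold Hc
  rw [← av_smul]
  congr 1; ext x; ring

def Ac (g : ℝ → ℝ) (k : ℤ) : ℝ := av (fun x => g x * cos (2 * k * x))
def Bc (g : ℝ → ℝ) (k : ℤ) : ℝ := av (fun x => g x * sin (2 * k * x))

lemma Hc_eq {g : ℝ → ℝ} (hg : Continuous g) (k : ℤ) : Hc g k = Ac g k + Bc g k := by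
  unfold Hc Ac Bc
  rw [← av_add (by fun_prop) (by fun_prop)]
  congr 1; ext x; unfold cas; ring

lemma Ac_neg (g : ℝ → ℝ) (k : ℤ) : Ac g (-k) = Ac g k := by
  unfold Ac
  congr 1; ext x
  have : (2 * ((-k : ℤ) : ℝ) * x) = -(2 * k * x) := by push_cast; ring
  rw [this, Real.cos_neg]

lemma Bc_neg (g : ℝ → ℝ) (k : ℤ) : Bc g (-k) = - Bc g k := by
  unfold Bc
  have : ∀ x, (2 * ((-k : ℤ) : ℝ) * x) = -(2 * k * x) := by intro x; push_cast; ring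
  simp_rw [this, Real.sin_neg]
  rw [show (fun x => g x * - sin (2 * k * x)) = fun x => (-1) * (g x * sin (2 * k * x)) by
    ext x; ring, av_smul]
  ring

lemma fourierCoeffOn_eq {g : ℝ → ℝ} (hg : Continuous g) (k : ℤ) :
    fourierCoeffOn Real.pi_pos (fun x => (g x : ℂ)) k = (Ac g k : ℂ) - Complex.I * (Bc g k : ℂ) := by
  rw [fourierCoeffOn_eq_integral]
  unfold Ac Bc av
  push_cast
  rw [← intervalIntegral.integral_ofReal, ← intervalIntegral.integral_ofReal]
  rw [show ((1:ℂ) / (π:ℂ) * ∫ x in (0:ℝ)..π, ((g x * cos (2 * k * x) : ℝ) : ℂ)) - Complex.I * ((1:ℂ) / (π:ℂ) *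
    ∫ x in (0:ℝ)..π, ((g x * sin (2 * k * x) : ℝ) : ℂ)) = (1:ℂ) / (π:ℂ) *
    ((∫ x in (0:ℝ)..π, ((g x * cos (2 * k * x) : ℝ) : ℂ)) - Complex.I * ∫ x in (0:ℝ)..π, ((g x * sin (2 * k * x) : ℝ) : ℂ)) by ring]
  rw [← intervalIntegral.integral_const_mul, ← intervalIntegral.integral_sub
    (Continuous.intervalIntegrable (by fun_prop) _ _) (Continuous.intervalIntegrable (by fun_prop) _ _)]
  rw [Complex.real_smul]
  congr 1
  · simp
  apply intervalIntegral.integral_congr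
  intro x _
  simp only [smul_eq_mul]
  rw [fourier_coe_apply]
  have : (2 * (π:ℂ) * Complex.I * ((-k : ℤ) : ℂ) * (x:ℂ) / ((π - 0 : ℝ) : ℂ)) = ((-(2 * k * x) : ℝ) : ℂ) * Complex.I := by
    have : (π:ℂ) ≠ 0 := by exact_mod_cast Real.pi_ne_zero
    push_cast
    field_simp
    simp
    ring
  rw [this, Complex.exp_mul_I, ← Complex.ofReal_cos, ← Complex.ofReal_sin, Real.cos_neg, Real.sin_neg]
  push_cast
  ring

lemma parseval_aux {g : ℝ → ℝ} (hg : Continuous g) :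
    HasSum (fun k : ℤ => Ac g k ^ 2 + Bc g k ^ 2) (av (fun x => g x ^ 2)) := by
  have h := hasSum_sq_fourierCoeffOn (f := fun x => (g x : ℂ)) Real.pi_pos ?_
  · convert h using 1
    · ext k
      rw [fourierCoeffOn_eq hg, ← Complex.normSq_eq_norm_sq, Complex.normSq_apply]
      simp
      ring
    · unfold av
      simp
  · have hc : Continuous (fun x => (g x : ℂ)) := by fun_prop
    have : MeasureTheory.MemLp (fun x => (g x : ℂ)) ⊤ (MeasureTheory.volume.restrict (Set.Ioc 0 π)) := by
      obtain ⟨C, hC⟩ := (isCompact_Icc (a := (0:ℝ)) (b := π)).exists_bound_of_continuousOn hc.continuousOn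
      apply MeasureTheory.memLp_top_of_bound hc.aestronglyMeasurable C
      rw [MeasureTheory.ae_restrict_iff' measurableSet_Ioc]
      exact Filter.Eventually.of_forall fun x hx => hC x ⟨hx.1.le, hx.2⟩
    exact this.mono_exponent le_top

lemma parseval_sq {g : ℝ → ℝ} (hg : Continuous g) :
    HasSum (fun k : ℤ => Hc g k ^ 2) (av (fun x => g x ^ 2)) := by
  have h := parseval_aux hg
  have hs : Summable (fun k : ℤ => Ac g k * Bc g k) := by
    apply Summable.of_norm_bounded (g := fun k : ℤ => (Ac g k ^ 2 + Bc g k ^ 2)) h.summable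
    intro k
    rw [Real.norm_eq_abs, abs_mul]
    nlinarith [sq_nonneg (|Ac g k| - |Bc g k|), sq_abs (Ac g k), sq_abs (Bc g k), sq_nonneg (|Ac g k|), sq_nonneg (|Bc g k|)]
  have h0 : HasSum (fun k : ℤ => Ac g k * Bc g k) 0 := by
    have h1 := hs.hasSum
    have h2 : HasSum (fun k : ℤ => Ac g (-k) * Bc g (-k)) (∑' k : ℤ, Ac g k * Bc g k) :=
      (Equiv.neg ℤ).hasSum_iff.mpr h1
    have h3 : (fun k : ℤ => Ac g (-k) * Bc g (-k)) = fun k => -(Ac g k * Bc g k) := by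
      ext k; rw [Ac_neg, Bc_neg]; ring
    rw [h3] at h2
    have h4 := h2.unique h1.neg
    have : (∑' k : ℤ, Ac g k * Bc g k) = 0 := by linarith
    rwa [this] at h1
  have := h.add (h0.mul_left 2)
  convert this using 1
  · ext k; rw [Hc_eq hg]; ring
  · ring

theorem parseval {g h : ℝ → ℝ} (hg : Continuous g) (hh : Continuous h) :
    HasSum (fun k : ℤ => Hc g k * Hc h k) (av (fun x => g x * h x)) := by
  have h1 := parseval_sq (hg.add hh)
  have h2 := parseval_sq (hg.sub hh)
  have h3 := (h1.sub h2).mul_left (1/4)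
  have e : (fun k : ℤ => Hc g k * Hc h k) =
      fun k => 1 / 4 * (Hc (g + h) k ^ 2 - Hc (g - h) k ^ 2) := by
    ext k
    have e1 := Hc_add hg hh k
    have e2 := Hc_sub hg hh k
    change Hc g k * Hc h k = 1 / 4 * (Hc (fun x => g x + h x) k ^ 2 - Hc (fun x => g x - h x) k ^ 2)
    rw [e1, e2]; ring
  have e' : av (fun x => g x * h x) =
      1 / 4 * ((av fun x => (g + h) x ^ 2) - av fun x => (g - h) x ^ 2) := by
    simp only [Pi.add_apply, Pi.sub_apply]
    rw [← av_sub (by fun_prop) (by fun_prop), ← av_smul]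
    congr 1; ext x; ring
  rw [e, e']; exact h3

lemma eq_zero_of_av_sq {g : ℝ → ℝ} (hg : Continuous g) (hp : Function.Periodic g π)
    (h : av (fun x => g x ^ 2) = 0) : g = 0 := by
  have h1 : ∫ x in (0:ℝ)..π, g x ^ 2 = 0 := by
    unfold av at h
    have := Real.pi_pos
    rcases mul_eq_zero.mp h with h | h
    · exfalso; exact absurd h (by positivity)
    · exact h
  have h2 : ∀ x ∈ Set.Ico (0:ℝ) π, g x = 0 := by
    intro x hx
    by_contra hne
    have : 0 < ∫ x in (0:ℝ)..π, g x ^ 2 := by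
      apply intervalIntegral.integral_pos Real.pi_pos (by fun_prop) (fun x _ => sq_nonneg _)
      exact ⟨x, ⟨hx.1, hx.2.le⟩, by positivity⟩
    linarith
  ext x
  obtain ⟨y, hy, hxy⟩ := hp.exists_mem_Ico₀ Real.pi_pos x
  rw [hxy]; exact h2 y hy

lemma eq_zero_of_Hc {g : ℝ → ℝ} (hg : Continuous g) (hp : Function.Periodic g π)
    (h : ∀ k, Hc g k = 0) : g = 0 := by
  apply eq_zero_of_av_sq hg hp
  have := parseval_sq hg
  simp only [h] at this
  exact this.unique (by simp)

lemma av_deriv {f : ℝ → ℝ} (hf : ContDiff ℝ 1 f) (hp : Function.Periodic f π) :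
    av (deriv f) = 0 := by
  unfold av
  rw [intervalIntegral.integral_deriv_eq_sub (fun x _ => (hf.differentiable (by norm_num)) x)
    ((hf.continuous_deriv le_rfl).intervalIntegrable _ _)]
  have := hp 0
  simp at this
  rw [this]; simp

lemma periodic_deriv {f : ℝ → ℝ} {c : ℝ} (hp : Function.Periodic f c) : Function.Periodic (deriv f) c := by
  intro x
  have : deriv (fun y => f (y + c)) x = deriv f (x + c) := deriv_comp_add_const ..
  rw [← this]
  congr 1
  ext y; exact hp y

lemma ibp1 {f g : ℝ → ℝ} (hf : ContDiff ℝ 1 f) (hg : ContDiff ℝ 1 g)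
    (hfp : Function.Periodic f π) (hgp : Function.Periodic g π) :
    av (fun x => deriv f x * g x) = - av (fun x => f x * deriv g x) := by
  have hd : deriv (fun x => f x * g x) = fun x => deriv f x * g x + f x * deriv g x := by
    ext x
    exact deriv_mul (hf.differentiable (by norm_num) x) (hg.differentiable (by norm_num) x)
  have h0 := av_deriv (f := fun x => f x * g x) (hf.mul hg) (hfp.mul hgp)
  have c1 := hf.continuous_deriv le_rfl
  have c2 := hg.continuous_deriv le_rfl
  have c3 := hf.continuous
  have c4 := hg.continuous
  rw [hd, av_add (by fun_prop) (by fun_prop)] at h0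
  linarith

lemma contDiff_deriv {f : ℝ → ℝ} (hf : ContDiff ℝ 2 f) : ContDiff ℝ 1 (deriv f) := by
  have : ContDiff ℝ (1+1) f := by simpa [one_add_one_eq_two] using hf
  exact (contDiff_succ_iff_deriv.mp this).2.2

lemma cont_dd {f : ℝ → ℝ} (hf : ContDiff ℝ 2 f) : Continuous (deriv (deriv f)) :=
  (contDiff_deriv hf).continuous_deriv le_rfl

theorem ibp2 {f g : ℝ → ℝ} (hf : ContDiff ℝ 2 f) (hg : ContDiff ℝ 2 g)
    (hfp : Function.Periodic f π) (hgp : Function.Periodic g π) :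
    av (fun x => deriv (deriv f) x * g x) = av (fun x => f x * deriv (deriv g) x) := by
  have hf1 : ContDiff ℝ 1 f := hf.of_le (by norm_num)
  have hg1 : ContDiff ℝ 1 g := hg.of_le (by norm_num)
  rw [ibp1 (contDiff_deriv hf) hg1 (periodic_deriv hfp) hgp]
  have := ibp1 (contDiff_deriv hg) hf1 (periodic_deriv hgp) hfp
  rw [show (fun x => f x * deriv (deriv g) x) = fun x => deriv (deriv g) x * f x by ext x; ring, this]
  congr 2; ext x; ring

/-- The operator. -/
def Lop (v f : ℝ → ℝ) (x : ℝ) : ℝ := -(deriv (deriv f) x) + v x * f x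

lemma Lop_symm {v f g : ℝ → ℝ} (hv : Continuous v) (hf : ContDiff ℝ 2 f) (hg : ContDiff ℝ 2 g)
    (hfp : Function.Periodic f π) (hgp : Function.Periodic g π) :
    av (fun x => Lop v f x * g x) = av (fun x => f x * Lop v g x) := by
  have c1 := cont_dd hf
  have c2 := cont_dd hg
  have c3 := hf.continuous
  have c4 := hg.continuous
  unfold Lop
  have e1 : (fun x => (-(deriv (deriv f) x) + v x * f x) * g x) =
    fun x => v x * f x * g x - deriv (deriv f) x * g x := by ext x; ring
  have e2 : (fun x => f x * (-(deriv (deriv g) x) + v x * g x)) =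
    fun x => v x * f x * g x - f x * deriv (deriv g) x := by ext x; ring
  rw [e1, e2, av_sub (by fun_prop) (by fun_prop), av_sub (by fun_prop) (by fun_prop),
    ibp2 hf hg hfp hgp]
end

section
universe u

lemma hs_congr {ι : Type*} {f g : ι → ℝ} {a : ℝ} (hf : HasSum f a) (h : ∀ k, f k = g k) : HasSum g a := by
  have : f = g := funext h
  rwa [← this]

section abstractSpectral
variable {E : Type u} [NormedAddCommGroup E] [InnerProductSpace ℝ E] [CompleteSpace E]

open Module.End in
lemma exists_eigenbasis (T : E →L[ℝ] E) (hT : IsCompactOperator T)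
    (hs : (T : E →ₗ[ℝ] E).IsSymmetric) :
    ∃ (ι : Type u) (b : HilbertBasis ι ℝ E) (κ : ι → ℝ), ∀ i, T (b i) = κ i • b i := by
  have hcl : ∀ μ : ℝ, IsClosed ((eigenspace (T : Module.End ℝ E) μ : Submodule ℝ E) : Set E) := by
    intro μ
    have : ((eigenspace (T : Module.End ℝ E) μ : Submodule ℝ E) : Set E) = {x | T x = μ • x} := by
      ext x; simp [mem_eigenspace_iff]
    rw [this]
    exact isClosed_eq (by fun_prop) (by fun_prop)
  haveI : ∀ μ : ℝ, CompleteSpace (eigenspace (T : Module.End ℝ E) μ) := fun μ =>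
    (hcl μ).completeSpace_coe
  choose w b hb using fun μ : ℝ => exists_hilbertBasis ℝ (eigenspace (T : Module.End ℝ E) μ)
  have hO := hs.orthogonalFamily_eigenspaces
  have hon := hO.orthonormal_sigma_orthonormal (v_family := fun μ => (b μ : w μ → _)) (fun μ => (b μ).orthonormal)
  have hbot : (Submodule.span ℝ (Set.range
      (fun a : Σ μ, w μ => (eigenspace (T : Module.End ℝ E) a.1).subtypeₗᵢ (b a.1 a.2))))ᗮ = ⊥ := by
    rw [eq_bot_iff, ← T.orthogonalComplement_iSup_eigenspaces_eq_bot hT hs]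
    intro x hx
    rw [Submodule.mem_orthogonal] at hx ⊢
    rw [← Submodule.mem_orthogonal, ← Submodule.iInf_orthogonal, Submodule.mem_iInf]
    intro μ
    rw [Submodule.mem_orthogonal]
    intro u hu
    have h1 := (b μ).hasSum_repr ⟨u, hu⟩
    have h2 := h1.mapL ((innerSL ℝ x).comp (Submodule.subtypeL (eigenspace (T : Module.End ℝ E) μ)))
    have h3 : ∀ i, ((innerSL ℝ x).comp (Submodule.subtypeL (eigenspace (T : Module.End ℝ E) μ)))
      ((b μ).repr ⟨u, hu⟩ i • (b μ) i) = 0 := by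
      intro i
      have := hx ((b μ i : E)) (Submodule.subset_span ⟨⟨μ, i⟩, rfl⟩)
      have h5 : inner ℝ x (b μ i : E) = 0 := by rw [real_inner_comm]; exact this
      simp [h5]
    have h2' : HasSum (fun _ : w μ => (0:ℝ)) (((innerSL ℝ x).comp (Submodule.subtypeL (eigenspace (T : Module.End ℝ E) μ))) ⟨u, hu⟩) := by
      exact hs_congr h2 h3
    have h4 : inner ℝ x u = 0 := h2'.unique hasSum_zero
    rw [real_inner_comm]; exact h4
  refine ⟨_, HilbertBasis.mkOfOrthogonalEqBot hon hbot, fun a => a.1, ?_⟩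
  intro a
  rw [HilbertBasis.coe_mkOfOrthogonalEqBot]
  have := (b a.1 a.2).2
  rw [mem_eigenspace_iff] at this
  exact this

lemma exists_low_eigenvector (T : E →L[ℝ] E) (hT : IsCompactOperator T)
    (hs : (T : E →ₗ[ℝ] E).IsSymmetric) (x z : E) (hx : x ≠ 0) (hz : T z = x) (τ τ' : ℝ)
    (hτ : inner ℝ z x ≤ τ * ‖x‖ ^ 2) (hττ : τ < τ') :
    ∃ κ y, T y = κ • y ∧ κ ≠ 0 ∧ κ⁻¹ < τ' ∧ inner ℝ y x ≠ 0 := by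
  obtain ⟨ι, b, κ, hb⟩ := exists_eigenbasis T hT hs
  by_contra! hcon
  have h1 := b.hasSum_inner_mul_inner z x
  have h2 := (b.hasSum_inner_mul_inner x x).mul_left τ'
  have h3 : τ' * inner ℝ x x ≤ inner ℝ z x := by
    apply hasSum_le _ h2 h1
    intro i
    have e : inner ℝ (b i) x = κ i * inner ℝ z (b i) := by
      rw [← hz]
      have := hs (b i) z
      simp only [ContinuousLinearMap.coe_coe] at this
      rw [← this, hb, real_inner_smul_left, real_inner_comm]
    by_cases h0 : inner ℝ (b i) x = 0
    · simp [h0]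
    · have hk : κ i ≠ 0 := by
        intro h; rw [h, zero_mul] at e; exact h0 e
      have h4 : τ' ≤ (κ i)⁻¹ := by
        by_contra! h5
        exact h0 (hcon (κ i) (b i) (hb i) hk h5)
      have h6 : inner ℝ z (b i) = (κ i)⁻¹ * inner ℝ (b i) x := by
        rw [e]; field_simp
      rw [h6, real_inner_comm]
      nlinarith [mul_self_nonneg (inner ℝ (b i) x)]
  rw [real_inner_self_eq_norm_sq] at h3
  have : 0 < ‖x‖ ^ 2 := by positivity
  nlinarith

end abstractSpectral

abbrev l2 := lp (fun _ : ℤ => ℝ) 2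

lemma l2_mem {y : ℤ → ℝ} (h : Summable fun k => y k ^ 2) : Memℓp y (2 : ENNReal) := by
  apply memℓp_gen
  simpa using h

lemma l2_summable (y : l2) : Summable fun k => y k ^ 2 := by
  have := lp.memℓp y
  have := this.summable (by norm_num)
  simpa using this

lemma l2_hasSum (y : l2) : HasSum (fun k => y k ^ 2) (‖y‖ ^ 2) := by
  have := lp.hasSum_inner (𝕜 := ℝ) y y
  rw [real_inner_self_eq_norm_sq] at this
  refine hs_congr this fun k => ?_
  simp [pow_two]

lemma l2_inner (y z : l2) : HasSum (fun k => y k * z k) (inner ℝ y z) := by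
  have := lp.hasSum_inner (𝕜 := ℝ) y z
  refine hs_congr this fun k => ?_
  simp [mul_comm]

/-- A bounded operator from a pointwise formula. -/
def mkOp (F : (ℤ → ℝ) →ₗ[ℝ] (ℤ → ℝ)) (C : ℝ) 
    (h : ∀ y : l2, Summable (fun k => F y k ^ 2) ∧ ∑' k, F y k ^ 2 ≤ (C * ‖y‖) ^ 2) (hC : 0 ≤ C) : l2 →L[ℝ] l2 :=
  LinearMap.mkContinuous
    { toFun := fun y => (⟨F y, l2_mem (h y).1⟩ : l2)
      map_add' := by
        intro x y; ext k
        change F ((x : ℤ → ℝ) + (y : ℤ → ℝ)) k = F x k + F y k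
        rw [map_add]; rfl
      map_smul' := by
        intro c x; ext k
        change F (c • (x : ℤ → ℝ)) k = c • F x k
        rw [map_smul]; rfl } C (by
    intro y
    apply abs_le_of_sq_le_sq' _ (by positivity) |>.2
    rw [← (l2_hasSum _).tsum_eq]
    exact (h y).2)

lemma mkOp_apply (F C h hC) (y : l2) (k : ℤ) : mkOp F C h hC y k = F y k := rfl

lemma mkOp_norm (F C h hC) : ‖mkOp F C h hC‖ ≤ C := LinearMap.mkContinuous_norm_le _ hC _

def shiftOp (n : ℤ) : l2 →L[ℝ] l2 := mkOp
  { toFun := fun y k => y (k + n)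
    map_add' := by intros; rfl
    map_smul' := by intros; rfl } 1 (by
    intro y
    have h := (Equiv.addRight n).hasSum_iff.mpr (l2_hasSum y)
    simp only [Function.comp_def, Equiv.coe_addRight] at h
    refine ⟨h.summable, ?_⟩
    rw [one_mul]
    exact h.tsum_eq.le) zero_le_one

lemma shiftOp_apply (n : ℤ) (y : l2) (k : ℤ) : shiftOp n y k = y (k + n) := rfl
lemma shiftOp_norm (n : ℤ) : ‖shiftOp n‖ ≤ 1 := mkOp_norm _ _ _ _

lemma shiftOp_inner (n : ℤ) (y z : l2) : inner ℝ (shiftOp n y) z = inner ℝ y (shiftOp (-n) z) := by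
  have h1 := l2_inner (shiftOp n y) z
  have h2 := (Equiv.addRight n).hasSum_iff.mpr (l2_inner y (shiftOp (-n) z))
  simp only [Function.comp_def, Equiv.coe_addRight, shiftOp_apply] at h1 h2
  simp only [add_neg_cancel_right] at h2
  exact h1.unique h2

def diagOp (σ : ℤ → ℝ) (C : ℝ) (hC : 0 ≤ C) (h : ∀ k, |σ k| ≤ C) : l2 →L[ℝ] l2 := mkOp
  { toFun := fun y k => σ k * y k
    map_add' := by intros; ext; simp; ring
    map_smul' := by intros; ext; simp; ring } C (by
    intro y
    have hle : ∀ k, (σ k * y k) ^ 2 ≤ C ^ 2 * y k ^ 2 := by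
      intro k
      rw [mul_pow]
      apply mul_le_mul_of_nonneg_right _ (sq_nonneg _)
      exact sq_le_sq' (abs_le.mp (h k)).1 (abs_le.mp (h k)).2
    have hs := (l2_hasSum y).mul_left (C ^ 2)
    have h1 : Summable (fun k => (σ k * y k) ^ 2) :=
      Summable.of_nonneg_of_le (fun k => sq_nonneg _) hle hs.summable
    refine ⟨h1, ?_⟩
    rw [mul_pow, ← hs.tsum_eq]
    exact h1.tsum_le_tsum hle hs.summable) hC

lemma diagOp_apply (σ C hC h) (y : l2) (k : ℤ) : diagOp σ C hC h y k = σ k * y k := rfl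
lemma diagOp_norm (σ C hC h) : ‖diagOp σ C hC h‖ ≤ C := mkOp_norm _ _ _ _

lemma diagOp_inner (σ C hC h) (y z : l2) :
    inner ℝ (diagOp σ C hC h y) z = inner ℝ y (diagOp σ C hC h z) := by
  have h1 := l2_inner (diagOp σ C hC h y) z
  have h2 := l2_inner y (diagOp σ C hC h z)
  simp only [diagOp_apply] at h1 h2
  refine h1.unique ?_
  convert h2 using 2
  ring

def VopL (a b : ℝ) : l2 →L[ℝ] l2 :=
  (a / 2) • (shiftOp 1 + shiftOp (-1)) + (b / 2) • (shiftOp 2 + shiftOp (-2))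

lemma VopL_apply (a b : ℝ) (y : l2) (k : ℤ) : VopL a b y k =
    a / 2 * (y (k + 1) + y (k - 1)) + b / 2 * (y (k + 2) + y (k - 2)) := by
  change (a / 2) * (shiftOp 1 y k + shiftOp (-1) y k) + (b / 2) * (shiftOp 2 y k + shiftOp (-2) y k) = _
  simp [shiftOp_apply, sub_eq_add_neg]

lemma VopL_norm (a b : ℝ) : ‖VopL a b‖ ≤ |a| + |b| := by
  unfold VopL
  have h : ∀ n m : ℤ, ‖shiftOp n + shiftOp m‖ ≤ 2 := by
    intro n m
    calc _ ≤ ‖shiftOp n‖ + ‖shiftOp m‖ := norm_add_le _ _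
      _ ≤ 2 := by linarith [shiftOp_norm n, shiftOp_norm m]
  calc _ ≤ ‖(a / 2) • (shiftOp 1 + shiftOp (-1))‖ + ‖(b / 2) • (shiftOp 2 + shiftOp (-2))‖ := norm_add_le _ _
    _ ≤ |a| / 2 * 2 + |b| / 2 * 2 := by
      rw [norm_smul, norm_smul]
      simp only [Real.norm_eq_abs, abs_div, abs_two]
      gcongr <;> apply h
    _ = _ := by ring

lemma VopL_inner (a b : ℝ) (y z : l2) : inner ℝ (VopL a b y) z = inner ℝ y (VopL a b z) := by
  simp only [VopL, add_apply, smul_apply, inner_add_left, inner_add_right,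
    real_inner_smul_left, real_inner_smul_right, shiftOp_inner, neg_neg]
  ring

def resv (s : ℝ) (k : ℤ) : ℝ := 1 / (4 * (k : ℝ) ^ 2 + s)

lemma resv_bound {s : ℝ} (hs : 0 < s) (k : ℤ) : |resv s k| ≤ 1 / s := by
  unfold resv
  rw [abs_of_nonneg (by positivity)]
  gcongr
  nlinarith [sq_nonneg (k:ℝ)]

def Rop (s : ℝ) (hs : 0 < s) : l2 →L[ℝ] l2 := diagOp (resv s) (1 / s) (by positivity) (resv_bound hs)

lemma isCompact_rankone (i : ℤ) (c : ℝ) : IsCompactOperator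
    (c • (lp.singleContinuousLinearMap ℝ (fun _ : ℤ => ℝ) 2 i ∘L lp.evalCLM ℝ (fun _ : ℤ => ℝ) 2 i) : l2 →L[ℝ] l2) := by
  have h := (isCompactOperator_of_locallyCompactSpace_rng (lp.singleContinuousLinearMap ℝ (fun _ : ℤ => ℝ) 2 i)).comp_clm
    (lp.evalCLM ℝ (fun _ : ℤ => ℝ) 2 i)
  exact (compactOperator (RingHom.id ℝ) l2 l2).smul_mem c h

lemma Rop_compact (s : ℝ) (hs : 0 < s) : IsCompactOperator (Rop s hs) := by
  let RN : ℕ → (l2 →L[ℝ] l2) := fun N => ∑ i ∈ Finset.Icc (-(N:ℤ)) N, resv s i •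
    (lp.singleContinuousLinearMap ℝ (fun _ : ℤ => ℝ) 2 i ∘L lp.evalCLM ℝ (fun _ : ℤ => ℝ) 2 i)
  have hRN : ∀ N, IsCompactOperator (RN N) := by
    intro N
    have : RN N ∈ compactOperator (RingHom.id ℝ) l2 l2 := by
      apply Submodule.sum_mem
      intro i _
      exact isCompact_rankone i _
    exact this
  have hap : ∀ N y k, RN N y k = if k ∈ Finset.Icc (-(N:ℤ)) N then resv s k * y k else 0 := by
    intro N y k
    simp only [RN, sum_apply, smul_apply, lp.coeFn_sum, Finset.sum_apply, lp.coeFn_smul, Pi.smul_apply]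
    simp [lp.evalCLM, Pi.single_apply]
  have hdiff : ∀ N : ℕ, ‖RN N - Rop s hs‖ ≤ 1 / ((N:ℝ) + 1) := by
    intro N
    have hpos : (0:ℝ) ≤ 1 / ((N:ℝ) + 1) := by positivity
    have hb : ∀ k : ℤ, |(if k ∈ Finset.Icc (-(N:ℤ)) N then 0 else - resv s k)| ≤ 1 / ((N:ℝ) + 1) := by
      intro k
      split_ifs with h
      · simpa using hpos
      · rw [abs_neg]
        unfold resv
        rw [abs_of_nonneg (by positivity)]
        have hk : ((N:ℝ) + 1) ≤ |(k:ℝ)| := by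
          have : (N:ℤ) + 1 ≤ |k| := by
            by_contra! h2
            apply h
            rw [Finset.mem_Icc]
            have := abs_lt.mp h2
            omega
          exact_mod_cast this
        apply one_div_le_one_div_of_le (by positivity)
        have : (k:ℝ)^2 = |(k:ℝ)|^2 := (sq_abs _).symm
        rw [this]
        have : (0:ℝ) ≤ N := Nat.cast_nonneg N
        nlinarith
    have : RN N - Rop s hs = diagOp _ _ hpos hb := by
      ext y k
      rw [diagOp_apply]
      simp only [sub_apply, lp.coeFn_sub, Pi.sub_apply, hap, Rop, diagOp_apply]
      split_ifs <;> ring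
    rw [this]
    exact diagOp_norm _ _ _ _
  refine isCompactOperator_of_tendsto (l := Filter.atTop) (F := RN) ?_ (Filter.Eventually.of_forall hRN)
  rw [tendsto_iff_norm_sub_tendsto_zero]
  exact squeeze_zero (fun N => norm_nonneg _) hdiff tendsto_one_div_add_atTop_nhds_zero_nat
end

section
lemma low_eigenseq (a b : ℝ) (m : ℕ) (x : l2) (hx : x ≠ 0) (hsupp : ∀ k : ℤ, (m:ℤ) < |k| → x k = 0)
    (Lam : ℝ) (hL : 4 * (m:ℝ) ^ 2 + (|a| + |b|) < Lam) :
    ∃ lam < Lam, ∃ y : l2, (∀ k : ℤ, 4 * (k:ℝ) ^ 2 * y k +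
      (a / 2 * (y (k + 1) + y (k - 1)) + b / 2 * (y (k + 2) + y (k - 2))) = lam * y k) ∧
      inner ℝ y x ≠ 0 := by
  obtain ⟨V0, hV0⟩ : ∃ V0, V0 = |a| + |b| := ⟨_, rfl⟩
  have hV0n : 0 ≤ V0 := by rw [hV0]; positivity
  obtain ⟨s, hs⟩ : ∃ s, s = V0 + 1 := ⟨_, rfl⟩
  have hs0 : 0 < s := by linarith
  set R := Rop s hs0 with hR
  set V := VopL a b with hV
  have hVR : ‖-(V * R)‖ < 1 := by
    rw [norm_neg]
    calc ‖V * R‖ ≤ ‖V‖ * ‖R‖ := norm_mul_le _ _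
      _ ≤ V0 * (1 / s) := by
        gcongr
        · rw [hV0]; exact VopL_norm a b
        · exact diagOp_norm _ _ _ _
      _ < 1 := by
        rw [mul_one_div, div_lt_one hs0]; linarith
  obtain ⟨U, hU⟩ := isUnit_one_sub_of_norm_lt_one hVR
  set Ui : l2 →L[ℝ] l2 := U⁻¹.val with hUi
  have h1 : ∀ x, Ui x + V (R (Ui x)) = x := by
    intro x
    have : (U : l2 →L[ℝ] l2) * Ui = 1 := U.mul_inv
    rw [hU] at this
    have := congrArg (fun T : l2 →L[ℝ] l2 => T x) this
    simpa [sub_neg_eq_add, mul_apply] using this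
  have h2 : ∀ x, Ui (x + V (R x)) = x := by
    intro x
    have : Ui * (U : l2 →L[ℝ] l2) = 1 := U.inv_mul
    rw [hU] at this
    have := congrArg (fun T : l2 →L[ℝ] l2 => T x) this
    simpa [sub_neg_eq_add, mul_apply] using this
  have hRs : ∀ x y, inner ℝ (R x) y = inner ℝ x (R y) := fun x y => diagOp_inner _ _ _ _ x y
  have hVs : ∀ x y, inner ℝ (V x) y = inner ℝ x (V y) := fun x y => VopL_inner _ _ x y
  set K : l2 →L[ℝ] l2 := R ∘L Ui with hK
  have hKc : IsCompactOperator K := (Rop_compact s hs0).comp_clm Ui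
  have hKs : (K : l2 →ₗ[ℝ] l2).IsSymmetric := by
    intro x y
    change inner ℝ (R (Ui x)) y = inner ℝ x (R (Ui y))
    have hx := h1 x
    have hy := h1 y
    generalize Ui x = u at *
    generalize Ui y = w at *
    rw [← hx, ← hy]
    rw [inner_add_left, inner_add_right, hRs, hRs, hVs, hRs]
  obtain ⟨C, hC⟩ : ∃ C : ℝ, C = 4 * (m:ℝ) ^ 2 + s := ⟨_, rfl⟩
  have hCn : 0 ≤ C := by rw [hC]; positivity
  have hsig : ∀ k : ℤ, |(if |k| ≤ (m:ℤ) then 4 * (k:ℝ)^2 + s else 0)| ≤ C := by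
    intro k
    split_ifs with h
    · rw [abs_of_nonneg (by positivity), hC]
      have h' : |(k:ℝ)| ≤ m := by exact_mod_cast h
      have : (k:ℝ)^2 ≤ (m:ℝ)^2 := by rw [← sq_abs]; gcongr
      linarith
    · simpa using hCn
  set w := diagOp _ C hCn hsig x with hw
  have hRw : R w = x := by
    ext k
    rw [hR, Rop, diagOp_apply, hw, diagOp_apply]
    split_ifs with h
    · have : 4 * (k:ℝ)^2 + s ≠ 0 := by positivity
      unfold resv
      field_simp
    · rw [hsupp k (by omega)]; ring
  have hKz : K (w + V x) = x := by
    change R (Ui (w + V x)) = x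
    nth_rw 1 [← hRw]
    rw [h2, hRw]
  have hzx : inner ℝ (w + V x) x ≤ (C + V0) * ‖x‖ ^ 2 := by
    rw [inner_add_left]
    have e1 : inner ℝ w x ≤ C * ‖x‖ ^ 2 := by
      calc _ ≤ ‖w‖ * ‖x‖ := real_inner_le_norm _ _
        _ ≤ (C * ‖x‖) * ‖x‖ := by
          gcongr
          exact (ContinuousLinearMap.le_opNorm _ _).trans (by gcongr; exact diagOp_norm _ _ _ _)
        _ = _ := by ring
    have e2 : inner ℝ (V x) x ≤ V0 * ‖x‖ ^ 2 := by
      calc _ ≤ ‖V x‖ * ‖x‖ := real_inner_le_norm _ _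
        _ ≤ (V0 * ‖x‖) * ‖x‖ := by
          gcongr
          exact (ContinuousLinearMap.le_opNorm _ _).trans (by gcongr; rw [hV0]; exact VopL_norm a b)
        _ = _ := by ring
    linarith
  obtain ⟨κ, y, hy, hκ, hlt, hin⟩ := exists_low_eigenvector K hKc hKs x _ hx hKz (C + V0) (Lam + s) hzx
    (by rw [hC, hV0]; linarith)
  refine ⟨κ⁻¹ - s, by linarith, y, ?_, hin⟩
  intro k
  have e1 := h1 y
  have e2 : R (Ui y) = κ • y := hy
  rw [e2, map_smul] at e1
  have e3 := congrArg (fun z : l2 => z k) e1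
  have e4 := congrArg (fun z : l2 => z k) e2
  have e3' : Ui y k + κ * V y k = y k := e3
  have e4' : resv s k * Ui y k = κ * y k := e4
  rw [← VopL_apply, ← hV]
  unfold resv at e4'
  have : 4 * (k:ℝ)^2 + s ≠ 0 := by positivity
  field_simp at e4' ⊢
  rw [e4'] at e3'
  nlinarith
end

section
def pot (a b : ℝ) (x : ℝ) : ℝ := a * cos (2 * x) + b * cos (4 * x)

@[fun_prop]
lemma continuous_pot (a b : ℝ) : Continuous (pot a b) := by unfold pot; fun_prop

lemma pot_periodic (a b : ℝ) : Function.Periodic (pot a b) π := by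
  intro x
  unfold pot
  rw [show 2 * (x + π) = 2 * x + 2 * π by ring, show 4 * (x + π) = 4 * x + 2 * π + 2 * π by ring]
  simp [cos_add_two_pi]

lemma abs_pot_le (a b x : ℝ) : |pot a b x| ≤ |a| + |b| := by
  unfold pot
  calc _ ≤ |a * cos (2 * x)| + |b * cos (4 * x)| := abs_add_le _ _
    _ ≤ |a| * 1 + |b| * 1 := by
      rw [abs_mul, abs_mul]
      gcongr <;> exact abs_cos_le_one _
    _ = _ := by ring

lemma shift_weight (k j : ℤ) (hj : j ^ 2 ≤ 4) : (1 + (k:ℝ)^2) ≤ 10 * (1 + ((k + j : ℤ) : ℝ)^2) := by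
  have hj' : (j:ℝ)^2 ≤ 4 := by exact_mod_cast hj
  push_cast
  nlinarith [sq_nonneg ((k:ℝ) + 2 * j)]

lemma decay_step (a b lam : ℝ) (y : ℤ → ℝ)
    (hy : ∀ k : ℤ, 4 * (k:ℝ) ^ 2 * y k +
      (a / 2 * (y (k + 1) + y (k - 1)) + b / 2 * (y (k + 2) + y (k - 2))) = lam * y k)
    (p : ℕ) (B : ℝ) (hB : ∀ k : ℤ, (1 + (k:ℝ)^2)^p * |y k| ≤ B) :
    ∃ B', ∀ k : ℤ, (1 + (k:ℝ)^2)^(p+1) * |y k| ≤ B' := by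
  refine ⟨(4 + |lam|) * B + |a| * (10 ^ p * B) + |b| * (10 ^ p * B), ?_⟩
  intro k
  have hsh : ∀ j : ℤ, j ^ 2 ≤ 4 → (1 + (k:ℝ)^2)^p * |y (k + j)| ≤ 10 ^ p * B := by
    intro j hj
    calc _ ≤ (10 * (1 + ((k + j : ℤ) : ℝ)^2))^p * |y (k + j)| := by
          gcongr; exact shift_weight k j hj
      _ = 10 ^ p * ((1 + ((k + j : ℤ) : ℝ)^2)^p * |y (k + j)|) := by rw [mul_pow]; ring
      _ ≤ _ := by gcongr; exact hB _
  have h1 := hsh 1 (by norm_num)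
  have h2 := hsh (-1) (by norm_num)
  have h3 := hsh 2 (by norm_num)
  have h4 := hsh (-2) (by norm_num)
  simp only [← sub_eq_add_neg] at h2 h4
  have h0 := hB k
  have e : 4 * ((1 + (k:ℝ)^2) * y k) = (4 + lam) * y k - a / 2 * y (k+1) - a / 2 * y (k-1)
      - b / 2 * y (k+2) - b / 2 * y (k-2) := by linarith [hy k]
  have e2 : (1 + (k:ℝ)^2) * |y k| ≤ (4 + |lam|) * |y k| + |a| / 2 * |y (k+1)| + |a| / 2 * |y (k-1)|
      + |b| / 2 * |y (k+2)| + |b| / 2 * |y (k-2)| := by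
    have : |4 * ((1 + (k:ℝ)^2) * y k)| ≤ (4 + |lam|) * |y k| + |a| / 2 * |y (k+1)| + |a| / 2 * |y (k-1)|
      + |b| / 2 * |y (k+2)| + |b| / 2 * |y (k-2)| := by
      rw [e]
      have t1 : |(4 + lam) * y k| ≤ (4 + |lam|) * |y k| := by
        rw [abs_mul]; gcongr
        calc _ ≤ |(4:ℝ)| + |lam| := abs_add_le _ _
          _ = _ := by norm_num
      have t2 : ∀ c z : ℝ, |c / 2 * z| = |c| / 2 * |z| := by
        intro c z; rw [abs_mul, abs_div, abs_two]
      rw [← t2, ← t2, ← t2, ← t2]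
      refine (abs_sub _ _).trans (add_le_add ((abs_sub _ _).trans (add_le_add ((abs_sub _ _).trans (add_le_add ((abs_sub _ _).trans (add_le_add t1 le_rfl)) le_rfl)) le_rfl)) le_rfl)
    rw [abs_mul, abs_mul, abs_of_pos (show (0:ℝ) < 4 by norm_num), abs_of_pos (show (0:ℝ) < 1 + (k:ℝ)^2 by positivity)] at this
    have : 0 ≤ (1 + (k:ℝ)^2) * |y k| := by positivity
    linarith
  set W := (1 + (k:ℝ)^2)^p with hW
  have hW0 : 0 ≤ W := by positivity
  calc (1 + (k:ℝ)^2)^(p+1) * |y k| = W * ((1 + (k:ℝ)^2) * |y k|) := by rw [pow_succ]; ring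
    _ ≤ W * ((4 + |lam|) * |y k| + |a| / 2 * |y (k+1)| + |a| / 2 * |y (k-1)|
      + |b| / 2 * |y (k+2)| + |b| / 2 * |y (k-2)|) := by gcongr
    _ = (4 + |lam|) * (W * |y k|) + |a| / 2 * (W * |y (k+1)|) + |a| / 2 * (W * |y (k-1)|)
      + |b| / 2 * (W * |y (k+2)|) + |b| / 2 * (W * |y (k-2)|) := by ring
    _ ≤ (4 + |lam|) * B + |a| / 2 * (10 ^ p * B) + |a| / 2 * (10 ^ p * B)
      + |b| / 2 * (10 ^ p * B) + |b| / 2 * (10 ^ p * B) := by gcongr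
    _ = _ := by ring

lemma cos_mul_cas (A B : ℝ) : cos A * cas B = (cas (B + A) + cas (B - A)) / 2 := by
  unfold cas
  rw [cos_add, cos_sub, sin_add, sin_sub]; ring

lemma summable_weight : Summable (fun k : ℤ => (1:ℝ) / (1 + (k:ℝ)^2)) := by
  have h : Summable (fun k : ℤ => (1:ℝ) / (k:ℝ)^2) := by
    exact Real.summable_one_div_int_pow.mpr (by norm_num)
  have h1 : Summable (fun k : ℤ => if k = 0 then (1:ℝ) else 0) := by
    exact (hasSum_ite_eq (0:ℤ) (1:ℝ)).summable
  refine Summable.of_nonneg_of_le (fun k => by positivity) (fun k => ?_) (h.add h1)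
  by_cases hk : k = 0
  · simp [hk]
  · have : (0:ℝ) < (k:ℝ)^2 := by positivity
    simp only [hk, if_false, add_zero]
    apply one_div_le_one_div_of_le this
    linarith

lemma av_cos (n : ℤ) : av (fun x => cos (2 * n * x)) = if n = 0 then 1 else 0 := by
  split_ifs with h
  · simp [h, av_const]
  · unfold av
    have h2 : (2 * (n:ℝ)) ≠ 0 := by simpa using h
    have : ∫ x in (0:ℝ)..π, cos (2 * n * x) = 0 := by
      rw [intervalIntegral.integral_comp_mul_left (fun x => cos x) h2]
      simp only [integral_cos, mul_zero, sin_zero, sub_zero]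
      have : 2 * (n:ℝ) * π = ((2 * n : ℤ) : ℝ) * π := by push_cast; ring
      rw [this, sin_int_mul_pi]; simp
    rw [this, mul_zero]

lemma av_sin (n : ℤ) : av (fun x => sin (2 * n * x)) = 0 := by
  by_cases h : n = 0
  · simp [h, av_const]
  · unfold av
    have h2 : (2 * (n:ℝ)) ≠ 0 := by simpa using h
    have : ∫ x in (0:ℝ)..π, sin (2 * n * x) = 0 := by
      rw [intervalIntegral.integral_comp_mul_left (fun x => sin x) h2]
      simp only [integral_sin, mul_zero, cos_zero]
      have : 2 * (n:ℝ) * π = (n : ℝ) * (2 * π) := by ring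
      rw [this, cos_int_mul_two_pi]; simp
    rw [this, mul_zero]

lemma av_cas_cas (j k : ℤ) : av (fun x => cas (2 * j * x) * cas (2 * k * x)) = if j = k then 1 else 0 := by
  have : (fun x => cas (2 * j * x) * cas (2 * k * x)) =
      fun x => cos (2 * ((j - k : ℤ):ℝ) * x) + sin (2 * ((j + k : ℤ):ℝ) * x) := by
    ext x
    push_cast
    rw [show 2 * ((j:ℝ) - k) * x = 2 * j * x - 2 * k * x by ring, show 2 * ((j:ℝ) + k) * x = 2 * j * x + 2 * k * x by ring,
      cos_sub, sin_add]
    unfold cas; ring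
  rw [this, av_add (by fun_prop) (by fun_prop), av_cos, av_sin, add_zero]
  simp [sub_eq_zero]

lemma cas_periodic (k : ℤ) (x : ℝ) : cas (2 * k * (x + π)) = cas (2 * k * x) := by
  unfold cas
  have : 2 * (k:ℝ) * (x + π) = 2 * k * x + k * (2 * π) := by ring
  rw [this, cos_add_int_mul_two_pi, sin_add_int_mul_two_pi]

theorem seq_to_fun (a b lam : ℝ) (y : ℤ → ℝ) (hys : Summable fun k => y k ^ 2)
    (hy : ∀ k : ℤ, 4 * (k:ℝ) ^ 2 * y k +
      (a / 2 * (y (k + 1) + y (k - 1)) + b / 2 * (y (k + 2) + y (k - 2))) = lam * y k) :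
    ∃ f, IsPerEF (pot a b) lam f ∧ ∀ k, Hc f k = y k := by
  obtain ⟨B0, hB0⟩ : ∃ B, ∀ k : ℤ, (1 + (k:ℝ)^2)^0 * |y k| ≤ B := by
    refine ⟨∑' k, y k ^ 2 + 1, fun k => ?_⟩
    have := hys.le_tsum k (fun j _ => sq_nonneg _)
    rw [pow_zero, one_mul]
    nlinarith [sq_abs (y k), sq_nonneg (|y k| - 1)]
  obtain ⟨B1, hB1⟩ := decay_step a b lam y hy 0 B0 hB0
  obtain ⟨B, hB⟩ := decay_step a b lam y hy 1 B1 hB1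
  norm_num at hB
  set u : ℤ → ℝ := fun k => 8 * B * (1 / (1 + (k:ℝ)^2)) with hu
  have hus : Summable u := summable_weight.mul_left _
  have hb : ∀ k : ℤ, (1 + (k:ℝ)^2) * |y k| ≤ B * (1 / (1 + (k:ℝ)^2)) := by
    intro k
    rw [mul_one_div, le_div_iff₀ (by positivity)]
    nlinarith [hB k]
  have hB0' : 0 ≤ B := by have := hB 0; norm_num at this; exact (abs_nonneg _).trans this
  -- bounds
  have b0 : ∀ k : ℤ, ∀ c : ℝ, |c| ≤ 2 → ‖y k * c‖ ≤ u k := by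
    intro k c hc
    rw [Real.norm_eq_abs, abs_mul]
    have := hb k
    have h3 : 0 ≤ (k:ℝ)^2 * |y k| := by positivity
    have : |y k| * |c| ≤ |y k| * 2 := by gcongr
    have : 0 ≤ |y k| := abs_nonneg _
    simp only [hu]
    nlinarith [hb k]
  have b2 : ∀ k : ℤ, ∀ c : ℝ, |c| ≤ 2 → ‖y k * (4 * (k:ℝ)^2 * c)‖ ≤ u k := by
    intro k c hc
    rw [Real.norm_eq_abs, abs_mul, abs_mul, abs_of_nonneg (show 0 ≤ 4 * (k:ℝ)^2 by positivity)]
    have := hb k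
    have : |y k| * (4 * (k:ℝ)^2 * |c|) ≤ |y k| * (4 * (k:ℝ)^2 * 2) := by gcongr
    have : 0 ≤ |y k| := abs_nonneg _
    simp only [hu]
    nlinarith [hb k]
  have b1 : ∀ k : ℤ, ∀ c : ℝ, |c| ≤ 2 → ‖y k * (2 * (k:ℝ) * c)‖ ≤ u k := by
    intro k c hc
    rw [Real.norm_eq_abs, abs_mul, abs_mul, abs_mul, abs_two]
    have h5 : |(k:ℝ)| ≤ 1 + (k:ℝ)^2 := by nlinarith [sq_abs (k:ℝ), sq_nonneg (|(k:ℝ)| - 1), abs_nonneg (k:ℝ)]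
    have : |y k| * (2 * |(k:ℝ)| * |c|) ≤ |y k| * (2 * (1 + (k:ℝ)^2) * 2) := by gcongr
    have : 0 ≤ |y k| := abs_nonneg _
    have : 0 ≤ B * (1 / (1 + (k:ℝ)^2)) := by positivity
    simp only [hu]
    nlinarith [hb k]
  have hcb : ∀ x, |cas x| ≤ 2 := abs_cas_le
  have hcb' : ∀ x, |cos x - sin x| ≤ 2 := by
    intro x
    calc _ ≤ |cos x| + |sin x| := abs_sub _ _
      _ ≤ 2 := by linarith [abs_cos_le_one x, abs_sin_le_one x]
  have hd1 : ∀ (k : ℤ) x, HasDerivAt (fun x => y k * cas (2 * k * x)) (y k * (2 * (k:ℝ) * (cos (2 * k * x) - sin (2 * k * x)))) x := by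
    intro k x
    have h0 : HasDerivAt (fun x : ℝ => 2 * (k:ℝ) * x) (2 * k) x := by
      simpa using (hasDerivAt_id x).const_mul (2 * (k:ℝ))
    have := ((h0.cos.add h0.sin).const_mul (y k))
    exact this.congr_deriv (by ring)
  have hd2 : ∀ (k : ℤ) x, HasDerivAt (fun x => y k * (2 * (k:ℝ) * (cos (2 * k * x) - sin (2 * k * x)))) (y k * (4 * (k:ℝ)^2 * (- cas (2 * k * x)))) x := by
    intro k x
    have h0 : HasDerivAt (fun x : ℝ => 2 * (k:ℝ) * x) (2 * k) x := by
      simpa using (hasDerivAt_id x).const_mul (2 * (k:ℝ))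
    have := (((h0.cos.sub h0.sin).const_mul (2 * (k:ℝ))).const_mul (y k))
    exact this.congr_deriv (by unfold cas; ring)
  have s0 : ∀ x, Summable (fun k : ℤ => y k * cas (2 * k * x)) := fun x =>
    Summable.of_norm_bounded hus (fun k => b0 k _ (hcb _))
  have s1 : ∀ x, Summable (fun k : ℤ => y k * (2 * (k:ℝ) * (cos (2 * k * x) - sin (2 * k * x)))) := fun x =>
    Summable.of_norm_bounded hus (fun k => b1 k _ (hcb' _))
  have s2 : ∀ x, Summable (fun k : ℤ => y k * (4 * (k:ℝ)^2 * (- cas (2 * k * x)))) := fun x =>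
    Summable.of_norm_bounded hus (fun k => b2 k _ (by rw [abs_neg]; exact hcb _))
  set f : ℝ → ℝ := fun x => ∑' k : ℤ, y k * cas (2 * k * x) with hf
  have D1 : ∀ x, HasDerivAt f (∑' k : ℤ, y k * (2 * (k:ℝ) * (cos (2 * k * x) - sin (2 * k * x)))) x := fun x =>
    hasDerivAt_tsum hus hd1 (fun k x => b1 k _ (hcb' _)) (s0 0) x
  have D2 : ∀ x, HasDerivAt (fun x => ∑' k : ℤ, y k * (2 * (k:ℝ) * (cos (2 * k * x) - sin (2 * k * x))))
      (∑' k : ℤ, y k * (4 * (k:ℝ)^2 * (- cas (2 * k * x)))) x := fun x =>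
    hasDerivAt_tsum hus hd2 (fun k x => b2 k _ (by rw [abs_neg]; exact hcb _)) (s1 0) x
  have e1 : deriv f = fun x => ∑' k : ℤ, y k * (2 * (k:ℝ) * (cos (2 * k * x) - sin (2 * k * x))) := funext fun x => (D1 x).deriv
  have e2 : deriv (deriv f) = fun x => ∑' k : ℤ, y k * (4 * (k:ℝ)^2 * (- cas (2 * k * x))) := by
    rw [e1]; exact funext fun x => (D2 x).deriv
  have hc2 : Continuous (deriv (deriv f)) := by
    rw [e2]
    have := continuous_cas
    exact continuous_tsum (fun k => by fun_prop) hus (fun k x => b2 k _ (by rw [abs_neg]; exact hcb _))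
  have hfc : ContDiff ℝ 2 f := by
    rw [show (2 : WithTop ℕ∞) = 1 + 1 by norm_num, contDiff_succ_iff_deriv]
    refine ⟨fun x => (D1 x).differentiableAt, by simp, ?_⟩
    rw [contDiff_one_iff_deriv]
    refine ⟨?_, hc2⟩
    rw [e1]; exact fun x => (D2 x).differentiableAt
  refine ⟨f, ⟨hfc, ?_, ?_⟩, ?_⟩
  · intro x
    have hS : ∀ n : ℤ, HasSum (fun k : ℤ => y k * cas (2 * (k + n) * x)) (∑' k : ℤ, y (k - n) * cas (2 * k * x)) ∧ 
        Summable (fun k : ℤ => y (k - n) * cas (2 * k * x)) := by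
      intro n
      have t1 : Summable (fun k : ℤ => y k * cas (2 * (k + n) * x)) :=
        Summable.of_norm_bounded hus (fun k => b0 k _ (hcb _))
      have t2 : HasSum (fun k : ℤ => y (k - n) * cas (2 * k * x)) (∑' k : ℤ, y k * cas (2 * (k + n) * x)) := by
        have := (Equiv.subRight n).hasSum_iff.mpr t1.hasSum
        refine hs_congr this fun k => ?_
        simp [Function.comp_def]
      rw [t2.tsum_eq]
      exact ⟨t1.hasSum, t2.summable⟩
    have p1 := (hS 1); have p2 := (hS (-1)); have p3 := (hS 2); have p4 := (hS (-2))
    have hvf : HasSum (fun k : ℤ => pot a b x * (y k * cas (2 * k * x))) (pot a b x * f x) := (s0 x).hasSum.mul_left _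
    have hvf2 := ((p1.1.add p2.1).mul_left (a / 2)).add ((p3.1.add p4.1).mul_left (b / 2))
    have hvf3 := hs_congr hvf2 (g := fun k : ℤ => pot a b x * (y k * cas (2 * k * x))) (by
      intro k
      unfold pot
      have q1 := cos_mul_cas (2 * x) (2 * k * x)
      have q2 := cos_mul_cas (4 * x) (2 * k * x)
      have : (a * cos (2 * x) + b * cos (4 * x)) * (y k * cas (2 * k * x)) = a * y k * (cos (2 * x) * cas (2 * k * x))
        + b * y k * (cos (4 * x) * cas (2 * k * x)) := by ring
      rw [this, q1, q2]
      push_cast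
      rw [show 2 * ((k:ℝ) + 1) * x = 2 * k * x + 2 * x by ring, show 2 * ((k:ℝ) + -1) * x = 2 * k * x - 2 * x by ring,
        show 2 * ((k:ℝ) + 2) * x = 2 * k * x + 4 * x by ring, show 2 * ((k:ℝ) + -2) * x = 2 * k * x - 4 * x by ring]
      ring)
    rw [hvf.unique hvf3]
    have hvf4 := ((p1.2.hasSum.add p2.2.hasSum).mul_left (a / 2)).add ((p3.2.hasSum.add p4.2.hasSum).mul_left (b / 2))
    rw [e2]
    have h6 := ((s2 x).hasSum.neg).add hvf4
    have h7 := hs_congr h6 (g := fun k => lam * (y k * cas (2 * k * x))) (by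
      intro k
      rw [← mul_assoc lam, ← hy k]
      rw [sub_neg_eq_add, sub_neg_eq_add]
      ring)
    exact h7.unique ((s0 x).hasSum.mul_left lam)
  · intro x
    simp only [hf, cas_periodic]
  · intro k
    have hcc := continuous_cas
    have : HasSum (fun j : ℤ => ∫ x in (0:ℝ)..π, y j * cas (2 * j * x) * cas (2 * k * x)) (∫ x in (0:ℝ)..π, f x * cas (2 * k * x)) := by
      have hF : ∀ j : ℤ, ∀ᵐ x, x ∈ Set.uIoc 0 π → ‖y j * cas (2 * j * x) * cas (2 * k * x)‖ ≤ 2 * u j := by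
        intro j
        refine Filter.Eventually.of_forall fun x _ => ?_
        rw [norm_mul, mul_comm]
        have := b0 j _ (hcb (2 * j * x))
        have h2 := hcb (2 * k * x)
        rw [← Real.norm_eq_abs] at h2
        gcongr
      refine intervalIntegral.hasSum_integral_of_dominated_convergence (fun j _ => 2 * u j)
        (fun j => (by fun_prop : Continuous _).aestronglyMeasurable) hF ?_ ?_ ?_
      · exact Filter.Eventually.of_forall fun x _ => hus.mul_left 2
      · exact intervalIntegrable_const
      · exact Filter.Eventually.of_forall fun x _ => (s0 x).hasSum.mul_right _
    have h2 := this.mul_left (1 / π)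
    have h3 := hs_congr h2 (g := fun j => if j = k then y k else 0) (by
      intro j
      have : (1 / π) * ∫ x in (0:ℝ)..π, y j * cas (2 * j * x) * cas (2 * k * x) = av (fun x => y j * (cas (2 * j * x) * cas (2 * k * x))) := by
        unfold av; simp only [mul_assoc]
      rw [this, av_smul, av_cas_cas]
      split_ifs with h
      · rw [h, mul_one]
      · rw [mul_zero])
    exact h3.unique (hasSum_ite_eq k (y k))

theorem low_eigenfun (a b : ℝ) (m : ℕ) (x : ℤ → ℝ) (hx : ∃ k, x k ≠ 0) (hsupp : ∀ k : ℤ, (m:ℤ) < |k| → x k = 0)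
    (Lam : ℝ) (hL : 4 * (m:ℝ) ^ 2 + (|a| + |b|) < Lam) :
    ∃ lam < Lam, ∃ f, IsPerEF (pot a b) lam f ∧ ∑ k ∈ Finset.Icc (-(m:ℤ)) m, Hc f k * x k ≠ 0 := by
  have hz : ∀ k ∉ Finset.Icc (-(m:ℤ)) m, x k = 0 := by
    intro k hk
    apply hsupp
    rw [Finset.mem_Icc] at hk
    by_contra! h
    exact hk (abs_le.mp h)
  have hs : Summable (fun k => x k ^ 2) := by
    apply summable_of_ne_finset_zero (s := Finset.Icc (-(m:ℤ)) m)
    intro k hk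
    rw [hz k hk]; norm_num
  set X : l2 := ⟨x, l2_mem hs⟩ with hX
  have hX0 : X ≠ 0 := by
    obtain ⟨k, hk⟩ := hx
    intro h
    apply hk
    exact congrArg (fun z : l2 => z k) h
  obtain ⟨lam, hlam, y, hy, hin⟩ := low_eigenseq a b m X hX0 hsupp Lam hL
  obtain ⟨f, hf, hfy⟩ := seq_to_fun a b lam y (l2_summable y) hy
  refine ⟨lam, hlam, f, hf, ?_⟩
  have h1 := l2_inner y X
  have h2 : HasSum (fun k => y k * X k) (∑ k ∈ Finset.Icc (-(m:ℤ)) m, y k * X k) := by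
    apply hasSum_sum_of_ne_finset_zero
    intro k hk
    change y k * x k = 0
    rw [hz k hk, mul_zero]
  rw [h1.unique h2] at hin
  simpa only [hfy] using hin
end

section
lemma av_sum {ι : Type*} (s : Finset ι) (F : ι → ℝ → ℝ) (h : ∀ i, Continuous (F i)) :
    av (fun x => ∑ i ∈ s, F i x) = ∑ i ∈ s, av (F i) := by
  classical
  induction s using Finset.induction_on with
  | empty => simp [av_const]
  | insert i s hi ih =>
    simp only [Finset.sum_insert hi]
    rw [av_add (h i) (by fun_prop), ih]

lemma Hc_sum {ι : Type*} (s : Finset ι) (F : ι → ℝ → ℝ) (h : ∀ i, Continuous (F i)) (k : ℤ) :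
    Hc (fun x => ∑ i ∈ s, F i x) k = ∑ i ∈ s, Hc (F i) k := by
  unfold Hc
  simp only [Finset.sum_mul]
  have := continuous_cas
  exact av_sum s (fun i x => F i x * cas (2 * k * x)) (fun i => by fun_prop)

lemma contDiff_cas (k : ℤ) : ContDiff ℝ 2 (fun x => cas (2 * k * x)) := by
  unfold cas; fun_prop

lemma dd_cos (c : ℝ) : deriv (deriv (fun x => cos (c * x))) = fun x => - c^2 * cos (c * x) := by
  have h1 : deriv (fun x => cos (c * x)) = fun x => - c * sin (c * x) := by
    ext x
    have h0 : HasDerivAt (fun x : ℝ => c * x) c x := by simpa using (hasDerivAt_id x).const_mul c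
    rw [h0.cos.deriv]; ring
  rw [h1]
  ext x
  have h0 : HasDerivAt (fun x : ℝ => c * x) c x := by simpa using (hasDerivAt_id x).const_mul c
  rw [(h0.sin.const_mul (-c)).deriv]; ring

lemma dd_sin (c : ℝ) : deriv (deriv (fun x => sin (c * x))) = fun x => - c^2 * sin (c * x) := by
  have h1 : deriv (fun x => sin (c * x)) = fun x => c * cos (c * x) := by
    ext x
    have h0 : HasDerivAt (fun x : ℝ => c * x) c x := by simpa using (hasDerivAt_id x).const_mul c
    rw [h0.sin.deriv]; ring
  rw [h1]
  ext x
  have h0 : HasDerivAt (fun x : ℝ => c * x) c x := by simpa using (hasDerivAt_id x).const_mul c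
  rw [(h0.cos.const_mul (c)).deriv]; ring

lemma dd_cas (k : ℤ) : deriv (deriv (fun x => cas (2 * k * x))) = fun x => - (4 * (k:ℝ)^2) * cas (2 * k * x) := by
  have h : (fun x => cas (2 * k * x)) = (fun x => cos (2 * k * x)) + (fun x => sin (2 * k * x)) := rfl
  have c1 : ContDiff ℝ 2 (fun x => cos (2 * (k:ℝ) * x)) := by fun_prop
  have c2 : ContDiff ℝ 2 (fun x => sin (2 * (k:ℝ) * x)) := by fun_prop
  have e1 : deriv ((fun x => cos (2 * (k:ℝ) * x)) + (fun x => sin (2 * k * x))) =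
     deriv (fun x => cos (2 * (k:ℝ) * x)) + deriv (fun x => sin (2 * k * x)) := by
    ext x
    exact deriv_add (c1.differentiable (by norm_num) x) (c2.differentiable (by norm_num) x)
  rw [h, e1]
  ext x
  rw [deriv_add ((contDiff_deriv c1).differentiable (by norm_num) x) ((contDiff_deriv c2).differentiable (by norm_num) x),
    dd_cos, dd_sin]
  unfold cas; ring

lemma Hc_dd {f : ℝ → ℝ} (hf : ContDiff ℝ 2 f) (hp : Function.Periodic f π) (k : ℤ) :
    Hc (deriv (deriv f)) k = - (4 * (k:ℝ)^2) * Hc f k := by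
  unfold Hc
  rw [ibp2 hf (contDiff_cas k) hp (fun x => cas_periodic k x), dd_cas, ← av_smul]
  congr 1; ext x; ring

lemma Hc_ef {v : ℝ → ℝ} {lam : ℝ} {f : ℝ → ℝ} (hv : Continuous v) (hf : IsPerEF v lam f) (k : ℤ) :
    4 * (k:ℝ)^2 * Hc f k + Hc (fun x => v x * f x) k = lam * Hc f k := by
  obtain ⟨h1, h2, h3⟩ := hf
  have c1 := cont_dd h1
  have c2 := h1.continuous
  have e := Hc_dd h1 h3 k
  rw [← Hc_smul lam]
  have : (fun x => lam * f x) = fun x => v x * f x - deriv (deriv f) x := by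
    ext x; rw [← h2 x]; ring
  rw [this, Hc_sub (by fun_prop) (by fun_prop), e]
  ring

lemma ef_orth {v : ℝ → ℝ} {lam mu : ℝ} {f g : ℝ → ℝ} (hv : Continuous v) (hf : IsPerEF v lam f)
    (hg : IsPerEF v mu g) (hne : lam ≠ mu) : av (fun x => f x * g x) = 0 := by
  have h := Lop_symm hv hf.1 hg.1 hf.2.2 hg.2.2
  unfold Lop at h
  simp only [hf.2.1, hg.2.1] at h
  have e1 : (fun x => lam * f x * g x) = fun x => lam * (f x * g x) := by ext x; ring
  have e2 : (fun x => f x * (mu * g x)) = fun x => mu * (f x * g x) := by ext x; ring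
  rw [e1, e2, av_smul, av_smul] at h
  have : (lam - mu) * av (fun x => f x * g x) = 0 := by linarith
  rcases mul_eq_zero.mp this with h | h
  · exact absurd (sub_eq_zero.mp h) hne
  · exact h

lemma av_pot_sq (a b : ℝ) {f : ℝ → ℝ} (hf : Continuous f) :
    -(|a| + |b|) * av (fun x => f x ^ 2) ≤ av (fun x => pot a b x * f x * f x) := by
  rw [← av_smul]
  apply av_mono (by fun_prop) (by fun_prop)
  intro x
  have := abs_pot_le a b x
  nlinarith [neg_abs_le (pot a b x), sq_nonneg (f x)]

lemma upper_core {ι : Type*} [Fintype ι] (a b : ℝ) (lam : ι → ℝ) (hinj : Function.Injective lam)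
    (g : ι → ℝ → ℝ) (hg : ∀ i, IsPerEF (pot a b) (lam i) (g i)) (N : ℕ)
    (hlt : ∀ i, lam i < 4 * ((N:ℝ) + 1) ^ 2 - (|a| + |b|))
    (h0 : ∀ k ∈ Finset.Icc (-(N:ℤ)) N, Hc (fun x => ∑ i, g i x) k = 0) : ∀ i, g i = 0 := by
  have hgc : ∀ i, Continuous (g i) := fun i => (hg i).1.continuous
  set f : ℝ → ℝ := fun x => ∑ i, g i x with hf
  have hfc : Continuous f := by fun_prop
  set h : ℝ → ℝ := fun x => ∑ i, lam i * g i x with hh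
  have hhc : Continuous h := by fun_prop
  have e1 : ∀ k : ℤ, Hc h k = 4 * (k:ℝ)^2 * Hc f k + Hc (fun x => pot a b x * f x) k := by
    intro k
    have t1 := Hc_sum Finset.univ (fun i x => lam i * g i x) (fun i => by fun_prop) k
    have t2 := Hc_sum Finset.univ g hgc k
    have t3 := Hc_sum Finset.univ (fun i x => pot a b x * g i x) (fun i => by fun_prop) k
    simp only [hf, hh, Finset.mul_sum]
    rw [t1, t2, t3, Finset.mul_sum, ← Finset.sum_add_distrib]
    apply Finset.sum_congr rfl
    intro i _
    rw [Hc_smul, Hc_ef (continuous_pot a b) (hg i)]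
  have p1 := parseval hfc hhc
  have p2 := parseval_sq hfc
  have p3 := parseval hfc (show Continuous (fun x => pot a b x * f x) by fun_prop)
  have hle : 4 * ((N:ℝ) + 1)^2 * av (fun x => f x ^ 2) + av (fun x => f x * (pot a b x * f x)) ≤ av (fun x => f x * h x) := by
    refine hasSum_le ?_ ((p2.mul_left (4 * ((N:ℝ) + 1)^2)).add p3) p1
    intro k
    rw [e1]
    by_cases hk : k ∈ Finset.Icc (-(N:ℤ)) N
    · rw [h0 k hk]; simp
    · have hk2 : ((N:ℝ) + 1) ≤ |(k:ℝ)| := by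
        have : (N:ℤ) + 1 ≤ |k| := by
          by_contra! h2
          apply hk
          rw [Finset.mem_Icc]
          have := abs_lt.mp h2
          omega
        exact_mod_cast this
      have : ((N:ℝ) + 1)^2 ≤ (k:ℝ)^2 := by
        rw [← sq_abs (k:ℝ)]; gcongr
      nlinarith [mul_nonneg (sub_nonneg.mpr this) (sq_nonneg (Hc f k))]
  have hort : ∀ c : ι → ℝ, av (fun x => f x * ∑ i, c i * g i x) = ∑ i, c i * av (fun x => g i x ^ 2) := by
    intro c
    have e0 : (fun x => f x * ∑ i, c i * g i x) = fun x => ∑ i, ∑ j, g i x * (c j * g j x) := by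
      ext x
      simp only [hf, Finset.sum_mul, ← Finset.mul_sum]
    rw [e0, av_sum _ (fun i x => ∑ j, g i x * (c j * g j x)) (fun i => by fun_prop)]
    apply Finset.sum_congr rfl
    intro i _
    rw [av_sum _ (fun j x => g i x * (c j * g j x)) (fun i => by fun_prop)]
    rw [Finset.sum_eq_single i]
    · rw [← av_smul]; congr 1; ext x; ring
    · intro j _ hj
      have := ef_orth (continuous_pot a b) (hg i) (hg j) (fun e => hj (hinj e).symm)
      have e : (fun x => g i x * (c j * g j x)) = fun x => c j * (g i x * g j x) := by ext x; ring
      rw [e, av_smul, this, mul_zero]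
    · simp
  have hff : av (fun x => f x ^ 2) = ∑ i, av (fun x => g i x ^ 2) := by
    have := hort (fun _ => 1)
    simp only [one_mul] at this
    rw [← this]; congr 1; ext x; simp only [hf]; ring
  have hfh : av (fun x => f x * h x) = ∑ i, lam i * av (fun x => g i x ^ 2) := hort lam
  have hpot := av_pot_sq a b hfc
  have e4 : av (fun x => f x * (pot a b x * f x)) = av (fun x => pot a b x * f x * f x) := by
    congr 1; ext x; ring
  have hn : ∀ i, 0 ≤ av (fun x => g i x ^ 2) := fun i => av_nonneg (by have := hgc i; fun_prop) (fun x => sq_nonneg _)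
  have hfin : ∑ i, (4 * ((N:ℝ) + 1) ^ 2 - (|a| + |b|) - lam i) * av (fun x => g i x ^ 2) ≤ 0 := by
    simp only [sub_mul _ (lam _), Finset.sum_sub_distrib, ← Finset.mul_sum, ← hff, ← hfh]
    linarith
  have hz : ∀ i ∈ Finset.univ, (4 * ((N:ℝ) + 1) ^ 2 - (|a| + |b|) - lam i) * av (fun x => g i x ^ 2) = 0 := by
    have hnn : ∀ i ∈ Finset.univ, 0 ≤ (4 * ((N:ℝ) + 1) ^ 2 - (|a| + |b|) - lam i) * av (fun x => g i x ^ 2) :=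
      fun i _ => mul_nonneg (by linarith [hlt i]) (hn i)
    exact (Finset.sum_eq_zero_iff_of_nonneg hnn).mp (le_antisymm hfin (Finset.sum_nonneg hnn))
  intro i
  apply eq_zero_of_av_sq (hgc i) (hg i).2.2
  rcases mul_eq_zero.mp (hz i (Finset.mem_univ _)) with h | h
  · linarith [hlt i]
  · exact h

/-- The eigenspace. -/
def EFs (a b lam : ℝ) : Submodule ℝ (ℝ → ℝ) where
  carrier := {f | IsPerEF (pot a b) lam f}
  add_mem' := by
    rintro f g ⟨h1, h2, h3⟩ ⟨k1, k2, k3⟩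
    refine ⟨h1.add k1, ?_, ?_⟩
    · intro x
      have e1 : deriv (f + g) = deriv f + deriv g := by
        ext x
        exact deriv_add (h1.differentiable (by norm_num) x) (k1.differentiable (by norm_num) x)
      rw [e1, deriv_add ((contDiff_deriv h1).differentiable (by norm_num) x) ((contDiff_deriv k1).differentiable (by norm_num) x)]
      simp only [Pi.add_apply]
      linarith [h2 x, k2 x]
    · intro x; simp [h3 x, k3 x]
  zero_mem' := by
    refine ⟨contDiff_const, ?_, ?_⟩
    · intro x
      have : deriv (0 : ℝ → ℝ) = 0 := by ext x; exact deriv_const x (0:ℝ)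
      rw [this, this]; simp
    · intro x; simp
  smul_mem' := by
    rintro c f ⟨h1, h2, h3⟩
    refine ⟨contDiff_const.smul h1, ?_, ?_⟩
    · intro x
      have e1 : deriv (c • f) = c • deriv f := by
        ext x
        exact deriv_const_smul c (h1.differentiable (by norm_num) x)
      rw [e1, deriv_const_smul c ((contDiff_deriv h1).differentiable (by norm_num) x)]
      simp only [Pi.smul_apply, smul_eq_mul]
      linear_combination c * h2 x
    · intro x; simp [h3 x]

lemma mem_EFs {a b lam : ℝ} {f : ℝ → ℝ} : f ∈ EFs a b lam ↔ IsPerEF (pot a b) lam f := Iff.rfl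

lemma perMult_eq (a b lam : ℝ) : perMult (pot a b) lam = Module.finrank ℝ (EFs a b lam) := by
  unfold perMult
  have : {f : ℝ → ℝ | IsPerEF (pot a b) lam f} = (EFs a b lam : Set (ℝ → ℝ)) := rfl
  rw [this, Submodule.span_eq]

/-- Coefficient map. -/
def coefMap (a b : ℝ) {ι : Type*} [Fintype ι] (lam : ι → ℝ) (N : ℕ) :
    (∀ i, EFs a b (lam i)) →ₗ[ℝ] (Finset.Icc (-(N:ℤ)) N → ℝ) where
  toFun g k := ∑ i, Hc (g i : ℝ → ℝ) k
  map_add' g h := by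
    ext k
    simp only [Pi.add_apply, ← Finset.sum_add_distrib]
    apply Finset.sum_congr rfl
    intro i _
    exact Hc_add (g i).2.1.continuous (h i).2.1.continuous k
  map_smul' c g := by
    ext k
    simp only [Pi.smul_apply, smul_eq_mul, Finset.mul_sum, RingHom.id_apply]
    apply Finset.sum_congr rfl
    intro i _
    exact Hc_smul c _ k

lemma coefMap_inj (a b : ℝ) {ι : Type*} [Fintype ι] (lam : ι → ℝ) (hinj : Function.Injective lam) (N : ℕ)
    (hlt : ∀ i, lam i < 4 * ((N:ℝ) + 1) ^ 2 - (|a| + |b|)) : Function.Injective (coefMap a b lam N) := by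
  rw [injective_iff_map_eq_zero]
  intro g hg
  have := upper_core a b lam hinj (fun i => g i) (fun i => (g i).2) N hlt (by
    intro k hk
    rw [Hc_sum _ _ (fun i => (g i).2.1.continuous)]
    exact congrFun hg ⟨k, hk⟩)
  ext i x
  rw [this i]; rfl

lemma upper_finite (a b lam : ℝ) : Module.Finite ℝ (EFs a b lam) := by
  obtain ⟨N, hN⟩ : ∃ N : ℕ, lam < 4 * ((N:ℝ) + 1) ^ 2 - (|a| + |b|) := by
    obtain ⟨N, hN⟩ := exists_nat_gt (lam + (|a| + |b|))
    refine ⟨N, ?_⟩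
    have : (0:ℝ) ≤ N := Nat.cast_nonneg N
    nlinarith
  have h := coefMap_inj a b (fun _ : Unit => lam) (fun _ _ _ => rfl) N (fun _ => hN)
  have h1 : Module.Finite ℝ (∀ _ : Unit, EFs a b lam) := Module.Finite.of_injective _ h
  exact Module.Finite.of_surjective (LinearMap.proj () : (∀ _ : Unit, EFs a b lam) →ₗ[ℝ] EFs a b lam)
    (fun x => ⟨fun _ => x, rfl⟩)

lemma upper_dim (a b : ℝ) (S : Finset ℝ) (N : ℕ)
    (hlt : ∀ lam ∈ S, lam < 4 * ((N:ℝ) + 1) ^ 2 - (|a| + |b|)) :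
    ∑ lam ∈ S, Module.finrank ℝ (EFs a b lam) ≤ 2 * N + 1 := by
  have h := coefMap_inj a b (fun i : S => (i : ℝ)) Subtype.coe_injective N (fun i => hlt i i.2)
  haveI := fun i : S => upper_finite a b i
  have := LinearMap.finrank_le_finrank_of_injective h
  rw [Module.finrank_pi_fintype, Module.finrank_fintype_fun_eq_card, Fintype.card_coe, Int.card_Icc] at this
  rw [← Finset.sum_coe_sort]
  omega

lemma fiber_finite {a b : ℝ} {lamP : ℕ → ℝ} (hP : EnumPer (pot a b) lamP) (lam : ℝ) :
    Finite {n : ℕ // lamP n = lam} := by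
  by_cases h : ∃ n, lamP n = lam
  · obtain ⟨n, hn⟩ := h
    obtain ⟨f, hf0, hf⟩ := hP.2.1 n
    apply Nat.finite_of_card_ne_zero
    rw [hP.2.2 lam, perMult_eq]
    haveI := upper_finite a b lam
    rw [hn] at hf
    have : Nontrivial (EFs a b lam) := ⟨⟨⟨f, hf⟩, 0, fun e => hf0 (congrArg Subtype.val e)⟩⟩
    exact Module.finrank_pos.ne'
  · push Not at h
    haveI : IsEmpty {n : ℕ // lamP n = lam} := ⟨fun x => h x.1 x.2⟩
    infer_instance

lemma exists_index {a b : ℝ} {lamP : ℕ → ℝ} (hP : EnumPer (pot a b) lamP) {lam : ℝ} {f : ℝ → ℝ}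
    (hf : IsPerEF (pot a b) lam f) (hf0 : f ≠ 0) : ∃ n, lamP n = lam := by
  by_contra! h
  haveI : IsEmpty {n : ℕ // lamP n = lam} := ⟨fun x => h x.1 x.2⟩
  have h1 := hP.2.2 lam
  rw [Nat.card_of_isEmpty, perMult_eq] at h1
  haveI := upper_finite a b lam
  have : Nontrivial (EFs a b lam) := ⟨⟨⟨f, hf⟩, 0, fun e => hf0 (congrArg Subtype.val e)⟩⟩
  exact absurd h1.symm Module.finrank_pos.ne'

theorem lamP_ge {a b : ℝ} {lamP : ℕ → ℝ} (hP : EnumPer (pot a b) lamP) (m : ℕ) (hm : 1 ≤ m) :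
    4 * (m:ℝ)^2 - (|a| + |b|) ≤ lamP (2 * m - 1) := by
  by_contra! hlt
  set S := (Finset.range (2 * m)).image lamP with hS
  obtain ⟨N, rfl⟩ : ∃ N, m = N + 1 := ⟨m - 1, by omega⟩
  have h1 := upper_dim a b S N (by
    intro lam hl
    rw [hS, Finset.mem_image] at hl
    obtain ⟨n, hn, rfl⟩ := hl
    rw [Finset.mem_range] at hn
    push_cast at hlt
    exact (hP.1 (by omega)).trans_lt hlt)
  have h2 := Finset.card_eq_sum_card_image lamP (Finset.range (2 * (N + 1)))
  rw [Finset.card_range] at h2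
  have h3 : ∑ lam ∈ S, (Finset.filter (fun n => lamP n = lam) (Finset.range (2 * (N+1)))).card ≤
      ∑ lam ∈ S, Module.finrank ℝ (EFs a b lam) := by
    apply Finset.sum_le_sum
    intro lam _
    rw [← perMult_eq, ← hP.2.2]
    haveI := fiber_finite hP lam
    have := Nat.card_le_card_of_injective (fun n : Finset.filter (fun n => lamP n = lam) (Finset.range (2 * (N+1))) =>
      (⟨n.1, (Finset.mem_filter.mp n.2).2⟩ : {n : ℕ // lamP n = lam})) (by
        intro x y h; exact Subtype.ext (congrArg (fun z => z.1) h))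
    rw [← Fintype.card_coe, ← Nat.card_eq_fintype_card]
    exact this
  rw [← hS] at h2
  omega

theorem lamP_le {a b : ℝ} {lamP : ℕ → ℝ} (hP : EnumPer (pot a b) lamP) (m : ℕ) :
    lamP (2 * m) ≤ 4 * (m:ℝ)^2 + (|a| + |b|) := by
  by_contra! hlt
  set S := ((Finset.range (2 * m)).image lamP) with hS
  have hdim : ∑ lam ∈ S.filter (· < lamP (2 * m)), Module.finrank ℝ (EFs a b lam) ≤ 2 * m := by
    have h2 := Finset.card_eq_sum_card_image lamP (Finset.range (2 * m))
    rw [Finset.card_range] at h2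
    rw [show (∑ lam ∈ S.filter (· < lamP (2 * m)), Module.finrank ℝ (EFs a b lam) ≤ 2 * m) =
      (∑ lam ∈ S.filter (· < lamP (2 * m)), Module.finrank ℝ (EFs a b lam) ≤ ∑ lam ∈ S, (Finset.filter (fun n => lamP n = lam) (Finset.range (2 * m))).card) by rw [← h2]]
    calc _ ≤ ∑ lam ∈ S.filter (· < lamP (2 * m)), (Finset.filter (fun n => lamP n = lam) (Finset.range (2 * m))).card := by
          apply Finset.sum_le_sum
          intro lam hlam
          have hl := (Finset.mem_filter.mp hlam).2
          rw [← perMult_eq, ← hP.2.2]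
          have := Nat.card_le_card_of_injective (fun n : {n : ℕ // lamP n = lam} => 
            (⟨n.1, Finset.mem_filter.mpr ⟨by
              rw [Finset.mem_range]
              by_contra! hge
              have := hP.1 hge
              rw [n.2] at this
              linarith, n.2⟩⟩ : Finset.filter (fun n => lamP n = lam) (Finset.range (2 * m)))) (by
              intro x y h; exact Subtype.ext (congrArg (fun z => z.1) h))
          rw [← Fintype.card_coe, ← Nat.card_eq_fintype_card]
          exact this
      _ ≤ _ := Finset.sum_le_sum_of_subset (Finset.filter_subset _ _)
  set T := S.filter (· < lamP (2 * m)) with hT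
  haveI := fun i : T => upper_finite a b i
  let Ψ : (Finset.Icc (-(m:ℤ)) m → ℝ) →ₗ[ℝ] (∀ i : T, Module.Dual ℝ (EFs a b i)) :=
    { toFun := fun x i =>
        { toFun := fun f => ∑ k : Finset.Icc (-(m:ℤ)) m, Hc (f : ℝ → ℝ) (k : ℤ) * x k
          map_add' := by
            intro f g
            rw [← Finset.sum_add_distrib]
            apply Finset.sum_congr rfl
            intro k _
            have := Hc_add f.2.1.continuous g.2.1.continuous k
            rw [← add_mul, ← this]; rfl
          map_smul' := by
            intro c f
            rw [RingHom.id_apply, smul_eq_mul, Finset.mul_sum]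
            apply Finset.sum_congr rfl
            intro k _
            have := Hc_smul c (f : ℝ → ℝ) k
            rw [← mul_assoc, ← this]; rfl }
      map_add' := by
        intro x y
        ext i f
        simp [mul_add, Finset.sum_add_distrib]
      map_smul' := by
        intro c x
        ext i f
        simp [Finset.mul_sum]
        apply Finset.sum_congr rfl
        intro k _
        ring }
  have hker : LinearMap.ker Ψ ≠ ⊥ := by
    apply LinearMap.ker_ne_bot_of_finrank_lt
    rw [Module.finrank_pi_fintype, Module.finrank_fintype_fun_eq_card, Fintype.card_coe, Int.card_Icc]
    simp only [Subspace.dual_finrank_eq]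
    rw [Finset.sum_coe_sort T (fun lam => Module.finrank ℝ (EFs a b lam))]
    omega
  obtain ⟨x, hx, hx0⟩ := (Submodule.ne_bot_iff _).mp hker
  set X : ℤ → ℝ := fun k => if h : k ∈ Finset.Icc (-(m:ℤ)) m then x ⟨k, h⟩ else 0 with hX
  obtain ⟨lam, hlam, f, hf, hne⟩ := low_eigenfun a b m X (by
      by_contra! h
      apply hx0
      ext k
      have := h k
      simp only [hX, k.2, dif_pos] at this
      exact this) (by
      intro k hk
      have : k ∉ Finset.Icc (-(m:ℤ)) m := by
        rw [Finset.mem_Icc]; intro h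
        have := abs_le.mpr h
        omega
      simp only [hX, this, dif_neg, not_false_eq_true]) (lamP (2 * m)) hlt
  apply hne
  by_cases hf0 : f = 0
  · rw [hf0]
    apply Finset.sum_eq_zero
    intro k _
    simp [Hc, av_const]
  · obtain ⟨n, hn⟩ := exists_index hP hf hf0
    have hn2 : n < 2 * m := by
      by_contra! hge
      have := hP.1 hge
      linarith
    have hmem : lam ∈ T := by
      rw [hT, Finset.mem_filter]
      refine ⟨?_, hlam⟩
      rw [hS, Finset.mem_image]
      exact ⟨n, Finset.mem_range.mpr hn2, hn⟩
    have h1 := congrFun (LinearMap.mem_ker.mp hx) ⟨lam, hmem⟩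
    have h2 := congrArg (fun φ : Module.Dual ℝ (EFs a b lam) => φ ⟨f, hf⟩) h1
    have h3 : ∑ k : Finset.Icc (-(m:ℤ)) m, Hc f (k:ℤ) * x k = 0 := h2
    rw [← Finset.sum_coe_sort, ← h3]
    apply Finset.sum_congr rfl
    intro k _
    have hk := k.2
    simp only [hX, hk, dif_pos]
end

section
lemma av_neg_comp {g : ℝ → ℝ} (hp : Function.Periodic g π) : av (fun x => g (-x)) = av g := by
  unfold av
  rw [intervalIntegral.integral_comp_neg]
  have := hp.intervalIntegral_add_eq (-π) 0
  simp at this ⊢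
  exact this

lemma cos_periodic_two (k : ℤ) : Function.Periodic (fun x => cos (2 * k * x)) π := by
  intro x
  have : 2 * (k:ℝ) * (x + π) = 2 * k * x + k * (2 * π) := by ring
  simp only [this, cos_add_int_mul_two_pi]

lemma sin_periodic_two (k : ℤ) : Function.Periodic (fun x => sin (2 * k * x)) π := by
  intro x
  have : 2 * (k:ℝ) * (x + π) = 2 * k * x + k * (2 * π) := by ring
  simp only [this, sin_add_int_mul_two_pi]

lemma Bc_even {f : ℝ → ℝ} (hp : Function.Periodic f π) (he : ∀ x, f (-x) = f x) (k : ℤ) : Bc f k = 0 := by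
  have := av_neg_comp (hp.mul (sin_periodic_two k))
  simp only [Pi.mul_apply] at this
  have e : (fun x => f (-x) * sin (2 * k * -x)) = fun x => (-1) * (f x * sin (2 * k * x)) := by
    ext x; rw [he, mul_neg, sin_neg]; ring
  rw [e, av_smul] at this
  unfold Bc
  have h2 : av (fun x => f x * sin (2 * k * x)) = av (f * fun x => sin (2 * k * x)) := rfl
  linarith

lemma Ac_odd {f : ℝ → ℝ} (hp : Function.Periodic f π) (he : ∀ x, f (-x) = - f x) (k : ℤ) : Ac f k = 0 := by
  have := av_neg_comp (hp.mul (cos_periodic_two k))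
  simp only [Pi.mul_apply] at this
  have e : (fun x => f (-x) * cos (2 * k * -x)) = fun x => (-1) * (f x * cos (2 * k * x)) := by
    ext x; rw [he, mul_neg, cos_neg]; ring
  rw [e, av_smul] at this
  unfold Ac
  have h2 : av (fun x => f x * cos (2 * k * x)) = av (f * fun x => cos (2 * k * x)) := rfl
  linarith

lemma ef_neg {a b lam : ℝ} {f : ℝ → ℝ} (hf : IsPerEF (pot a b) lam f) :
    IsPerEF (pot a b) lam (fun x => f (-x)) := by
  obtain ⟨h1, h2, h3⟩ := hf
  refine ⟨h1.comp contDiff_neg, ?_, ?_⟩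
  · intro x
    have e1 : deriv (fun x => f (-x)) = fun x => -deriv f (-x) := by ext x; exact deriv_comp_neg f x
    have e2 : deriv (fun x => -deriv f (-x)) x = deriv (deriv f) (-x) := by
      have : deriv (fun x => -deriv f (-x)) x = - deriv (fun x => deriv f (-x)) x := by
        exact deriv.fun_neg
      rw [this, deriv_comp_neg (deriv f) x, neg_neg]
    rw [e1, e2, ← h2 (-x)]
    unfold pot
    simp
  · intro x
    have := h3 (-(x + π))
    change f (-(x + π)) = f (-x)
    rw [← this]; congr 1; ring

lemma close_core {a b lam : ℝ} {f : ℝ → ℝ} (hf : IsPerEF (pot a b) lam f) (m : ℕ) (hm : 1 ≤ m)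
    (hV : |a| + |b| ≤ m) (hw : |lam - 4 * (m:ℝ)^2| ≤ |a| + |b|) :
    av (fun x => f x ^ 2) - (Hc f m ^ 2 + Hc f (-m) ^ 2) ≤
      (|a| + |b|)^2 / (4 * (m:ℝ)^2) * av (fun x => f x ^ 2) := by
  have hfc := hf.1.continuous
  have hm0 : (1:ℝ) ≤ m := by exact_mod_cast hm
  have p1 := parseval_sq hfc
  have p2 := parseval_sq (show Continuous (fun x => pot a b x * f x) by fun_prop)
  have hmm : (m:ℤ) ≠ -m := by omega
  have p3 : HasSum (fun k : ℤ => if k = m then Hc f m ^ 2 else 0) (Hc f m ^ 2) := hasSum_ite_eq _ _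
  have p4 : HasSum (fun k : ℤ => if k = -m then Hc f (-m) ^ 2 else 0) (Hc f (-m) ^ 2) := hasSum_ite_eq _ _
  have p5 := p1.sub (p3.add p4)
  have hV0 : 0 ≤ |a| + |b| := by positivity
  have h1 : av (fun x => f x ^ 2) - (Hc f m ^ 2 + Hc f (-m) ^ 2) ≤ 1 / (4 * (m:ℝ)^2) * av (fun x => (pot a b x * f x)^2) := by
    refine hasSum_le ?_ p5 (p2.mul_left _)
    intro k
    have hnn : 0 ≤ 1 / (4 * (m:ℝ)^2) * Hc (fun x => pot a b x * f x) k ^ 2 := by positivity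
    by_cases hk : k = m
    · simp only [hk, if_true, hmm, if_false]; rw [hk] at hnn; linarith
    by_cases hk' : k = -m
    · have : ¬ (-(m:ℤ) = m) := fun h => hmm h.symm
      simp only [hk', if_true, this, if_false]; rw [hk'] at hnn; linarith
    simp only [hk, hk', if_false, add_zero, sub_zero]
    have e := Hc_ef (continuous_pot a b) hf k
    have hbig : 2 * (m:ℝ) ≤ |lam - 4 * (k:ℝ)^2| := by
      have hkm : 2 * (m:ℝ) - 1 ≤ |(m:ℝ)^2 - (k:ℝ)^2| := by
        have h1 : (2 * (m:ℤ) - 1) ≤ |(m:ℤ)^2 - k^2| := by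
          have hc : |k| < m ∨ (m:ℤ) < |k| := by
            rcases lt_trichotomy (|k|) (m:ℤ) with h | h | h
            · exact Or.inl h
            · exfalso
              rcases abs_eq (by omega) |>.mp h with h | h
              · exact hk h
              · exact hk' h
            · exact Or.inr h
          rw [← sq_abs k]
          rcases hc with h | h
          · have : |k| + 1 ≤ m := h
            have h0 : 0 ≤ |k| := abs_nonneg k
            refine le_trans ?_ (le_abs_self _)
            nlinarith
          · have : (m:ℤ) + 1 ≤ |k| := h
            refine le_trans ?_ (neg_le_abs _)
            nlinarith
        exact_mod_cast h1
      have : |4 * ((m:ℝ)^2 - (k:ℝ)^2)| ≤ |lam - 4 * (k:ℝ)^2| + |lam - 4 * (m:ℝ)^2| := by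
        have : 4 * ((m:ℝ)^2 - (k:ℝ)^2) = (lam - 4 * (k:ℝ)^2) - (lam - 4 * (m:ℝ)^2) := by ring
        rw [this]; exact abs_sub _ _
      rw [abs_mul, abs_of_pos (show (0:ℝ) < 4 by norm_num)] at this
      linarith
    have e2 : Hc (fun x => pot a b x * f x) k = (lam - 4 * (k:ℝ)^2) * Hc f k := by linarith
    rw [e2, mul_pow, ← sq_abs (lam - 4 * (k:ℝ)^2)]
    have : (2 * (m:ℝ))^2 ≤ |lam - 4 * (k:ℝ)^2|^2 := by gcongr
    have hs := sq_nonneg (Hc f k)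
    rw [one_div, inv_mul_eq_div, le_div_iff₀ (by positivity)]
    nlinarith
  refine h1.trans ?_
  have h2 : av (fun x => (pot a b x * f x)^2) ≤ (|a| + |b|)^2 * av (fun x => f x ^ 2) := by
    rw [← av_smul]
    apply av_mono (by fun_prop) (by fun_prop)
    intro x
    rw [mul_pow]
    gcongr ?_ * _
    rw [← sq_abs (pot a b x)]
    have := abs_pot_le a b x
    gcongr
  calc _ ≤ 1 / (4 * (m:ℝ)^2) * ((|a| + |b|)^2 * av (fun x => f x ^ 2)) := by gcongr
    _ = _ := by ring

/-- Data: `f` is normalized with respect to `φ` and `φ` captures most of `f`. -/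
lemma close_of_coef {a b lam : ℝ} {f φ : ℝ → ℝ} (hf : IsPerEF (pot a b) lam f) (hφ : Continuous φ)
    (hφ2 : av (fun x => φ x ^ 2) = 1 / 2) (m : ℕ) (hm : 1 ≤ m)
    (hV : |a| + |b| ≤ m) (hw : |lam - 4 * (m:ℝ)^2| ≤ |a| + |b|)
    (hH : Hc f m ^ 2 + Hc f (-m) ^ 2 = 2 * (av (fun x => f x * φ x)) ^ 2) :
    (av (fun x => f x * φ x) = 0 → f = 0) ∧
    (av (fun x => f x * φ x) = 1 / 2 → av (fun x => (f x - φ x)^2) ≤ 1 / 4 * av (fun x => f x ^ 2) ∧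
      av (fun x => (f x - φ x)^2) ≤ (|a| + |b|)^2 / (4 * (m:ℝ)^2)) := by
  have hfc := hf.1.continuous
  have h := close_core hf m hm hV hw
  have hm0 : (1:ℝ) ≤ m := by exact_mod_cast hm
  have hV0 : 0 ≤ |a| + |b| := by positivity
  have hq : (|a| + |b|)^2 / (4 * (m:ℝ)^2) ≤ 1 / 4 := by
    rw [div_le_div_iff₀ (by positivity) (by norm_num)]
    have : (|a| + |b|)^2 ≤ (m:ℝ)^2 := by gcongr
    linarith
  set q := (|a| + |b|)^2 / (4 * (m:ℝ)^2) with hqd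
  have hq0 : 0 ≤ q := by positivity
  have hn : 0 ≤ av (fun x => f x ^ 2) := av_nonneg (by fun_prop) (fun x => sq_nonneg _)
  rw [hH] at h
  constructor
  · intro h0
    rw [h0] at h
    apply eq_zero_of_av_sq hfc hf.2.2
    nlinarith
  · intro h0
    rw [h0] at h
    have e : av (fun x => (f x - φ x)^2) = av (fun x => f x ^ 2) - 1 / 2 := by
      have : (fun x => (f x - φ x)^2) = fun x => (f x ^ 2 - 2 * (f x * φ x)) + φ x ^ 2 := by ext x; ring
      rw [this, av_add (by fun_prop) (by fun_prop), av_sub (by fun_prop) (by fun_prop), av_smul, h0, hφ2]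
      ring
    rw [e]
    constructor <;> nlinarith

lemma av_cos_sq (m : ℕ) (hm : 1 ≤ m) : av (fun x => cos (2 * m * x) ^ 2) = 1 / 2 := by
  have : (fun x => cos (2 * m * x) ^ 2) = fun x => 1 / 2 + 1 / 2 * cos (2 * ((2 * m : ℤ) : ℝ) * x) := by
    ext x
    push_cast
    rw [show 2 * (2 * (m:ℝ)) * x = 2 * (2 * m * x) by ring, cos_two_mul]; ring
  rw [this, av_add (by fun_prop) (by fun_prop), av_const, av_smul, av_cos, if_neg (by omega)]; ring

lemma av_sin_sq (m : ℕ) (hm : 1 ≤ m) : av (fun x => sin (2 * m * x) ^ 2) = 1 / 2 := by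
  have : (fun x => sin (2 * m * x) ^ 2) = fun x => 1 - cos (2 * m * x) ^ 2 := by
    ext x
    rw [sin_sq]
  rw [this, av_sub (by fun_prop) (by fun_prop), av_const, av_cos_sq m hm]; ring

lemma unique_phi {a b lam mu : ℝ} {f g φ : ℝ → ℝ} (hφ : Continuous φ) (hf : IsPerEF (pot a b) lam f)
    (hg : IsPerEF (pot a b) mu g) (hf0 : f ≠ 0)
    (h1 : av (fun x => (f x - φ x)^2) ≤ 1 / 4 * av (fun x => f x ^ 2))
    (h2 : av (fun x => (g x - φ x)^2) ≤ 1 / 4 * av (fun x => g x ^ 2)) : lam = mu := by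
  by_contra hne
  have ho := ef_orth (continuous_pot a b) hf hg hne
  have hfc := hf.1.continuous
  have hgc := hg.1.continuous
  have e1 : av (fun x => (f x - g x)^2) = av (fun x => f x ^ 2) + av (fun x => g x ^ 2) := by
    have : (fun x => (f x - g x)^2) = fun x => (f x ^ 2 - 2 * (f x * g x)) + g x ^ 2 := by ext x; ring
    rw [this, av_add (by fun_prop) (by fun_prop), av_sub (by fun_prop) (by fun_prop), av_smul, ho]
    ring
  have e2 : av (fun x => (f x - g x)^2) ≤ 2 * (av (fun x => (f x - φ x)^2) + av (fun x => (g x - φ x)^2)) := by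
    rw [← av_add (by fun_prop) (by fun_prop), ← av_smul]
    apply av_mono (by fun_prop) (by fun_prop)
    intro x
    nlinarith [sq_nonneg ((f x - φ x) + (g x - φ x))]
  have hn1 : 0 ≤ av (fun x => f x ^ 2) := av_nonneg (by fun_prop) (fun x => sq_nonneg _)
  have hn2 : 0 ≤ av (fun x => g x ^ 2) := av_nonneg (by fun_prop) (fun x => sq_nonneg _)
  apply hf0
  apply eq_zero_of_av_sq hfc hf.2.2
  linarith

/-- Normalized even-type eigenfunction. -/
def GoodEF (a b lam : ℝ) (m : ℕ) (φ f : ℝ → ℝ) : Prop :=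
  IsPerEF (pot a b) lam f ∧ f ≠ 0 ∧ av (fun x => f x * φ x) = 1 / 2 ∧
    av (fun x => (f x - φ x)^2) ≤ 1 / 4 * av (fun x => f x ^ 2) ∧
      av (fun x => (f x - φ x)^2) ≤ (|a| + |b|)^2 / (4 * (m:ℝ)^2)

lemma good_of {a b lam : ℝ} {f φ : ℝ → ℝ} (hf : IsPerEF (pot a b) lam f) (hf0 : f ≠ 0) (hφ : Continuous φ)
    (hφ2 : av (fun x => φ x ^ 2) = 1 / 2) (m : ℕ) (hm : 1 ≤ m)
    (hV : |a| + |b| ≤ m) (hw : |lam - 4 * (m:ℝ)^2| ≤ |a| + |b|)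
    (hH : Hc f m ^ 2 + Hc f (-m) ^ 2 = 2 * (av (fun x => f x * φ x)) ^ 2) : ∃ g, GoodEF a b lam m φ g := by
  have h1 := (close_of_coef hf hφ hφ2 m hm hV hw hH).1
  have hne : av (fun x => f x * φ x) ≠ 0 := fun h => hf0 (h1 h)
  set c := 1 / (2 * av (fun x => f x * φ x)) with hc
  have hg : IsPerEF (pot a b) lam (fun x => c * f x) := (EFs a b lam).smul_mem c hf
  have hg0 : (fun x => c * f x) ≠ 0 := by
    intro h
    apply hf0
    ext x
    have h2 := congrFun h x
    have hc0 : c ≠ 0 := by rw [hc]; positivity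
    simpa [hc0] using h2
  have hgφ : av (fun x => c * f x * φ x) = c * av (fun x => f x * φ x) := by
    rw [← av_smul]; congr 1; ext x; ring
  have hg1 : av (fun x => c * f x * φ x) = 1 / 2 := by
    rw [hgφ, hc]; field_simp
  have hH2 : Hc (fun x => c * f x) m ^ 2 + Hc (fun x => c * f x) (-m) ^ 2 = 2 * (av (fun x => (c * f x) * φ x)) ^ 2 := by
    rw [Hc_smul, Hc_smul, hgφ]; linear_combination c ^ 2 * hH
  have h2 := (close_of_coef hg hφ hφ2 m hm hV hw hH2).2 hg1
  exact ⟨_, hg, hg0, hg1, h2.1, h2.2⟩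

lemma H_even {a b lam : ℝ} {f : ℝ → ℝ} (hf : IsPerEF (pot a b) lam f) (he : ∀ x, f (-x) = f x) (m : ℕ) :
    Hc f m ^ 2 + Hc f (-m) ^ 2 = 2 * (av (fun x => f x * cos (2 * m * x))) ^ 2 := by
  rw [Hc_eq hf.1.continuous, Hc_eq hf.1.continuous, Ac_neg, Bc_even hf.2.2 he, Bc_even hf.2.2 he]
  have : Ac f m = av (fun x => f x * cos (2 * m * x)) := by unfold Ac; push_cast; rfl
  rw [this]; ring

lemma H_odd {a b lam : ℝ} {f : ℝ → ℝ} (hf : IsPerEF (pot a b) lam f) (he : ∀ x, f (-x) = - f x) (m : ℕ) :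
    Hc f m ^ 2 + Hc f (-m) ^ 2 = 2 * (av (fun x => f x * sin (2 * m * x))) ^ 2 := by
  rw [Hc_eq hf.1.continuous, Hc_eq hf.1.continuous, Bc_neg, Ac_odd hf.2.2 he, Ac_odd hf.2.2 he]
  have : Bc f m = av (fun x => f x * sin (2 * m * x)) := by unfold Bc; push_cast; rfl
  rw [this]; ring

lemma parts {a b lam : ℝ} {f : ℝ → ℝ} (hf : IsPerEF (pot a b) lam f) :
    IsPerEF (pot a b) lam (fun x => f x + f (-x)) ∧ IsPerEF (pot a b) lam (fun x => f x - f (-x)) :=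
  ⟨(EFs a b lam).add_mem hf (ef_neg hf), (EFs a b lam).sub_mem hf (ef_neg hf)⟩

theorem exists_pair {a b : ℝ} {lamP : ℕ → ℝ} (hP : EnumPer (pot a b) lamP) (m : ℕ) (hm : 1 ≤ m)
    (hV : |a| + |b| ≤ m) :
    ∃ le lo fe fo, |le - lo| = lamP (2 * m) - lamP (2 * m - 1) ∧
      |le - 4 * (m:ℝ)^2| ≤ |a| + |b| ∧ |lo - 4 * (m:ℝ)^2| ≤ |a| + |b| ∧
      GoodEF a b le m (fun x => cos (2 * m * x)) fe ∧ GoodEF a b lo m (fun x => sin (2 * m * x)) fo := by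
  have h1 := lamP_ge hP m hm
  have h2 := lamP_le hP m
  have hmono : lamP (2 * m - 1) ≤ lamP (2 * m) := hP.1 (by omega)
  have w1 : |lamP (2 * m - 1) - 4 * (m:ℝ)^2| ≤ |a| + |b| := by rw [abs_le]; constructor <;> linarith
  have w2 : |lamP (2 * m) - 4 * (m:ℝ)^2| ≤ |a| + |b| := by rw [abs_le]; constructor <;> linarith
  have hcc : Continuous (fun x => cos (2 * (m:ℝ) * x)) := by fun_prop
  have hsc : Continuous (fun x => sin (2 * (m:ℝ) * x)) := by fun_prop
  have ge : ∀ lam f, IsPerEF (pot a b) lam f → |lam - 4 * (m:ℝ)^2| ≤ |a| + |b| → (fun x => f x + f (-x)) ≠ 0 →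
      ∃ g, GoodEF a b lam m (fun x => cos (2 * m * x)) g := by
    intro lam f hf hw hne
    exact good_of (parts hf).1 hne hcc (av_cos_sq m hm) m hm hV hw (H_even (parts hf).1 (fun x => by rw [neg_neg]; ring) m)
  have go : ∀ lam f, IsPerEF (pot a b) lam f → |lam - 4 * (m:ℝ)^2| ≤ |a| + |b| → (fun x => f x - f (-x)) ≠ 0 →
      ∃ g, GoodEF a b lam m (fun x => sin (2 * m * x)) g := by
    intro lam f hf hw hne
    exact good_of (parts hf).2 hne hsc (av_sin_sq m hm) m hm hV hw (H_odd (parts hf).2 (fun x => by rw [neg_neg]; ring) m)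
  have hor : ∀ f : ℝ → ℝ, f ≠ 0 → (fun x => f x + f (-x)) ≠ 0 ∨ (fun x => f x - f (-x)) ≠ 0 := by
    intro f hf
    by_contra! h
    apply hf
    ext x
    have t1 := congrFun h.1 x
    have t2 := congrFun h.2 x
    simp only [Pi.zero_apply] at t1 t2 ⊢
    linarith
  by_cases hne : lamP (2 * m - 1) = lamP (2 * m)
  · -- double eigenvalue
    obtain ⟨lam, hlam⟩ : ∃ lam, lam = lamP (2 * m) := ⟨_, rfl⟩
    have hdim : 2 ≤ Module.finrank ℝ (EFs a b lam) := by
      rw [← perMult_eq, ← hP.2.2]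
      haveI := fiber_finite hP lam
      have : Function.Injective (fun i : Fin 2 => if i = 0 then (⟨2 * m - 1, by rw [hne, hlam]⟩ : {n : ℕ // lamP n = lam}) else ⟨2 * m, hlam.symm⟩) := by
        intro i j
        fin_cases i <;> fin_cases j <;> simp <;> omega
      have := Nat.card_le_card_of_injective _ this
      simpa using this
    haveI := upper_finite a b lam
    have key : ∀ φ : ℝ → ℝ, Continuous φ → ∃ f, IsPerEF (pot a b) lam f ∧ f ≠ 0 ∧ av (fun x => f x * φ x) = 0 := by
      intro φ hφ
      let T : EFs a b lam →ₗ[ℝ] ℝ :=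
        { toFun := fun f => av (fun x => (f : ℝ → ℝ) x * φ x)
          map_add' := by
            intro f g
            have c1 := f.2.1.continuous
            have c2 := g.2.1.continuous
            rw [← av_add (by fun_prop) (by fun_prop)]
            congr 1; ext x; simp [add_mul]
          map_smul' := by
            intro c f
            rw [RingHom.id_apply, smul_eq_mul, ← av_smul]
            congr 1; ext x; simp [mul_assoc] }
      have hker : LinearMap.ker T ≠ ⊥ := by
        apply LinearMap.ker_ne_bot_of_finrank_lt
        rw [Module.finrank_self]; omega
      obtain ⟨x, hx, hx0⟩ := (Submodule.ne_bot_iff _).mp hker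
      exact ⟨x, x.2, fun h => hx0 (Subtype.ext h), hx⟩
    rw [← hlam] at w2
    obtain ⟨f, hf, hf0, hfc⟩ := key _ hsc
    obtain ⟨g, hg, hg0, hgc⟩ := key _ hcc
    have hfe : (fun x => f x + f (-x)) ≠ 0 := by
      intro h
      have hodd : ∀ x, f (-x) = - f x := by
        intro x
        have := congrFun h x
        simp only [Pi.zero_apply] at this; linarith
      exact hf0 ((close_of_coef hf hsc (av_sin_sq m hm) m hm hV w2 (H_odd hf hodd m)).1 hfc)
    have hgo : (fun x => g x - g (-x)) ≠ 0 := by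
      intro h
      have heven : ∀ x, g (-x) = g x := by
        intro x
        have := congrFun h x
        simp only [Pi.zero_apply] at this; linarith
      exact hg0 ((close_of_coef hg hcc (av_cos_sq m hm) m hm hV w2 (H_even hg heven m)).1 hgc)
    obtain ⟨fe, hfe'⟩ := ge lam f hf w2 hfe
    obtain ⟨fo, hfo'⟩ := go lam g hg w2 hgo
    exact ⟨lam, lam, fe, fo, by rw [hne]; simp, w2, w2, hfe', hfo'⟩
  · obtain ⟨f1, hf10, hf1⟩ := hP.2.1 (2 * m - 1)
    obtain ⟨f2, hf20, hf2⟩ := hP.2.1 (2 * m)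
    have hd : 0 ≤ lamP (2 * m) - lamP (2 * m - 1) := by linarith
    rcases hor f1 hf10 with c1 | c1 <;> rcases hor f2 hf20 with c2 | c2
    · obtain ⟨g1, hg1⟩ := ge _ f1 hf1 w1 c1
      obtain ⟨g2, hg2⟩ := ge _ f2 hf2 w2 c2
      exact absurd (unique_phi hcc hg1.1 hg2.1 hg1.2.1 hg1.2.2.2.1 hg2.2.2.2.1) hne
    · obtain ⟨g1, hg1⟩ := ge _ f1 hf1 w1 c1
      obtain ⟨g2, hg2⟩ := go _ f2 hf2 w2 c2
      exact ⟨_, _, g1, g2, by rw [abs_sub_comm, abs_of_nonneg hd], w1, w2, hg1, hg2⟩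
    · obtain ⟨g1, hg1⟩ := go _ f1 hf1 w1 c1
      obtain ⟨g2, hg2⟩ := ge _ f2 hf2 w2 c2
      exact ⟨_, _, g2, g1, by rw [abs_of_nonneg hd], w2, w1, hg2, hg1⟩
    · obtain ⟨g1, hg1⟩ := go _ f1 hf1 w1 c1
      obtain ⟨g2, hg2⟩ := go _ f2 hf2 w2 c2
      exact absurd (unique_phi hsc hg1.1 hg2.1 hg1.2.1 hg1.2.2.2.1 hg2.2.2.2.1) hne
end

section
def rr (α : ℝ) (f : ℝ → ℝ) (k : ℤ) : ℝ := av (fun x => f x * (exp (-α * cos (2 * x)) * cos (2 * k * x)))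
def ll (α : ℝ) (f : ℝ → ℝ) (k : ℤ) : ℝ := av (fun x => f x * (exp (α * cos (2 * x)) * sin (2 * k * x)))

lemma hasDeriv_lin (c x : ℝ) : HasDerivAt (fun x : ℝ => c * x) c x := by
  simpa using (hasDerivAt_id x).const_mul c

lemma hasDeriv_exp_cos (β x : ℝ) : HasDerivAt (fun x => exp (β * cos (2 * x))) (-(2 * β * sin (2 * x)) * exp (β * cos (2 * x))) x := by
  have := (((hasDeriv_lin 2 x).cos).const_mul β).exp
  exact this.congr_deriv (by ring)

lemma exp_cos_per (β : ℝ) : Function.Periodic (fun x => exp (β * cos (2 * x))) π := by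
  intro x
  have := cos_periodic_two 1 x
  simp only [Int.cast_one, mul_one] at this
  simp only [this]

lemma dd_expcos (β c : ℝ) (x : ℝ) : deriv (deriv (fun x => exp (β * cos (2 * x)) * cos (c * x))) x =
    exp (β * cos (2 * x)) * ((-(4 * β * cos (2 * x)) + 4 * β^2 * sin (2 * x)^2 - c^2) * cos (c * x)
      + 4 * β * c * sin (2 * x) * sin (c * x)) := by
  have h1 : deriv (fun x => exp (β * cos (2 * x)) * cos (c * x)) = fun x => (exp (β * cos (2 * x))) * (-(2 * β * sin (2 * x)) * cos (c * x) - c * sin (c * x)) := by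
    ext x
    have := (hasDeriv_exp_cos β x).mul (hasDeriv_lin c x).cos
    exact (this.congr_deriv (by ring)).deriv
  rw [h1]
  have h2 := (hasDeriv_exp_cos β x).mul (((((hasDeriv_lin 2 x).sin.const_mul (2 * β)).neg).mul (hasDeriv_lin c x).cos).sub ((hasDeriv_lin c x).sin.const_mul c))
  exact (h2.congr_deriv (by simp only [Pi.mul_apply, Pi.neg_apply, Pi.sub_apply]; ring)).deriv

lemma dd_expsin (β c : ℝ) (x : ℝ) : deriv (deriv (fun x => exp (β * cos (2 * x)) * sin (c * x))) x =
    exp (β * cos (2 * x)) * ((-(4 * β * cos (2 * x)) + 4 * β^2 * sin (2 * x)^2 - c^2) * sin (c * x)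
      - 4 * β * c * sin (2 * x) * cos (c * x)) := by
  have h1 : deriv (fun x => exp (β * cos (2 * x)) * sin (c * x)) = fun x => (exp (β * cos (2 * x))) * (-(2 * β * sin (2 * x)) * sin (c * x) + c * cos (c * x)) := by
    ext x
    have := (hasDeriv_exp_cos β x).mul (hasDeriv_lin c x).sin
    exact (this.congr_deriv (by ring)).deriv
  rw [h1]
  have h2 := (hasDeriv_exp_cos β x).mul (((((hasDeriv_lin 2 x).sin.const_mul (2 * β)).neg).mul (hasDeriv_lin c x).sin).add ((hasDeriv_lin c x).cos.const_mul c))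
  exact (h2.congr_deriv (by simp only [Pi.mul_apply, Pi.neg_apply, Pi.add_apply]; ring)).deriv

lemma av_lin3 {f g1 g2 g3 : ℝ → ℝ} (hf : Continuous f) (h1 : Continuous g1) (h2 : Continuous g2) (h3 : Continuous g3)
    (c1 c2 c3 : ℝ) : av (fun x => f x * (c1 * g1 x + c2 * g2 x + c3 * g3 x)) =
      c1 * av (fun x => f x * g1 x) + c2 * av (fun x => f x * g2 x) + c3 * av (fun x => f x * g3 x) := by
  rw [← av_smul, ← av_smul, ← av_smul, ← av_add (by fun_prop) (by fun_prop), ← av_add (by fun_prop) (by fun_prop)]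
  congr 1; ext x; ring

lemma pot_eq (α t x : ℝ) : pot (-4 * α * t) (-2 * α^2) x = -4 * α * t * cos (2 * x) - 2 * α^2 * (1 - 2 * sin (2 * x)^2) := by
  unfold pot
  rw [show 4 * x = 2 * (2 * x) by ring, cos_two_mul (2 * x), sin_sq]; ring

theorem rr_rec {α t lam : ℝ} {f : ℝ → ℝ} (hf : IsPerEF (pot (-4 * α * t) (-2 * α^2)) lam f) (k : ℤ) :
    (lam + 2 * α^2) * rr α f k = 4 * (k:ℝ)^2 * rr α f k + 2 * α * (2 * k - 1 - t) * rr α f (k - 1)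
      - 2 * α * (2 * k + 1 + t) * rr α f (k + 1) := by
  set g : ℝ → ℝ := fun x => exp (-α * cos (2 * x)) * cos (2 * k * x) with hg
  have hgC : ContDiff ℝ 2 g := by fun_prop
  have hgp : Function.Periodic g π := (exp_cos_per (-α)).mul (cos_periodic_two k)
  have h := Lop_symm (continuous_pot (-4 * α * t) (-2 * α^2)) hf.1 hgC hf.2.2 hgp
  unfold Lop at h
  simp only [hf.2.1] at h
  have hfc := hf.1.continuous
  have e1 : av (fun x => lam * f x * g x) = lam * rr α f k := by
    unfold rr; rw [← av_smul]; congr 1; ext x; ring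
  have e2 : (fun x => f x * (-(deriv (deriv g) x) + pot (-4 * α * t) (-2 * α^2) x * g x)) =
      fun x => f x * ((4 * (k:ℝ)^2 - 2 * α^2) * (exp (-α * cos (2 * x)) * cos (2 * k * x)) + (2 * α * (2 * k - 1 - t)) * (exp (-α * cos (2 * x)) * cos (2 * ((k - 1 : ℤ) : ℝ) * x))
        + (-(2 * α * (2 * k + 1 + t))) * (exp (-α * cos (2 * x)) * cos (2 * ((k + 1 : ℤ) : ℝ) * x))) := by
    ext x
    simp only [hg]
    rw [dd_expcos, pot_eq]
    push_cast
    rw [show 2 * ((k:ℝ) - 1) * x = 2 * k * x - 2 * x by ring, show 2 * ((k:ℝ) + 1) * x = 2 * k * x + 2 * x by ring, cos_sub, cos_add]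
    ring
  rw [e1, e2, av_lin3 hfc (by fun_prop) (by fun_prop) (by fun_prop)] at h
  unfold rr at h ⊢
  linarith

theorem ll_rec {α t lam : ℝ} {f : ℝ → ℝ} (hf : IsPerEF (pot (-4 * α * t) (-2 * α^2)) lam f) (k : ℤ) :
    (lam + 2 * α^2) * ll α f k = 4 * (k:ℝ)^2 * ll α f k + 2 * α * (2 * k + 1 - t) * ll α f (k + 1)
      - 2 * α * (2 * k - 1 + t) * ll α f (k - 1) := by
  set g : ℝ → ℝ := fun x => exp (α * cos (2 * x)) * sin (2 * k * x) with hg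
  have hgC : ContDiff ℝ 2 g := by fun_prop
  have hgp : Function.Periodic g π := (exp_cos_per α).mul (sin_periodic_two k)
  have h := Lop_symm (continuous_pot (-4 * α * t) (-2 * α^2)) hf.1 hgC hf.2.2 hgp
  unfold Lop at h
  simp only [hf.2.1] at h
  have hfc := hf.1.continuous
  have e1 : av (fun x => lam * f x * g x) = lam * ll α f k := by
    unfold ll; rw [← av_smul]; congr 1; ext x; ring
  have e2 : (fun x => f x * (-(deriv (deriv g) x) + pot (-4 * α * t) (-2 * α^2) x * g x)) =
      fun x => f x * ((4 * (k:ℝ)^2 - 2 * α^2) * (exp (α * cos (2 * x)) * sin (2 * k * x)) + (2 * α * (2 * k + 1 - t)) * (exp (α * cos (2 * x)) * sin (2 * ((k + 1 : ℤ) : ℝ) * x))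
        + (-(2 * α * (2 * k - 1 + t))) * (exp (α * cos (2 * x)) * sin (2 * ((k - 1 : ℤ) : ℝ) * x))) := by
    ext x
    simp only [hg]
    rw [dd_expsin, pot_eq]
    push_cast
    rw [show 2 * ((k:ℝ) - 1) * x = 2 * k * x - 2 * x by ring, show 2 * ((k:ℝ) + 1) * x = 2 * k * x + 2 * x by ring, sin_sub, sin_add]
    ring
  rw [e1, e2, av_lin3 hfc (by fun_prop) (by fun_prop) (by fun_prop)] at h
  unfold ll at h ⊢
  linarith

lemma av_abs_le {f : ℝ → ℝ} {M : ℝ} (hf : Continuous f) (h : ∀ x, |f x| ≤ M) : |av f| ≤ M := by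
  rw [abs_le]
  constructor
  · rw [← av_const (-M)]
    exact av_mono (by fun_prop) hf (fun x => (abs_le.mp (h x)).1)
  · rw [← av_const M]
    exact av_mono hf (by fun_prop) (fun x => (abs_le.mp (h x)).2)

lemma per_bounded {f : ℝ → ℝ} (hf : Continuous f) (hp : Function.Periodic f π) : ∃ M, 0 ≤ M ∧ ∀ x, |f x| ≤ M := by
  obtain ⟨M, hM⟩ := (isCompact_Icc (a := (0:ℝ)) (b := π)).exists_bound_of_continuousOn hf.continuousOn
  refine ⟨M, (norm_nonneg _).trans (hM 0 ⟨le_rfl, Real.pi_pos.le⟩), fun x => ?_⟩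
  obtain ⟨y, hy, hxy⟩ := hp.exists_mem_Ico₀ Real.pi_pos x
  rw [hxy]
  exact hM y ⟨hy.1, hy.2.le⟩

lemma decay_cos {F : ℝ → ℝ} (hF : ContDiff ℝ 2 F) (hp : Function.Periodic F π) :
    ∃ M, 0 ≤ M ∧ ∀ k : ℤ, (k:ℝ)^2 * |av (fun x => F x * cos (2 * k * x))| ≤ M ∧ (k:ℝ)^2 * |av (fun x => F x * sin (2 * k * x))| ≤ M := by
  obtain ⟨M, hM0, hM⟩ := per_bounded (cont_dd hF) (periodic_deriv (periodic_deriv hp))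
  refine ⟨M, hM0, fun k => ?_⟩
  have hc := cont_dd hF
  constructor
  · have h := ibp2 hF (show ContDiff ℝ 2 (fun x => cos (2 * k * x)) by fun_prop) hp (cos_periodic_two k)
    rw [dd_cos] at h
    have e : (fun x => F x * (-(2 * (k:ℝ))^2 * cos (2 * k * x))) = fun x => (-(4 * (k:ℝ)^2)) * (F x * cos (2 * k * x)) := by
      ext x; ring
    simp only [e, av_smul] at h
    have hb : |av (fun x => deriv (deriv F) x * cos (2 * k * x))| ≤ M := av_abs_le (by fun_prop) (fun x => by
      rw [abs_mul]
      calc _ ≤ M * 1 := by gcongr; exact hM x; exact abs_cos_le_one _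
        _ = M := mul_one M)
    rw [h, abs_mul, abs_neg, abs_of_nonneg (show (0:ℝ) ≤ 4 * (k:ℝ)^2 by positivity)] at hb
    have : 0 ≤ (k:ℝ)^2 * |av (fun x => F x * cos (2 * k * x))| := by positivity
    linarith
  · have h := ibp2 hF (show ContDiff ℝ 2 (fun x => sin (2 * k * x)) by fun_prop) hp (sin_periodic_two k)
    rw [dd_sin] at h
    have e : (fun x => F x * (-(2 * (k:ℝ))^2 * sin (2 * k * x))) = fun x => (-(4 * (k:ℝ)^2)) * (F x * sin (2 * k * x)) := by
      ext x; ring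
    simp only [e, av_smul] at h
    have hb : |av (fun x => deriv (deriv F) x * sin (2 * k * x))| ≤ M := av_abs_le (by fun_prop) (fun x => by
      rw [abs_mul]
      calc _ ≤ M * 1 := by gcongr; exact hM x; exact abs_sin_le_one _
        _ = M := mul_one M)
    rw [h, abs_mul, abs_neg, abs_of_nonneg (show (0:ℝ) ≤ 4 * (k:ℝ)^2 by positivity)] at hb
    have : 0 ≤ (k:ℝ)^2 * |av (fun x => F x * sin (2 * k * x))| := by positivity
    linarith

lemma rr_decay {v : ℝ → ℝ} {lam : ℝ} {f : ℝ → ℝ} (α : ℝ) (hf : IsPerEF v lam f) :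
    ∃ M, 0 ≤ M ∧ ∀ k : ℤ, (k:ℝ)^2 * |rr α f k| ≤ M := by
  obtain ⟨M, hM, h⟩ := decay_cos (F := fun x => f x * exp (-α * cos (2 * x)))
    (hf.1.mul (by fun_prop)) (Function.Periodic.mul hf.2.2 (exp_cos_per (-α)))
  refine ⟨M, hM, fun k => ?_⟩
  have := (h k).1
  unfold rr
  simpa only [mul_assoc] using this

lemma ll_decay {v : ℝ → ℝ} {lam : ℝ} {f : ℝ → ℝ} (α : ℝ) (hf : IsPerEF v lam f) :
    ∃ M, 0 ≤ M ∧ ∀ k : ℤ, (k:ℝ)^2 * |ll α f k| ≤ M := by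
  obtain ⟨M, hM, h⟩ := decay_cos (F := fun x => f x * exp (α * cos (2 * x)))
    (hf.1.mul (by fun_prop)) (Function.Periodic.mul hf.2.2 (exp_cos_per α))
  refine ⟨M, hM, fun k => ?_⟩
  have := (h k).2
  unfold ll
  simpa only [mul_assoc] using this

lemma rr_neg (α : ℝ) (f : ℝ → ℝ) (k : ℤ) : rr α f (-k) = rr α f k := by
  unfold rr; congr 1; ext x; push_cast
  rw [show 2 * -(k:ℝ) * x = -(2 * k * x) by ring, cos_neg]

lemma ll_zero (α : ℝ) (f : ℝ → ℝ) : ll α f 0 = 0 := by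
  unfold ll; simp [av_const]

open Filter Topology in
/-- The telescoping identity. -/
theorem telescope {α t le lo : ℝ} {fe fo : ℝ → ℝ} (hfe : IsPerEF (pot (-4 * α * t) (-2 * α^2)) le fe)
    (hfo : IsPerEF (pot (-4 * α * t) (-2 * α^2)) lo fo) :
    Summable (fun k : ℕ => ll α fo (k + 1) * rr α fe (k + 1)) ∧
    (le - lo) * ∑' k : ℕ, ll α fo (k + 1) * rr α fe (k + 1) = 2 * α * (1 - t) * (rr α fe 0 * ll α fo 1) := by
  obtain ⟨M1, hM1, h1⟩ := rr_decay α hfe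
  obtain ⟨M2, hM2, h2⟩ := ll_decay α hfo
  have hb1 : ∀ k : ℕ, |rr α fe (k + 1)| ≤ M1 / ((k:ℝ) + 1)^2 := by
    intro k
    rw [le_div_iff₀ (by positivity)]
    have := h1 (k + 1); push_cast at this; linarith
  have hb2 : ∀ k : ℕ, |ll α fo (k + 1)| ≤ M2 / ((k:ℝ) + 1)^2 := by
    intro k
    rw [le_div_iff₀ (by positivity)]
    have := h2 (k + 1); push_cast at this; linarith
  have hsum : Summable (fun k : ℕ => ll α fo (k + 1) * rr α fe (k + 1)) := by
    have hs : Summable (fun k : ℕ => M2 * M1 * (1 / ((k:ℝ) + 1)^2)) := by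
      apply Summable.mul_left
      have := (summable_nat_add_iff 1).mpr (Real.summable_one_div_nat_pow.mpr (show 1 < 2 by norm_num))
      simpa using this
    refine Summable.of_norm_bounded hs fun k => ?_
    rw [norm_mul, Real.norm_eq_abs, Real.norm_eq_abs]
    calc _ ≤ M2 / ((k:ℝ) + 1)^2 * (M1 / ((k:ℝ) + 1)^2) := by gcongr; exact hb2 k; exact hb1 k
      _ ≤ M2 / ((k:ℝ) + 1)^2 * (M1 / 1) := by
        gcongr
        have : (0:ℝ) ≤ k := Nat.cast_nonneg k
        nlinarith
      _ = _ := by ring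
  refine ⟨hsum, ?_⟩
  set T : ℕ → ℝ := fun k => 2 * α * ((2 * k + 1 - t) * (rr α fe k * ll α fo (k + 1)) + (2 * k + 1 + t) * (rr α fe (k + 1) * ll α fo k)) with hT
  have hstep : ∀ k : ℕ, (le - lo) * (ll α fo (k + 1) * rr α fe (k + 1)) = T k - T (k + 1) := by
    intro k
    have e1 := rr_rec hfe ((k:ℤ) + 1)
    have e2 := ll_rec hfo ((k:ℤ) + 1)
    simp only [hT]
    rw [show (k:ℤ) + 1 - 1 = k by ring] at e1 e2
    push_cast at e1 e2 ⊢
    linear_combination (ll α fo (k+1)) * e1 - (rr α fe (k+1)) * e2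
  have hpart : ∀ K : ℕ, ∑ k ∈ Finset.range K, (le - lo) * (ll α fo (k + 1) * rr α fe (k + 1)) = T 0 - T K := by
    intro K
    rw [Finset.sum_congr rfl (fun k _ => hstep k), Finset.sum_range_sub']
  have hTlim : Tendsto T atTop (𝓝 0) := by
    rw [← tendsto_add_atTop_iff_nat 1]
    have hbd : ∀ k : ℕ, ‖T (k + 1)‖ ≤ (2 * |α| * (4 + |t|) * 2 * (M1 * M2)) * (1 / ((k:ℝ) + 1)) := by
      intro k
      simp only [hT]
      have a1 := hb1 k
      have a2 := hb2 k
      have a3 := hb1 (k + 1)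
      have a4 := hb2 (k + 1)
      push_cast at a3 a4 ⊢
      have hk : (0:ℝ) ≤ k := Nat.cast_nonneg k
      have a1' : |rr α fe (k + 1)| ≤ M1 / ((k:ℝ) + 1) :=
        a1.trans (div_le_div_of_nonneg_left hM1 (by positivity) (by nlinarith))
      have a2' : |ll α fo (k + 1)| ≤ M2 / ((k:ℝ) + 1) :=
        a2.trans (div_le_div_of_nonneg_left hM2 (by positivity) (by nlinarith))
      have a3' : |rr α fe (k + 1 + 1)| ≤ M1 / ((k:ℝ) + 1) :=
        a3.trans (div_le_div_of_nonneg_left hM1 (by positivity) (by nlinarith))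
      have a4' : |ll α fo (k + 1 + 1)| ≤ M2 / ((k:ℝ) + 1) :=
        a4.trans (div_le_div_of_nonneg_left hM2 (by positivity) (by nlinarith))
      have c1 : |2 * ((k:ℝ) + 1) + 1 - t| ≤ (4 + |t|) * ((k:ℝ) + 1) := by
        rw [abs_le]; constructor <;> nlinarith [abs_nonneg t, le_abs_self t, neg_abs_le t]
      have c2 : |2 * ((k:ℝ) + 1) + 1 + t| ≤ (4 + |t|) * ((k:ℝ) + 1) := by
        rw [abs_le]; constructor <;> nlinarith [abs_nonneg t, le_abs_self t, neg_abs_le t]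
      rw [Real.norm_eq_abs, abs_mul, abs_mul, abs_two]
      calc _ ≤ 2 * |α| * ((4 + |t|) * ((k:ℝ) + 1) * (M1 / ((k:ℝ) + 1) * (M2 / ((k:ℝ) + 1))) + (4 + |t|) * ((k:ℝ) + 1) * (M1 / ((k:ℝ) + 1) * (M2 / ((k:ℝ) + 1)))) := by
            gcongr
            refine (abs_add_le _ _).trans ?_
            rw [abs_mul, abs_mul, abs_mul (2 * ((k:ℝ) + 1) + 1 + t), abs_mul (rr α fe (k + 1 + 1))]
            gcongr
        _ = _ := by field_simp; ring
    have hz : Tendsto (fun k : ℕ => (2 * |α| * (4 + |t|) * 2 * (M1 * M2)) * (1 / ((k:ℝ) + 1))) atTop (𝓝 0) := by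
      have := tendsto_one_div_add_atTop_nhds_zero_nat (𝕜 := ℝ) |>.const_mul (2 * |α| * (4 + |t|) * 2 * (M1 * M2))
      simpa using this
    exact squeeze_zero_norm hbd hz
  have hlim := (hsum.hasSum.mul_left (le - lo)).tendsto_sum_nat
  simp only [hpart] at hlim
  have hlim2 : Tendsto (fun K => T 0 - T K) atTop (𝓝 (T 0 - 0)) := tendsto_const_nhds.sub hTlim
  have := tendsto_nhds_unique hlim hlim2
  rw [this]
  simp only [hT, Nat.cast_zero, ll_zero]
  simp
  ring

/-- The normalized three-term recursion. -/
def es (ε : ℕ → ℝ) (e0 : ℝ) : ℕ → ℝ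
  | 0 => e0
  | 1 => 1
  | (k + 2) => es ε e0 (k + 1) + ε (k + 1) * es ε e0 k

lemma rec_solve (X d p : ℕ → ℝ) (c e0 : ℝ) (m : ℕ) (h0 : X 0 = c * e0) (h1 : X 1 = c * d 0)
    (hX : ∀ k, X (k + 2) = d (k + 1) * X (k + 1) + p (k + 1) * X k) (hd : ∀ k < m, d k ≠ 0) :
    ∀ k ≤ m, X k = c * (∏ i ∈ Finset.range k, d i) * es (fun k => p k / (d k * d (k - 1))) e0 k := by
  intro k
  induction k using Nat.strong_induction_on with
  | _ k ih =>
    match k with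
    | 0 => intro _; simp [es, h0]
    | 1 => intro _; simp [es, h1]
    | (k + 2) =>
      intro hk
      rw [hX, ih (k + 1) (by omega) (by omega), ih k (by omega) (by omega)]
      have d1 := hd k (by omega)
      have d2 := hd (k + 1) (by omega)
      simp only [es, Finset.prod_range_succ, Nat.add_sub_cancel]
      field_simp

def ddk (mu : ℝ) (k : ℕ) : ℝ := 4 * (k:ℝ)^2 - mu
def pp (α t : ℝ) (k : ℕ) : ℝ := 4 * α^2 * ((2 * (k:ℝ) - 1)^2 - t^2)
def epsq (α t mu : ℝ) (k : ℕ) : ℝ := pp α t k / (ddk mu k * ddk mu (k - 1))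

lemma R_formula {α t lam : ℝ} {f : ℝ → ℝ} (hf : IsPerEF (pot (-4 * α * t) (-2 * α^2)) lam f) (m : ℕ)
    (hd : ∀ k < m, ddk (lam + 2 * α^2) k ≠ 0) :
    rr α f m * ∏ i ∈ Finset.range m, (2 * α * (2 * (i:ℝ) + 1 + t)) =
      rr α f 0 / 2 * (∏ i ∈ Finset.range m, ddk (lam + 2 * α^2) i) * es (epsq α t (lam + 2 * α^2)) 2 m := by
  refine rec_solve (fun k : ℕ => rr α f k * ∏ i ∈ Finset.range k, (2 * α * (2 * (i:ℝ) + 1 + t))) (ddk (lam + 2 * α^2)) (pp α t)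
    (rr α f 0 / 2) 2 m ?_ ?_ ?_ hd m le_rfl
  · simp
  · have := rr_rec hf 0
    rw [zero_sub, rr_neg, zero_add] at this
    unfold ddk
    simp at this ⊢
    linear_combination (1/2) * this
  · intro k
    have := rr_rec hf (k + 1)
    rw [show (k:ℤ) + 1 - 1 = k by ring, show (k:ℤ) + 1 + 1 = k + 2 by ring] at this
    simp only [Finset.prod_range_succ]
    unfold ddk pp
    push_cast at this ⊢
    linear_combination (∏ i ∈ Finset.range k, (2 * α * (2 * (i:ℝ) + 1 + t))) * (2 * α * (2 * (k:ℝ) + 1 + t)) * this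

lemma L_formula {α t lam : ℝ} {f : ℝ → ℝ} (hf : IsPerEF (pot (-4 * α * t) (-2 * α^2)) lam f) (m : ℕ) (hm : 1 ≤ m)
    (hd : ∀ k < m, ddk (lam + 2 * α^2) k ≠ 0) :
    ddk (lam + 2 * α^2) 0 * (ll α f m * ∏ i ∈ Finset.range (m - 1), (-(2 * α * (2 * (i:ℝ) + 3 - t)))) =
      ll α f 1 * (∏ i ∈ Finset.range m, ddk (lam + 2 * α^2) i) * es (epsq α t (lam + 2 * α^2)) 0 m := by
  have h0 := hd 0 (by omega)
  have := rec_solve (fun k : ℕ => ll α f k * ∏ i ∈ Finset.range (k - 1), (-(2 * α * (2 * (i:ℝ) + 3 - t)))) (ddk (lam + 2 * α^2)) (pp α t)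
    (ll α f 1 / ddk (lam + 2 * α^2) 0) 0 m ?_ ?_ ?_ hd m le_rfl
  · rw [this]
    field_simp
    unfold epsq
    ring
  · simp [ll_zero]
  · simp [h0]
  · intro k
    have := ll_rec hf (k + 1)
    rw [show (k:ℤ) + 1 - 1 = k by ring, show (k:ℤ) + 1 + 1 = k + 2 by ring] at this
    rcases k with _ | k
    · simp [ll_zero] at this ⊢
      unfold ddk
      push_cast
      linear_combination this
    · simp only [Nat.add_sub_cancel, show k + 1 + 2 - 1 = k + 2 by omega, Finset.prod_range_succ]
      unfold ddk pp
      push_cast at this ⊢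
      linear_combination (∏ i ∈ Finset.range k, (-(2 * α * (2 * (i:ℝ) + 3 - t)))) * (-(2 * α * (2 * (k:ℝ) + 3 - t))) * this

/-- The exact gap formula. -/
theorem gap_exact {α t le lo : ℝ} {fe fo : ℝ → ℝ} (hfe : IsPerEF (pot (-4 * α * t) (-2 * α^2)) le fe)
    (hfo : IsPerEF (pot (-4 * α * t) (-2 * α^2)) lo fo) (m : ℕ) (hm : 1 ≤ m)
    (hde : ∀ k < m, ddk (le + 2 * α^2) k ≠ 0) (hdo : ∀ k < m, ddk (lo + 2 * α^2) k ≠ 0) :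
    (le - lo) * (∑' k : ℕ, ll α fo (k + 1) * rr α fe (k + 1)) * ((∏ i ∈ Finset.range m, ddk (le + 2 * α^2) i)
      * (∏ i ∈ Finset.range m, ddk (lo + 2 * α^2) i)) * (es (epsq α t (le + 2 * α^2)) 2 m * es (epsq α t (lo + 2 * α^2)) 0 m)
     * (-1) ^ (m - 1) = 2 * ddk (lo + 2 * α^2) 0 * (rr α fe m * ll α fo m) * ∏ i ∈ Finset.range m, pp α t (i + 1) := by
  rw [(telescope hfe hfo).2]
  have h1 := R_formula hfe m hde
  have h2 := L_formula hfo m hm hdo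
  have h3 : ∏ i ∈ Finset.range m, pp α t (i + 1) = (∏ i ∈ Finset.range m, (2 * α * (2 * (i:ℝ) + 1 + t))) *
      (2 * α * (1 - t)) * ((∏ i ∈ Finset.range (m - 1), (-(2 * α * (2 * (i:ℝ) + 3 - t)))) * (-1) ^ (m - 1)) := by
    obtain ⟨n, rfl⟩ : ∃ n, m = n + 1 := ⟨m - 1, by omega⟩
    have e1 : ∏ i ∈ Finset.range (n + 1), pp α t (i + 1) = (∏ i ∈ Finset.range (n + 1), (2 * α * (2 * (i:ℝ) + 1 + t))) *
        ∏ i ∈ Finset.range (n + 1), (2 * α * (2 * (i:ℝ) + 1 - t)) := by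
      rw [← Finset.prod_mul_distrib]
      apply Finset.prod_congr rfl
      intro i _
      unfold pp; push_cast; ring
    rw [e1, Finset.prod_range_succ' (fun i : ℕ => (2 * α * (2 * (i:ℝ) + 1 - t)))]
    simp only [Nat.add_sub_cancel]
    rw [Finset.prod_neg]
    have e2 : ∏ k ∈ Finset.range n, (2 * α * (2 * ((k + 1 : ℕ):ℝ) + 1 - t)) = ∏ i ∈ Finset.range n, (2 * α * (2 * (i:ℝ) + 3 - t)) := by
      apply Finset.prod_congr rfl
      intro i _
      push_cast; ring
    rw [e2]
    have e3 : ((-1:ℝ) ^ n) * (-1) ^ n = 1 := by rw [← mul_pow]; simp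
    simp only [Finset.card_range]
    push_cast
    linear_combination -(∏ i ∈ Finset.range (n + 1), (2 * α * (2 * (i:ℝ) + 1 + t))) * (∏ i ∈ Finset.range n, (2 * α * (2 * (i:ℝ) + 3 - t))) * (2 * α * (1 - t)) * e3
  rw [h3]
  linear_combination -2 * (2 * α * (1 - t)) * (-1) ^ (m - 1) * (ddk (lo + 2 * α^2) 0 * (ll α fo m * ∏ i ∈ Finset.range (m - 1), (-(2 * α * (2 * (i:ℝ) + 3 - t))))) * h1
    - 2 * (2 * α * (1 - t)) * (-1) ^ (m - 1) * (rr α fe 0 / 2 * (∏ i ∈ Finset.range m, ddk (le + 2 * α^2) i) * es (epsq α t (le + 2 * α^2)) 2 m) * h2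
end

section
/-- Normalized modified Bessel series. -/
def Fb (x : ℝ) (j : ℕ) : ℝ := ∑' n : ℕ, x ^ n / ((n.factorial : ℝ) * ((j + 1).ascFactorial n : ℝ))

lemma asc_succ' {n k : ℕ} : n.ascFactorial (k + 1) = n * (n + 1).ascFactorial k := by
  rw [Nat.ascFactorial_succ]; exact (Nat.succ_ascFactorial n k).symm

lemma Fb_summable {x : ℝ} (hx : 0 ≤ x) (j : ℕ) :
    Summable (fun n : ℕ => x ^ n / ((n.factorial : ℝ) * ((j + 1).ascFactorial n : ℝ))) := by
  refine Summable.of_nonneg_of_le (fun n => by positivity) (fun n => ?_) (Real.summable_pow_div_factorial x)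
  apply div_le_div_of_nonneg_left (by positivity) (by positivity)
  have : (1:ℝ) ≤ ((j + 1).ascFactorial n : ℝ) := by exact_mod_cast Nat.ascFactorial_pos _ _
  nlinarith [show (0:ℝ) < n.factorial by positivity]

lemma Fb_ge_one {x : ℝ} (hx : 0 ≤ x) (j : ℕ) : 1 ≤ Fb x j := by
  have := (Fb_summable hx j).sum_le_tsum {0} (fun n _ => by positivity)
  simpa [Fb] using this

lemma exp_series (x : ℝ) : HasSum (fun n : ℕ => x ^ n / (n.factorial : ℝ)) (exp x) := by
  have := NormedSpace.expSeries_div_hasSum_exp (𝔸 := ℝ) x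
  rwa [← Real.exp_eq_exp_ℝ] at this

lemma Fb_le {x : ℝ} (hx : 0 ≤ x) (j : ℕ) : Fb x j - 1 ≤ exp x / (j + 1) := by
  have h1 := (Fb_summable hx j).tsum_eq_zero_add
  have e : Fb x j - 1 = ∑' n : ℕ, x ^ (n + 1) / (((n + 1).factorial : ℝ) * ((j + 1).ascFactorial (n + 1) : ℝ)) := by
    unfold Fb; rw [h1]; simp
  have hs := exp_series x
  have h2 := hs.summable.tsum_eq_zero_add
  rw [hs.tsum_eq] at h2
  have hs' := (summable_nat_add_iff 1).mpr hs.summable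
  have h3 : Fb x j - 1 ≤ (∑' n : ℕ, x ^ (n + 1) / ((n + 1).factorial : ℝ)) / (j + 1) := by
    rw [e, ← tsum_div_const]
    refine Summable.tsum_le_tsum (fun n => ?_) ((summable_nat_add_iff 1).mpr (Fb_summable hx j)) (hs'.div_const _)
    rw [div_div]
    apply div_le_div_of_nonneg_left (by positivity) (by positivity)
    gcongr
    have : (j + 1) ≤ (j + 1).ascFactorial (n + 1) := by
      rw [asc_succ']
      exact Nat.le_mul_of_pos_right _ (Nat.ascFactorial_pos _ _)
    exact_mod_cast this
  refine h3.trans ?_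
  gcongr
  rw [h2]
  simp

lemma Fb_rec {x : ℝ} (hx : 0 ≤ x) (j : ℕ) :
    Fb x j = Fb x (j + 1) + x / (((j:ℝ) + 1) * (j + 2)) * Fb x (j + 2) := by
  have h0 := Fb_summable hx j
  have h1 := Fb_summable hx (j + 1)
  have h2 := Fb_summable hx (j + 2)
  have e : Fb x j - Fb x (j + 1) = ∑' n : ℕ, (x ^ n / ((n.factorial : ℝ) * ((j + 1).ascFactorial n : ℝ)) - x ^ n / ((n.factorial : ℝ) * ((j + 1 + 1).ascFactorial n : ℝ))) :=
    (h0.tsum_sub h1).symm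
  rw [(h0.sub h1).tsum_eq_zero_add] at e
  have e2 : ∀ n : ℕ, (x ^ (n + 1) / (((n + 1).factorial : ℝ) * ((j + 1).ascFactorial (n + 1) : ℝ)) - x ^ (n + 1) / (((n + 1).factorial : ℝ) * ((j + 1 + 1).ascFactorial (n + 1) : ℝ)))
      = x / (((j:ℝ) + 1) * (j + 2)) * (x ^ n / ((n.factorial : ℝ) * ((j + 2 + 1).ascFactorial n : ℝ))) := by
    intro n
    have a1 : ((j + 1).ascFactorial (n + 1) : ℝ) * (j + 2 + n) = (j + 1) * ((j + 2).ascFactorial (n + 1) : ℝ) := by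
      have h := asc_succ' (n := j + 1) (k := n + 1)
      have h' := Nat.ascFactorial_succ (n := j + 1) (k := n + 1)
      rw [h] at h'
      have : ((j + 1 : ℕ) : ℝ) * ((j + 1 + 1).ascFactorial (n + 1) : ℝ) = ((j + 1 + (n + 1) : ℕ) : ℝ) * ((j + 1).ascFactorial (n + 1) : ℝ) := by exact_mod_cast h'
      push_cast at this
      linarith
    have a2 : ((j + 2).ascFactorial (n + 1) : ℝ) = (j + 2) * ((j + 2 + 1).ascFactorial n : ℝ) := by
      have h := asc_succ' (n := j + 2) (k := n)
      exact_mod_cast h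
    have p1 : (0:ℝ) < ((j + 2 + 1).ascFactorial n : ℝ) := by positivity
    have p2 : (0:ℝ) < (n.factorial : ℝ) := by positivity
    have a3 : ((j + 1).ascFactorial (n + 1) : ℝ) = (j + 1) * ((j + 2) * ((j + 2 + 1).ascFactorial n : ℝ)) / (j + 2 + n) := by
      rw [eq_div_iff (by positivity), a1, a2]
    rw [a3, show j + 1 + 1 = j + 2 by ring, a2, Nat.factorial_succ]
    push_cast
    field_simp
    ring
  simp only [e2] at e
  rw [tsum_mul_left] at e
  simp at e
  unfold Fb at e ⊢
  linarith

/-- discrete Gronwall -/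
lemma gron (y a b : ℕ → ℝ) (c : ℝ) (m : ℕ) (ha : ∀ k < m, 0 ≤ a k) (hb : ∀ k < m, 0 ≤ b k) (hc : 0 ≤ c)
    (h1 : y 1 ≤ c) (h2 : 2 ≤ m → y 2 ≤ c + b 1) (hr : ∀ k, 1 ≤ k → k + 2 ≤ m → y (k + 2) ≤ y (k + 1) + a (k + 1) * y k + b (k + 1)) :
    ∀ k, 1 ≤ k → k ≤ m → y k ≤ (c + ∑ i ∈ Finset.range k, b i) * exp (∑ i ∈ Finset.range k, a i) := by
  intro k
  induction k using Nat.strong_induction_on with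
  | _ k ih =>
    intro hk1 hkm
    have hB : ∀ n ≤ m, 0 ≤ ∑ i ∈ Finset.range n, b i := fun n hn => Finset.sum_nonneg fun i hi => hb i (by simp at hi; omega)
    have hA : ∀ n ≤ m, 0 ≤ ∑ i ∈ Finset.range n, a i := fun n hn => Finset.sum_nonneg fun i hi => ha i (by simp at hi; omega)
    match k with
    | 0 => omega
    | 1 =>
      have := hB 1 hkm
      have h3 := Real.one_le_exp (hA 1 hkm)
      nlinarith
    | 2 =>
      have q1 := hB 1 (by omega)
      have q2 := Real.one_le_exp (hA 2 hkm)
      have q3 := h2 hkm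
      have q4 := hb 1 (by omega)
      rw [Finset.sum_range_succ b 1]
      nlinarith
    | (k + 3) =>
      have i1 := ih (k + 2) (by omega) (by omega) (by omega)
      have i0 := ih (k + 1) (by omega) (by omega) (by omega)
      have r := hr (k + 1) (by omega) (by omega)
      have qa := ha (k + 2) (by omega)
      have qb := hb (k + 2) (by omega)
      have qa1 := ha (k + 1) (by omega)
      have qb1 := hb (k + 1) (by omega)
      have B1 := hB (k + 1) (by omega)
      have A1 := hA (k + 1) (by omega)
      have i0' : y (k + 1) ≤ (c + ∑ i ∈ Finset.range (k + 2), b i) * exp (∑ i ∈ Finset.range (k + 2), a i) := by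
        refine i0.trans ?_
        rw [Finset.sum_range_succ b (k + 1), Finset.sum_range_succ a (k + 1)]
        gcongr <;> linarith
      set E := (c + ∑ i ∈ Finset.range (k + 2), b i) * exp (∑ i ∈ Finset.range (k + 2), a i) with hE
      have hE0 : 0 ≤ E := by
        have := hB (k + 2) (by omega)
        positivity
      rw [Finset.sum_range_succ b (k + 2), Finset.sum_range_succ a (k + 2), Real.exp_add]
      have e1 : 1 + a (k + 2) ≤ exp (a (k + 2)) := by linarith [Real.add_one_le_exp (a (k + 2))]
      have e2 : 1 ≤ exp (∑ i ∈ Finset.range (k + 2), a i) := Real.one_le_exp (hA (k + 2) (by omega))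
      have e3 : 1 ≤ exp (a (k + 2)) := Real.one_le_exp qa
      have e4 : 1 ≤ exp (∑ i ∈ Finset.range (k + 2), a i) * exp (a (k + 2)) := one_le_mul_of_one_le_of_one_le e2 e3
      calc y (k + 3) ≤ y (k + 2) + a (k + 2) * y (k + 1) + b (k + 2) := r
        _ ≤ E + a (k + 2) * E + b (k + 2) * 1 := by rw [mul_one]; gcongr
        _ = E * (1 + a (k + 2)) + b (k + 2) * 1 := by ring
        _ ≤ E * exp (a (k + 2)) + b (k + 2) * (exp (∑ i ∈ Finset.range (k + 2), a i) * exp (a (k + 2))) := by gcongr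
        _ = _ := by rw [hE]; ring

set_option maxHeartbeats 1000000 in
lemma eps_bound (α t D mu : ℝ) (m k : ℕ) (hD : 0 ≤ D) (hm : D ≤ m) (hk : 1 ≤ k) (hkm : k < m) (hmu : |mu - 4 * (m:ℝ)^2| ≤ D) :
    |epsq α t mu k - α^2 / (4 * ((m - k : ℝ) * (m - k + 1)))| ≤ α^2 * (96 + 16 * t^2 + 16 * D + D^2) * (1 / (m * (m - k))) := by
  obtain ⟨j, rfl⟩ : ∃ j, m = k + j := ⟨m - k, by omega⟩
  have hj : 1 ≤ j := by omega
  have hjr : (1:ℝ) ≤ j := by exact_mod_cast hj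
  have hkr : (1:ℝ) ≤ k := by exact_mod_cast hk
  unfold epsq pp ddk
  rw [Nat.cast_sub hk]
  push_cast at *
  rw [show (k:ℝ) + j - k = j by ring]
  set s := mu - 4 * ((k:ℝ) + j)^2 with hs
  have hmu' : mu = 4 * ((k:ℝ) + j)^2 + s := by rw [hs]; ring
  obtain ⟨hs1, hs2⟩ := abs_le.mp hmu
  set p := 4 * (j:ℝ) * (2 * k + j) + s with hp
  set p' := 4 * ((j:ℝ) + 1) * (2 * k + j - 1) + s with hp'
  have e1 : 4 * (k:ℝ)^2 - mu = -p := by rw [hmu', hp]; ring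
  have e2 : 4 * ((k:ℝ) - 1)^2 - mu = -p' := by rw [hmu', hp']; ring
  have pl : 2 * (j:ℝ) * (k + j) ≤ p := by rw [hp]; nlinarith
  have pl' : 2 * ((j:ℝ) + 1) * (k + j) ≤ p' := by rw [hp']; nlinarith
  have p0 : 0 < p := lt_of_lt_of_le (by positivity) pl
  have p0' : 0 < p' := lt_of_lt_of_le (by positivity) pl'
  have hid : 4 * α ^ 2 * ((2 * (k:ℝ) - 1) ^ 2 - t ^ 2) / ((4 * (k:ℝ) ^ 2 - mu) * (4 * ((k:ℝ) - 1) ^ 2 - mu)) - α ^ 2 / (4 * ((j:ℝ) * (j + 1)))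
     = α^2 * (16 * j * (j + 1) * (-2 * k + 1 - 4 * k * j - j^2 + j - t^2) - s * (4 * j * (2 * k + j) + 4 * (j + 1) * (2 * k + j - 1)) - s^2) / (4 * (j * (j + 1)) * (p * p')) := by
    rw [e1, e2, neg_mul_neg]
    field_simp
    rw [hp, hp']
    ring
  rw [hid, abs_div, abs_mul, abs_of_nonneg (sq_nonneg α), abs_of_pos (show 0 < 4 * ((j:ℝ) * (j + 1)) * (p * p') by positivity), mul_one_div]
  have hnum : |16 * (j:ℝ) * (j + 1) * (-2 * k + 1 - 4 * k * j - j^2 + j - t^2) - s * (4 * j * (2 * k + j) + 4 * (j + 1) * (2 * k + j - 1)) - s^2|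
      ≤ (96 + 16 * t^2 + 16 * D + D^2) * (j^2 * (j + 1) * (k + j)) := by
    have b1 : |(-2 * (k:ℝ) + 1 - 4 * k * j - j^2 + j - t^2)| ≤ (6 + t^2) * (j * (k + j)) := by
      have : 1 ≤ (j:ℝ) * (k + j) := by nlinarith
      have : t^2 ≤ t^2 * ((j:ℝ) * (k + j)) := le_mul_of_one_le_right (sq_nonneg t) this
      have w1 : 0 ≤ ((j:ℝ) - 1) * k := mul_nonneg (by linarith) (by linarith)
      have w2 : 0 ≤ ((j:ℝ) - 1) * j := mul_nonneg (by linarith) (by linarith)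
      have w3 := sq_nonneg t
      have w4 : 0 ≤ (j:ℝ) * k := by positivity
      rw [abs_le]; constructor <;> linarith
    have b2 : |(4 * (j:ℝ) * (2 * k + j) + 4 * (j + 1) * (2 * k + j - 1))| ≤ 16 * (j^2 * (j + 1) * (k + j)) := by
      rw [abs_of_nonneg (by have : (0:ℝ) ≤ 2 * k + j - 1 := by linarith
                            positivity)]
      have w1 : 0 ≤ (j:ℝ) * k := by positivity
      have w2 : 0 ≤ (j:ℝ) * j := by positivity
      have q1 : 4 * (j:ℝ) * (2 * k + j) + 4 * (j + 1) * (2 * k + j - 1) ≤ 16 * ((j + 1) * (k + j)) := by linarith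
      have q2 : ((j:ℝ) + 1) * (k + j) ≤ j^2 * ((j + 1) * (k + j)) := le_mul_of_one_le_left (by positivity) (by nlinarith)
      linarith
    have b3 : 1 ≤ (j:ℝ)^2 * (j + 1) * (k + j) := by
      have : 1 ≤ (j:ℝ)^2 := by nlinarith
      have : 1 ≤ (j:ℝ)^2 * (j + 1) := by nlinarith
      nlinarith
    have b4 : s^2 ≤ D^2 := sq_le_sq' hs1 hs2
    calc _ ≤ |16 * (j:ℝ) * (j + 1) * (-2 * k + 1 - 4 * k * j - j^2 + j - t^2)| + |s * (4 * j * (2 * k + j) + 4 * (j + 1) * (2 * k + j - 1))| + |s^2| := by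
            refine (abs_sub _ _).trans ?_
            gcongr
            exact abs_sub _ _
      _ = 16 * (j:ℝ) * (j + 1) * |(-2 * (k:ℝ) + 1 - 4 * k * j - j^2 + j - t^2)| + |s| * |(4 * (j:ℝ) * (2 * k + j) + 4 * (j + 1) * (2 * k + j - 1))| + s^2 := by
            rw [abs_mul, abs_mul s, abs_of_nonneg (sq_nonneg s), abs_of_nonneg (show (0:ℝ) ≤ 16 * (j:ℝ) * (j + 1) by positivity)]
      _ ≤ 16 * (j:ℝ) * (j + 1) * ((6 + t^2) * (j * (k + j))) + D * (16 * (j^2 * (j + 1) * (k + j))) + D^2 * (j^2 * (j + 1) * (k + j)) := by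
            gcongr
            exact b4.trans (le_mul_of_one_le_right (sq_nonneg D) b3)
      _ = _ := by ring
  have hden : (j:ℝ)^2 * (j + 1) * (k + j) * ((k + j) * j) ≤ 4 * (j * (j + 1)) * (p * p') := by
    have : (2 * (j:ℝ) * (k + j)) * (2 * (j + 1) * (k + j)) ≤ p * p' := by gcongr
    calc _ ≤ 4 * (j * (j + 1)) * ((2 * (j:ℝ) * (k + j)) * (2 * (j + 1) * (k + j))) := by
          have : (j:ℝ)^2 * (j + 1) * (k + j) * ((k + j) * j) ≤ (j:ℝ)^2 * (j + 1) * (k + j) * ((k + j) * j) * (16 * (1 + 1 / j)) := by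
            apply le_mul_of_one_le_right (by positivity)
            have : 0 < 1 / (j:ℝ) := by positivity
            linarith
          refine this.trans (le_of_eq ?_)
          field_simp
          ring
      _ ≤ _ := by gcongr
  rw [div_le_div_iff₀ (by positivity) (by positivity)]
  calc _ ≤ α^2 * ((96 + 16 * t^2 + 16 * D + D^2) * (j^2 * (j + 1) * (k + j))) * ((k + j) * j) := by gcongr
    _ = α^2 * (96 + 16 * t^2 + 16 * D + D^2) * ((j:ℝ)^2 * (j + 1) * (k + j) * ((k + j) * j)) := by ring
    _ ≤ _ := by gcongr

lemma sum_recip (m : ℕ) : ∑ i ∈ Finset.range m, (1:ℝ) / ((m:ℝ) - i) ≤ 1 + log m := by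
  have h := harmonic_le_one_add_log m
  refine le_trans (le_of_eq ?_) h
  unfold harmonic
  push_cast
  rw [← Finset.sum_range_reflect]
  apply Finset.sum_congr rfl
  intro i hi
  simp at hi
  rw [Nat.cast_sub (by omega), Nat.cast_sub (by omega)]
  push_cast
  rw [one_div]; congr 1; ring

lemma sum_tele (m : ℕ) : ∑ i ∈ Finset.range m, (1:ℝ) / (((m:ℝ) - i) * (m - i + 1)) ≤ 1 := by
  have : ∀ n : ℕ, ∑ i ∈ Finset.range n, (1:ℝ) / (((i:ℝ) + 1) * (i + 2)) = 1 - 1 / (n + 1) := by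
    intro n
    induction n with
    | zero => simp
    | succ n ih => rw [Finset.sum_range_succ, ih]; push_cast; field_simp; ring
  have h := this m
  have h0 : (0:ℝ) ≤ 1 / ((m:ℝ) + 1) := by positivity
  refine le_trans (le_of_eq ?_) (h.le.trans (by linarith))
  rw [← Finset.sum_range_reflect]
  apply Finset.sum_congr rfl
  intro i hi
  simp at hi
  rw [Nat.cast_sub (by omega), Nat.cast_sub (by omega)]
  push_cast
  congr 1; ring

theorem es_bound (α t D : ℝ) (hD : 0 ≤ D) : ∃ C, 0 ≤ C ∧ ∀ (m : ℕ), 2 ≤ m → D ≤ m → ∀ mu : ℝ, |mu - 4 * (m:ℝ)^2| ≤ D →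
    ∀ e0 : ℝ, 0 ≤ e0 → e0 ≤ 2 → |es (epsq α t mu) e0 m - Fb (α^2/4) 0| ≤ C * ((1 + log m) / m) := by
  set x := α^2/4 with hx
  have hx0 : 0 ≤ x := by positivity
  set K := α^2 * (96 + 16 * t^2 + 16 * D + D^2) with hK
  have hK0 : 0 ≤ K := by positivity
  set X := exp x with hX
  have hX1 : 1 ≤ X := Real.one_le_exp hx0
  have hFle : ∀ j, Fb x j ≤ 1 + X := by
    intro j
    have := Fb_le hx0 j
    have h2 : exp x / (j + 1) ≤ exp x := div_le_self (by positivity) (by have : (0:ℝ) ≤ j := Nat.cast_nonneg j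
                                                                         linarith)
    linarith
  refine ⟨(X + (3 + X) * (2 * (x + K)) + (1 + X) * K) * exp (x + K), by positivity, ?_⟩
  intro m hm hDm mu hmu e0 he0 he2
  have hm2 : (2:ℝ) ≤ m := by exact_mod_cast hm
  have hlog : 0 ≤ log m := Real.log_nonneg (by linarith)
  have hlog2 : 1 + log m ≤ m := by linarith [Real.log_le_sub_one_of_pos (show (0:ℝ) < m by linarith)]
  set ε := epsq α t mu with hε
  set om : ℕ → ℝ := fun k => x * (1 / (((m:ℝ) - k) * (m - k + 1))) with hom
  set dl : ℕ → ℝ := fun k => K / m * (1 / ((m:ℝ) - k)) with hdl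
  have hpos : ∀ k < m, (1:ℝ) ≤ (m:ℝ) - k := by
    intro k hk
    have : (k:ℝ) + 1 ≤ m := by exact_mod_cast hk
    linarith
  have hom0 : ∀ k < m, 0 ≤ om k := by
    intro k hk; have := hpos k hk; simp only [hom]; positivity
  have hdl0 : ∀ k < m, 0 ≤ dl k := by
    intro k hk; have := hpos k hk; simp only [hdl]; positivity
  have hεb : ∀ k, 1 ≤ k → k < m → |ε k - om k| ≤ dl k := by
    intro k hk hkm
    have := eps_bound α t D mu m k hD hDm hk hkm hmu
    have h1 := hpos k hkm
    have e1 : om k = α^2 / (4 * ((m - k : ℝ) * (m - k + 1))) := by simp only [hom, hx]; field_simp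
    have e2 : dl k = α^2 * (96 + 16 * t^2 + 16 * D + D^2) * (1 / (m * (m - k))) := by simp only [hdl, hK]; field_simp
    rw [e1, e2]; exact this
  have hεa : ∀ k, 1 ≤ k → k < m → |ε k| ≤ om k + dl k := by
    intro k hk hkm
    have h1 := hεb k hk hkm
    have h2 := hom0 k hkm
    calc |ε k| = |om k + (ε k - om k)| := by congr 1; ring
      _ ≤ |om k| + |ε k - om k| := abs_add_le _ _
      _ ≤ _ := by rw [abs_of_nonneg h2]; gcongr
  set e := es ε e0 with he
  set Dl : ℕ → ℝ := fun k => e k - Fb x (m - k) with hDl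
  have hrec : ∀ k, k + 2 ≤ m → Dl (k + 2) = Dl (k + 1) + ε (k + 1) * Dl k + (ε (k + 1) - om (k + 1)) * Fb x (m - k) := by
    intro k hk
    obtain ⟨n, rfl⟩ : ∃ n, m = k + 2 + n := ⟨m - (k + 2), by omega⟩
    have hF := Fb_rec hx0 n
    simp only [hDl, hom]
    have e1 : e (k + 2) = e (k + 1) + ε (k + 1) * e k := rfl
    rw [e1, show k + 2 + n - (k + 2) = n by omega, show k + 2 + n - (k + 1) = n + 1 by omega, show k + 2 + n - k = n + 2 by omega, hF]
    push_cast
    rw [show (k:ℝ) + 2 + n - (k + 1) = n + 1 by ring, show (n:ℝ) + 1 + 1 = n + 2 by ring]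
    ring
  have hbb : ∀ k, k + 2 ≤ m → |(ε (k + 1) - om (k + 1)) * Fb x (m - k)| ≤ (1 + X) * dl (k + 1) := by
    intro k hk
    rw [abs_mul, mul_comm]
    have h1 := hεb (k + 1) (by omega) (by omega)
    have h2 := Fb_ge_one hx0 (m - k)
    have h3 := hFle (m - k)
    rw [abs_of_nonneg (show 0 ≤ Fb x (m - k) by linarith)]
    gcongr
  have hD1 : |Dl 1| ≤ X / m := by
    simp only [hDl]
    have e1 : e 1 = 1 := rfl
    rw [e1, abs_sub_comm, abs_of_nonneg (by linarith [Fb_ge_one hx0 (m - 1)])]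
    have := Fb_le hx0 (m - 1)
    rw [Nat.cast_sub (by omega)] at this
    simpa using this
  have hD0 : |Dl 0| ≤ 3 + X := by
    simp only [hDl]
    have e1 : e 0 = e0 := rfl
    rw [e1, abs_le]
    have h1 := Fb_ge_one hx0 (m - 0)
    have h2 := hFle (m - 0)
    constructor <;> linarith
  have h1m : om 1 + dl 1 ≤ 2 * (x + K) / m := by
    simp only [hom, hdl]
    push_cast
    have hm1 : (0:ℝ) < (m:ℝ) - 1 := by linarith
    have q1 : 1 / (((m:ℝ) - 1) * (m - 1 + 1)) ≤ 2 / m := by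
      rw [div_le_div_iff₀ (by ring_nf; nlinarith) (by linarith)]; nlinarith
    have q2 : K / m * (1 / ((m:ℝ) - 1)) ≤ K / m * 2 := by
      gcongr
      rw [div_le_iff₀ hm1]; linarith
    calc _ ≤ x * (2 / m) + K / m * 2 := by gcongr
      _ = _ := by ring
  have key := gron (fun k => |Dl k|) (fun k => om k + dl k) (fun k => (1 + X) * dl k) (X / m + (3 + X) * (2 * (x + K) / m)) m
    (fun k hk => add_nonneg (hom0 k hk) (hdl0 k hk)) (fun k hk => mul_nonneg (by linarith) (hdl0 k hk)) (by positivity)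
    (by
      have : 0 ≤ (3 + X) * (2 * (x + K) / m) := by positivity
      linarith)
    (by
      intro _
      have := hrec 0 hm
      rw [zero_add] at this
      rw [this]
      refine (abs_add_le _ _).trans ?_
      refine add_le_add ((abs_add_le _ _).trans ?_) (hbb 0 hm)
      rw [abs_mul, mul_comm |ε (0 + 1)|]
      refine add_le_add hD1 ?_
      have := hεa 1 le_rfl (by omega)
      exact mul_le_mul hD0 (this.trans h1m) (abs_nonneg _) (by linarith))
    (by
      intro k hk hkm
      rw [hrec k hkm]
      refine (abs_add_le _ _).trans ?_
      refine add_le_add ((abs_add_le _ _).trans ?_) (hbb k hkm)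
      rw [abs_mul]
      gcongr
      exact hεa (k + 1) (by omega) (by omega))
    m (by omega) le_rfl
  have hDm' : Dl m = e m - Fb x 0 := by simp [hDl]
  simp only [hDm'] at key
  refine key.trans ?_
  have s1 := sum_recip m
  have s2 := sum_tele m
  have S2 : ∑ i ∈ Finset.range m, dl i ≤ K * ((1 + log m) / m) := by
    simp only [hdl]
    rw [← Finset.mul_sum]
    calc _ ≤ K / m * (1 + log m) := by gcongr
      _ = _ := by ring
  have S1 : ∑ i ∈ Finset.range m, om i ≤ x := by
    simp only [hom]
    rw [← Finset.mul_sum]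
    nlinarith
  have hr1 : (1 + log m) / m ≤ 1 := by rw [div_le_one (by linarith)]; exact hlog2
  have hr2 : 1 / (m:ℝ) ≤ (1 + log m) / m := by gcongr; linarith
  have T1 : ∑ i ∈ Finset.range m, (om i + dl i) ≤ x + K := by
    rw [Finset.sum_add_distrib]
    nlinarith
  have T2 : X / m + (3 + X) * (2 * (x + K) / m) + ∑ i ∈ Finset.range m, (1 + X) * dl i ≤ (X + (3 + X) * (2 * (x + K)) + (1 + X) * K) * ((1 + log m) / m) := by
    rw [← Finset.mul_sum]
    calc _ = (X + (3 + X) * (2 * (x + K))) * (1 / m) + (1 + X) * ∑ i ∈ Finset.range m, dl i := by ring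
      _ ≤ (X + (3 + X) * (2 * (x + K))) * ((1 + log m) / m) + (1 + X) * (K * ((1 + log m) / m)) := by gcongr
      _ = _ := by ring
  calc _ ≤ (X + (3 + X) * (2 * (x + K)) + (1 + X) * K) * ((1 + log m) / m) * exp (x + K) := by gcongr
    _ = _ := by ring
end

section
def Jc (n : ℕ) : ℝ := av (fun x => cos (2 * x) ^ n)

lemma Jc_zero : Jc 0 = 1 := by unfold Jc; simp [av_const]

lemma Jc_eq (n : ℕ) : Jc n = 1 / (2 * π) * ∫ x in (0:ℝ)..(2 * π), cos x ^ n := by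
  unfold Jc av
  rw [intervalIntegral.integral_comp_mul_left (fun y => cos y ^ n) (two_ne_zero)]
  simp
  ring

lemma Jc_one : Jc 1 = 0 := by rw [Jc_eq]; simp

lemma Jc_step (n : ℕ) : Jc (n + 2) = (n + 1) / (n + 2) * Jc n := by
  rw [Jc_eq, Jc_eq, integral_cos_pow]
  simp
  ring

lemma Jc_odd (n : ℕ) : Jc (2 * n + 1) = 0 := by
  induction n with
  | zero => exact Jc_one
  | succ n ih => rw [show 2 * (n + 1) + 1 = (2 * n + 1) + 2 by ring, Jc_step, ih, mul_zero]

lemma Jc_even (n : ℕ) : Jc (2 * n) / ((2 * n).factorial : ℝ) = (1 / 4) ^ n / ((n.factorial : ℝ) * (n.factorial : ℝ)) := by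
  induction n with
  | zero => simp [Jc_zero]
  | succ n ih =>
    rw [show 2 * (n + 1) = 2 * n + 2 by ring, Jc_step, Nat.factorial_succ, Nat.factorial_succ, Nat.factorial_succ]
    push_cast
    have : (0:ℝ) < (2 * n).factorial := by positivity
    have h2 : (0:ℝ) < n.factorial := by positivity
    field_simp at ih ⊢
    rw [pow_succ]
    linear_combination ((n:ℝ) + 1) * ih

theorem bessel_zero (s : ℝ) : av (fun x => exp (s * cos (2 * x))) = Fb (s^2 / 4) 0 := by
  have h : HasSum (fun n : ℕ => ∫ x in (0:ℝ)..π, (s * cos (2 * x)) ^ n / (n.factorial : ℝ)) (∫ x in (0:ℝ)..π, exp (s * cos (2 * x))) := by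
    refine intervalIntegral.hasSum_integral_of_dominated_convergence (fun n _ => |s| ^ n / (n.factorial : ℝ)) ?_ ?_ ?_ ?_ ?_
    · intro n
      exact (show Continuous (fun x => (s * cos (2 * x)) ^ n / (n.factorial : ℝ)) by fun_prop).aestronglyMeasurable
    · intro n
      refine Filter.Eventually.of_forall fun x _ => ?_
      rw [norm_div, norm_pow, norm_mul, Real.norm_eq_abs, Real.norm_eq_abs, Real.norm_natCast]
      gcongr
      exact mul_le_of_le_one_right (abs_nonneg _) (abs_cos_le_one _)
    · exact Filter.Eventually.of_forall fun x _ => Real.summable_pow_div_factorial _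
    · exact continuous_const.intervalIntegrable _ _
    · exact Filter.Eventually.of_forall fun x _ => exp_series _
  have h1 := h.mul_left (1 / π)
  have e1 : ∀ n : ℕ, (1 / π) * ∫ x in (0:ℝ)..π, (s * cos (2 * x)) ^ n / (n.factorial : ℝ) = s ^ n * (Jc n / (n.factorial : ℝ)) := by
    intro n
    have : (fun x => (s * cos (2 * x)) ^ n / (n.factorial : ℝ)) = fun x => (s ^ n / (n.factorial : ℝ)) * cos (2 * x) ^ n := by
      ext x; rw [mul_pow]; ring
    rw [this, intervalIntegral.integral_const_mul]
    unfold Jc av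
    ring
  simp only [e1] at h1
  have hinj : Function.Injective (fun n : ℕ => 2 * n) := fun a b h => by simpa using h
  rw [← hinj.hasSum_iff] at h1
  · unfold av Fb
    rw [← h1.tsum_eq]
    congr 1
    ext n
    simp only [Function.comp]
    rw [Jc_even, zero_add, Nat.one_ascFactorial, pow_mul, div_pow, div_pow]
    ring
  · intro n hn
    rcases Nat.even_or_odd' n with ⟨k, rfl | rfl⟩
    · exact absurd ⟨k, rfl⟩ hn
    · rw [Jc_odd]; simp

lemma av_mul_le {g w : ℝ → ℝ} (hg : Continuous g) (hw : Continuous w) {N : ℝ} (hN : 0 < N) :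
    |av (fun x => g x * w x)| ≤ (N * av (fun x => g x ^ 2) + 1 / N * av (fun x => w x ^ 2)) / 2 := by
  have e : (N * av (fun x => g x ^ 2) + 1 / N * av (fun x => w x ^ 2)) / 2 = av (fun x => (1/2) * (N * g x ^ 2 + 1 / N * w x ^ 2)) := by
    rw [av_smul, av_add (by fun_prop) (by fun_prop), av_smul, av_smul]; ring
  have key : ∀ a b : ℝ, |a * b| ≤ (1/2) * (N * a ^ 2 + 1 / N * b ^ 2) := by
    intro a b
    have h1 : 0 ≤ (1 / N) * (N * |a| - |b|) ^ 2 := by positivity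
    have h2 : (1 / N) * (N * |a| - |b|) ^ 2 = N * a ^ 2 + 1 / N * b ^ 2 - 2 * |a * b| := by
      rw [abs_mul, ← sq_abs a, ← sq_abs b]; field_simp; ring
    linarith
  rw [e, abs_le]
  constructor
  · rw [← neg_one_mul, ← av_smul]
    exact av_mono (by fun_prop) (by fun_prop) (fun x => by linarith [(abs_le.mp (key (g x) (w x))).1])
  · exact av_mono (by fun_prop) (by fun_prop) (fun x => (abs_le.mp (key (g x) (w x))).2)

def Ex (s x : ℝ) : ℝ := exp (s * cos (2 * x))

@[fun_prop]
lemma continuous_Ex (s : ℝ) : Continuous (Ex s) := by unfold Ex; fun_prop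

lemma Ex_pos (s x : ℝ) : 0 < Ex s x := exp_pos _

lemma Ex_le (s x : ℝ) : Ex s x ≤ exp |s| := by
  apply exp_le_exp.mpr
  calc s * cos (2 * x) ≤ |s * cos (2 * x)| := le_abs_self _
    _ = |s| * |cos (2 * x)| := abs_mul _ _
    _ ≤ |s| := mul_le_of_le_one_right (abs_nonneg _) (abs_cos_le_one _)

lemma Ex_coef (s : ℝ) : ∃ B, 0 ≤ B ∧ ∀ k : ℤ, |Ac (Ex s) k| ≤ B * (1 / (1 + (k:ℝ)^2)) := by
  obtain ⟨M, hM, h⟩ := decay_cos (F := Ex s) (by unfold Ex; fun_prop) (exp_cos_per s)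
  refine ⟨M + exp |s|, by positivity, fun k => ?_⟩
  rw [mul_one_div, le_div_iff₀ (by positivity)]
  have h1 := (h k).1
  have h2 : |Ac (Ex s) k| ≤ exp |s| := av_abs_le (by fun_prop) (fun x => by
    rw [abs_mul, abs_of_pos (Ex_pos s x)]
    calc _ ≤ exp |s| * 1 := by gcongr; exact Ex_le s x; exact abs_cos_le_one _
      _ = _ := mul_one _)
  change (k:ℝ)^2 * |Ac (Ex s) k| ≤ M at h1
  linarith

lemma sq_bound {g w : ℝ → ℝ} (hg : Continuous g) (hw : Continuous w) {B : ℝ} (hB : ∀ x, |w x| ≤ B) :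
    av (fun x => (g x * w x) ^ 2) ≤ B ^ 2 * av (fun x => g x ^ 2) := by
  rw [← av_smul]
  refine av_mono (by fun_prop) (by fun_prop) (fun x => ?_)
  rw [mul_pow, mul_comm]
  have : w x ^ 2 ≤ B ^ 2 := by
    rw [← sq_abs]
    exact pow_le_pow_left₀ (abs_nonneg _) (hB x) 2
  exact mul_le_mul_of_nonneg_right this (sq_nonneg _)

lemma Ac_cos (s : ℝ) (m k : ℤ) : Ac (fun x => cos (2 * m * x) * Ex s x) k = (Ac (Ex s) (k - m) + Ac (Ex s) (k + m)) / 2 := by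
  have : (fun x => cos (2 * m * x) * Ex s x * cos (2 * k * x)) = fun x => (1/2) * (Ex s x * cos (2 * ((k - m : ℤ):ℝ) * x) + Ex s x * cos (2 * ((k + m : ℤ) : ℝ) * x)) := by
    ext x
    push_cast
    rw [show 2 * ((k:ℝ) - m) * x = 2 * k * x - 2 * m * x by ring, show 2 * ((k:ℝ) + m) * x = 2 * k * x + 2 * m * x by ring, cos_sub, cos_add]
    ring
  unfold Ac
  rw [this, av_smul, av_add (by fun_prop) (by fun_prop)]
  ring

lemma Bc_sin (s : ℝ) (m k : ℤ) : Bc (fun x => sin (2 * m * x) * Ex s x) k = (Ac (Ex s) (k - m) - Ac (Ex s) (k + m)) / 2 := by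
  have : (fun x => sin (2 * m * x) * Ex s x * sin (2 * k * x)) = fun x => (1/2) * (Ex s x * cos (2 * ((k - m : ℤ):ℝ) * x) - Ex s x * cos (2 * ((k + m : ℤ) : ℝ) * x)) := by
    ext x
    push_cast
    rw [show 2 * ((k:ℝ) - m) * x = 2 * k * x - 2 * m * x by ring, show 2 * ((k:ℝ) + m) * x = 2 * k * x + 2 * m * x by ring, cos_sub, cos_add]
    ring
  unfold Ac Bc
  rw [this, av_smul, av_sub (by fun_prop) (by fun_prop)]
  ring

lemma rr_split (α : ℝ) {f : ℝ → ℝ} (hf : Continuous f) (m : ℕ) (k : ℤ) :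
    rr α f k = (Ac (Ex (-α)) (k - m) + Ac (Ex (-α)) (k + m)) / 2 + Ac (fun x => (f x - cos (2 * m * x)) * Ex (-α) x) k := by
  have h := Ac_cos (-α) m k
  rw [← h]
  unfold rr Ac
  rw [← av_add (by fun_prop) (by fun_prop)]
  congr 1; ext x; unfold Ex; push_cast; ring

lemma ll_split (α : ℝ) {f : ℝ → ℝ} (hf : Continuous f) (m : ℕ) (k : ℤ) :
    ll α f k = (Ac (Ex α) (k - m) - Ac (Ex α) (k + m)) / 2 + Bc (fun x => (f x - sin (2 * m * x)) * Ex α x) k := by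
  have h := Bc_sin α m k
  rw [← h]
  unfold ll Bc
  rw [← av_add (by fun_prop) (by fun_prop)]
  congr 1; ext x; unfold Ex; push_cast; ring

lemma Ac_zero_Ex (s : ℝ) : Ac (Ex s) 0 = Fb (s^2/4) 0 := by
  rw [← bessel_zero]; unfold Ac Ex; simp

lemma err_small (s V : ℝ) {g w : ℝ → ℝ} (hg : Continuous g) (hw : Continuous w) (hw1 : ∀ x, |w x| ≤ 1) (m : ℕ) (hm : 1 ≤ m)
    (h : av (fun x => g x ^ 2) ≤ V ^ 2 / (4 * m ^ 2)) :
    |av (fun x => g x * Ex s x * w x)| ≤ (V ^ 2 + (exp |s|) ^ 2) / m := by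
  have hm0 : (0:ℝ) < m := by exact_mod_cast hm
  have h1 := av_mul_le hg (show Continuous (fun x => Ex s x * w x) by fun_prop) hm0
  have h2 : av (fun x => (Ex s x * w x) ^ 2) ≤ (exp |s|) ^ 2 := by
    rw [← av_const ((exp |s|) ^ 2)]
    refine av_mono (by fun_prop) (by fun_prop) (fun x => ?_)
    rw [← sq_abs]
    refine pow_le_pow_left₀ (abs_nonneg _) ?_ 2
    rw [abs_mul, abs_of_pos (Ex_pos s x)]
    calc _ ≤ exp |s| * 1 := by gcongr; exact Ex_le s x; exact hw1 x
      _ = _ := mul_one _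
  simp only [mul_assoc]
  refine h1.trans ?_
  calc _ ≤ ((m:ℝ) * (V ^ 2 / (4 * m ^ 2)) + 1 / m * (exp |s|) ^ 2) / 2 := by gcongr
    _ ≤ _ := by
      have : 0 ≤ V^2 / m := by positivity
      have : 0 ≤ exp |s| ^ 2 / m := by positivity
      have e : (m:ℝ) * (V ^ 2 / (4 * m ^ 2)) = V ^ 2 / m / 4 := by field_simp
      rw [e, add_div (V ^ 2)]
      have e2 : 1 / (m:ℝ) * (exp |s|) ^ 2 = exp |s| ^ 2 / m := by ring
      rw [e2]
      linarith

lemma coef_2m (s B : ℝ) (hB : 0 ≤ B) (h : ∀ k : ℤ, |Ac (Ex s) k| ≤ B * (1 / (1 + (k:ℝ)^2))) (m : ℕ) (hm : 1 ≤ m) :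
    |Ac (Ex s) (m + m)| ≤ B / m := by
  have hm0 : (1:ℝ) ≤ m := by exact_mod_cast hm
  refine (h _).trans ?_
  rw [mul_one_div]
  push_cast
  apply div_le_div_of_nonneg_left hB (by linarith)
  nlinarith

theorem rr_main (α V : ℝ) : ∃ C, 0 ≤ C ∧ ∀ (m : ℕ), 1 ≤ m → ∀ f : ℝ → ℝ, Continuous f →
    av (fun x => (f x - cos (2 * m * x)) ^ 2) ≤ V ^ 2 / (4 * m ^ 2) → |rr α f m - Fb (α^2/4) 0 / 2| ≤ C / m := by
  obtain ⟨B, hB, hb⟩ := Ex_coef (-α)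
  refine ⟨B + (V ^ 2 + (exp |-α|) ^ 2), by positivity, ?_⟩
  intro m hm f hf h
  have h1 := err_small (-α) V (show Continuous (fun x => f x - cos (2 * m * x)) by fun_prop)
    (show Continuous (fun x => cos (2 * ((m:ℤ):ℝ) * x)) by fun_prop) (fun x => abs_cos_le_one _) m hm h
  have h2 := coef_2m (-α) B hB hb m hm
  have hm0 : (1:ℝ) ≤ m := by exact_mod_cast hm
  rw [rr_split α hf m m, sub_self, Ac_zero_Ex, neg_sq]
  change |Ac (fun x => (f x - cos (2 * m * x)) * Ex (-α) x) m| ≤ _ at h1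
  rw [add_div B, show ∀ a b c : ℝ, (a + b) / 2 + c - a / 2 = b / 2 + c by intros; ring]
  refine (abs_add_le _ _).trans ?_
  refine add_le_add ?_ h1
  rw [abs_div, abs_two]
  have := abs_nonneg (Ac (Ex (-α)) (m + m))
  linarith

theorem ll_main (α V : ℝ) : ∃ C, 0 ≤ C ∧ ∀ (m : ℕ), 1 ≤ m → ∀ f : ℝ → ℝ, Continuous f →
    av (fun x => (f x - sin (2 * m * x)) ^ 2) ≤ V ^ 2 / (4 * m ^ 2) → |ll α f m - Fb (α^2/4) 0 / 2| ≤ C / m := by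
  obtain ⟨B, hB, hb⟩ := Ex_coef α
  refine ⟨B + (V ^ 2 + (exp |α|) ^ 2), by positivity, ?_⟩
  intro m hm f hf h
  have h1 := err_small α V (show Continuous (fun x => f x - sin (2 * m * x)) by fun_prop)
    (show Continuous (fun x => sin (2 * ((m:ℤ):ℝ) * x)) by fun_prop) (fun x => abs_sin_le_one _) m hm h
  have h2 := coef_2m α B hB hb m hm
  have hm0 : (1:ℝ) ≤ m := by exact_mod_cast hm
  rw [ll_split α hf m m, sub_self, Ac_zero_Ex]
  change |Bc (fun x => (f x - sin (2 * m * x)) * Ex α x) m| ≤ _ at h1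
  rw [add_div B, show ∀ a b c : ℝ, (a - b) / 2 + c - a / 2 = -b / 2 + c by intros; ring]
  refine (abs_add_le _ _).trans ?_
  refine add_le_add ?_ h1
  rw [abs_div, abs_neg, abs_two]
  have := abs_nonneg (Ac (Ex α) (m + m))
  linarith

lemma two_mul_le (N a b : ℝ) (hN : 0 < N) : |a * b| ≤ N * a ^ 2 + 1 / N * b ^ 2 := by
  have h1 : 0 ≤ (1 / N) * (N * |a| - |b|) ^ 2 := by positivity
  have h2 : (1 / N) * (N * |a| - |b|) ^ 2 = N * a ^ 2 + 1 / N * b ^ 2 - 2 * |a * b| := by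
    rw [abs_mul, ← sq_abs a, ← sq_abs b]; field_simp; ring
  have := abs_nonneg (a * b)
  linarith

/-- Main part of the product sum. -/
lemma main_prod (bp bm : ℤ → ℝ) (B : ℝ) (hB : 0 ≤ B) (hp : ∀ k, |bp k| ≤ B * (1 / (1 + (k:ℝ)^2)))
    (hm : ∀ k, |bm k| ≤ B * (1 / (1 + (k:ℝ)^2))) (m : ℕ) (h1 : 1 ≤ m) (k : ℤ) :
    |(if 1 ≤ k then (bp (k - m) - bp (k + m)) / 2 * ((bm (k - m) + bm (k + m)) / 2) else 0) - (1/4) * (bm (k - m) * bp (k - m))|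
      ≤ B ^ 2 / m * (1 / (1 + ((k - m : ℤ):ℝ)^2)) := by
  have hm0 : (1:ℝ) ≤ m := by exact_mod_cast h1
  set W := 1 / (1 + ((k - m : ℤ):ℝ)^2) with hW
  have hW0 : 0 ≤ W := by positivity
  have p1 := hp (k - m)
  have m1 := hm (k - m)
  split_ifs with hk
  · have hk1 : (1:ℝ) ≤ k := by exact_mod_cast hk
    have q1 : 1 / (1 + ((k + m : ℤ):ℝ)^2) ≤ 1 / m := by
      apply one_div_le_one_div_of_le (by linarith)
      push_cast; nlinarith
    have q2 : 1 / (1 + ((k + m : ℤ):ℝ)^2) ≤ W := by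
      apply one_div_le_one_div_of_le (by positivity)
      push_cast; nlinarith
    have p2 : |bp (k + m)| ≤ B * (1 / m) := (hp _).trans (by gcongr)
    have m2 : |bm (k + m)| ≤ B * (1 / m) := (hm _).trans (by gcongr)
    have m3 : |bm (k + m)| ≤ B * W := (hm _).trans (by gcongr)
    have e : (bp (k - m) - bp (k + m)) / 2 * ((bm (k - m) + bm (k + m)) / 2) - (1/4) * (bm (k - m) * bp (k - m)) =
        (1/4) * (bp (k - m) * bm (k + m) + -(bp (k + m) * bm (k - m)) + -(bp (k + m) * bm (k + m))) := by ring
    rw [e, abs_mul]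
    calc _ ≤ |(1/4:ℝ)| * (|bp (k - m)| * |bm (k + m)| + |bp (k + m)| * |bm (k - m)| + |bp (k + m)| * |bm (k + m)|) := by
          gcongr
          refine (abs_add_three _ _ _).trans ?_
          rw [abs_neg, abs_neg, abs_mul, abs_mul, abs_mul]
      _ ≤ |(1/4:ℝ)| * (B * W * (B * (1 / m)) + B * (1 / m) * (B * W) + B * (1 / m) * (B * W)) := by gcongr
      _ = 3/4 * (B^2 / m * W) := by rw [abs_of_pos (by norm_num)]; ring
      _ ≤ _ := by
        have : 0 ≤ B^2 / m * W := by positivity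
        linarith
  · have hk1 : (k:ℝ) ≤ 0 := by exact_mod_cast (by omega : k ≤ 0)
    have q1 : W ≤ 1 / m := by
      apply one_div_le_one_div_of_le (by linarith)
      push_cast; nlinarith
    rw [zero_sub, abs_neg, abs_mul, abs_mul]
    calc _ ≤ |(1/4:ℝ)| * (B * W * (B * W)) := by gcongr
      _ ≤ |(1/4:ℝ)| * (B * W * (B * (1 / m))) := by gcongr
      _ = 1/4 * (B^2 / m * W) := by rw [abs_of_pos (by norm_num)]; ring
      _ ≤ _ := by
        have : 0 ≤ B^2 / m * W := by positivity
        linarith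

theorem S_main (α V : ℝ) : ∃ C, 0 ≤ C ∧ ∀ (m : ℕ), 1 ≤ m → ∀ fe fo : ℝ → ℝ, Continuous fe → Continuous fo →
    av (fun x => (fe x - cos (2 * m * x)) ^ 2) ≤ V ^ 2 / (4 * m ^ 2) →
    av (fun x => (fo x - sin (2 * m * x)) ^ 2) ≤ V ^ 2 / (4 * m ^ 2) →
    Summable (fun k : ℕ => ll α fo (k + 1) * rr α fe (k + 1)) →
    |∑' k : ℕ, ll α fo (k + 1) * rr α fe (k + 1) - 1 / 4| ≤ C / m := by
  obtain ⟨B1, hB1, hb1⟩ := Ex_coef (-α)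
  obtain ⟨B2, hB2, hb2⟩ := Ex_coef α
  set B := B1 + B2 with hBd
  have hB : 0 ≤ B := by positivity
  have hbm : ∀ k : ℤ, |Ac (Ex (-α)) k| ≤ B * (1 / (1 + (k:ℝ)^2)) := fun k => (hb1 k).trans (by gcongr; linarith)
  have hbp : ∀ k : ℤ, |Ac (Ex α) k| ≤ B * (1 / (1 + (k:ℝ)^2)) := fun k => (hb2 k).trans (by gcongr; linarith)
  set W := ∑' k : ℤ, (1:ℝ) / (1 + (k:ℝ)^2) with hW
  have hW0 : 0 ≤ W := tsum_nonneg fun k => by positivity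
  set X := exp |α| with hX
  refine ⟨B ^ 2 * W + 4 * (X ^ 2 * V ^ 2 + X ^ 2), by positivity, ?_⟩
  intro m hm fe fo hfe hfo he ho hsum
  have hm0 : (1:ℝ) ≤ m := by exact_mod_cast hm
  set g1 : ℝ → ℝ := fun x => (fe x - cos (2 * m * x)) * Ex (-α) x with hg1
  set g2 : ℝ → ℝ := fun x => (fo x - sin (2 * m * x)) * Ex α x with hg2
  set g3 : ℝ → ℝ := fun x => cos (2 * ((m:ℤ):ℝ) * x) * Ex (-α) x with hg3
  set g4 : ℝ → ℝ := fun x => sin (2 * ((m:ℤ):ℝ) * x) * Ex α x with hg4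
  have c1 : Continuous g1 := by fun_prop
  have c2 : Continuous g2 := by fun_prop
  have c3 : Continuous g3 := by fun_prop
  have c4 : Continuous g4 := by fun_prop
  have P1 := parseval_aux c1
  have P2 := parseval_aux c2
  have P3 := parseval_aux c3
  have P4 := parseval_aux c4
  have xe1 : ∀ x, |Ex (-α) x| ≤ X := fun x => by rw [abs_of_pos (Ex_pos _ _)]; have := Ex_le (-α) x; rwa [abs_neg] at this
  have xe2 : ∀ x, |Ex α x| ≤ X := fun x => by rw [abs_of_pos (Ex_pos _ _)]; exact Ex_le α x
  have n1 : av (fun x => g1 x ^ 2) ≤ X ^ 2 * (V ^ 2 / (4 * m ^ 2)) :=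
    (sq_bound (by fun_prop) (by fun_prop) xe1).trans (by gcongr)
  have n2 : av (fun x => g2 x ^ 2) ≤ X ^ 2 * (V ^ 2 / (4 * m ^ 2)) :=
    (sq_bound (by fun_prop) (by fun_prop) xe2).trans (by gcongr)
  have n3 : av (fun x => g3 x ^ 2) ≤ X ^ 2 * 1 := by
    refine (sq_bound (by fun_prop) (by fun_prop) xe1).trans ?_
    gcongr
    rw [← av_const 1]
    exact av_mono (by fun_prop) (by fun_prop) (fun x => cos_sq_le_one _)
  have n4 : av (fun x => g4 x ^ 2) ≤ X ^ 2 * 1 := by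
    refine (sq_bound (by fun_prop) (by fun_prop) xe2).trans ?_
    gcongr
    rw [← av_const 1]
    exact av_mono (by fun_prop) (by fun_prop) (fun x => sin_sq_le_one _)
  -- main sum
  have Pm : HasSum (fun k : ℤ => Ac (Ex (-α)) k * Ac (Ex α) k) 1 := by
    have := parseval (continuous_Ex (-α)) (continuous_Ex α)
    have e : (fun x => Ex (-α) x * Ex α x) = fun _ => 1 := by
      ext x; unfold Ex; rw [← Real.exp_add]; simp
    rw [e, av_const] at this
    refine hs_congr this fun k => ?_
    have hBz : ∀ s, Bc (Ex s) k = 0 := fun s => Bc_even (f := Ex s) (exp_cos_per s) (fun x => by unfold Ex; simp) k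
    rw [Hc_eq (continuous_Ex _), Hc_eq (continuous_Ex _), hBz, hBz]
    ring
  have Pm' : HasSum (fun k : ℤ => (1/4) * (Ac (Ex (-α)) (k - m) * Ac (Ex α) (k - m))) (1/4) := by
    have := ((Equiv.subRight (m:ℤ)).hasSum_iff.mpr Pm).mul_left (1/4)
    simpa using this
  have Pw : HasSum (fun k : ℤ => B ^ 2 / m * (1 / (1 + ((k - m : ℤ):ℝ)^2))) (B ^ 2 / m * W) := by
    have := ((Equiv.subRight (m:ℤ)).hasSum_iff.mpr summable_weight.hasSum).mul_left (B ^ 2 / m)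
    exact this
  set h : ℤ → ℝ := fun k => if 1 ≤ k then ll α fo k * rr α fe k else 0 with hh
  have hS : HasSum h (∑' k : ℕ, ll α fo (k + 1) * rr α fe (k + 1)) := by
    have hinj : Function.Injective (fun n : ℕ => (n:ℤ) + 1) := fun a b h => by simpa using h
    rw [← hinj.hasSum_iff]
    · refine hs_congr hsum.hasSum fun k => ?_
      simp only [hh, Function.comp]
      rw [if_pos (by omega)]
    · intro k hk
      simp only [hh]
      rw [if_neg]
      intro h1
      exact hk ⟨(k - 1).toNat, by simp; omega⟩
  have hdiff := hS.sub Pm'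
  have hbound : ∀ k : ℤ, ‖h k - (1/4) * (Ac (Ex (-α)) (k - m) * Ac (Ex α) (k - m))‖ ≤
      B ^ 2 / m * (1 / (1 + ((k - m : ℤ):ℝ)^2)) + (m * (Ac g2 k ^ 2 + Bc g2 k ^ 2) + 1 / m * (Ac g3 k ^ 2 + Bc g3 k ^ 2))
       + (m * (Ac g1 k ^ 2 + Bc g1 k ^ 2) + 1 / m * (Ac g4 k ^ 2 + Bc g4 k ^ 2)) + ((Ac g2 k ^ 2 + Bc g2 k ^ 2) + (Ac g1 k ^ 2 + Bc g1 k ^ 2)) := by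
    intro k
    have hmain := main_prod (Ac (Ex α)) (Ac (Ex (-α))) B hB hbp hbm m hm k
    have hr := rr_split α hfe m k
    have hl := ll_split α hfo m k
    have h3 : Ac g3 k = (Ac (Ex (-α)) (k - m) + Ac (Ex (-α)) (k + m)) / 2 := Ac_cos (-α) m k
    have h4 : Bc g4 k = (Ac (Ex α) (k - m) - Ac (Ex α) (k + m)) / 2 := Bc_sin α m k
    rw [← h3, ← h4] at hmain
    rw [← h3] at hr
    rw [← h4] at hl
    change rr α fe k = Ac g3 k + Ac g1 k at hr
    change ll α fo k = Bc g4 k + Bc g2 k at hl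
    rw [Real.norm_eq_abs]
    have z1 := sq_nonneg (Ac g1 k)
    have z2 := sq_nonneg (Ac g2 k)
    have z3 := sq_nonneg (Ac g3 k)
    have z4 := sq_nonneg (Ac g4 k)
    have y1 := sq_nonneg (Bc g1 k)
    have y2 := sq_nonneg (Bc g2 k)
    have y3 := sq_nonneg (Bc g3 k)
    have y4 := sq_nonneg (Bc g4 k)
    have t1 := two_mul_le m (Bc g2 k) (Ac g3 k) (by linarith)
    have t2 := two_mul_le m (Ac g1 k) (Bc g4 k) (by linarith)
    have t3 := two_mul_le 1 (Bc g2 k) (Ac g1 k) one_pos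
    have u1 : 1 / (m:ℝ) * (Bc g3 k)^2 ≥ 0 := by positivity
    have u2 : 1 / (m:ℝ) * (Ac g4 k)^2 ≥ 0 := by positivity
    have u3 : (m:ℝ) * (Ac g2 k)^2 ≥ 0 := by positivity
    have u4 : (m:ℝ) * (Bc g1 k)^2 ≥ 0 := by positivity
    have hE : |h k - (1/4) * (Ac (Ex (-α)) (k - m) * Ac (Ex α) (k - m))| ≤ B ^ 2 / m * (1 / (1 + ((k - m : ℤ):ℝ)^2))
        + |Bc g2 k * Ac g3 k| + |Ac g1 k * Bc g4 k| + |Bc g2 k * Ac g1 k| := by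
      simp only [hh]
      split_ifs at hmain ⊢ with hk
      · rw [hr, hl]
        have e : (Bc g4 k + Bc g2 k) * (Ac g3 k + Ac g1 k) - 1 / 4 * (Ac (Ex (-α)) (k - m) * Ac (Ex α) (k - m)) =
          (Bc g4 k * Ac g3 k - 1 / 4 * (Ac (Ex (-α)) (k - m) * Ac (Ex α) (k - m))) + Bc g2 k * Ac g3 k + Ac g1 k * Bc g4 k + Bc g2 k * Ac g1 k := by ring
        rw [e]
        refine (abs_add_le _ _).trans ?_
        gcongr
        refine (abs_add_three _ _ _).trans ?_
        gcongr
      · have := abs_nonneg (Bc g2 k * Ac g3 k)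
        have := abs_nonneg (Ac g1 k * Bc g4 k)
        have := abs_nonneg (Bc g2 k * Ac g1 k)
        linarith
    refine hE.trans ?_
    linarith
  have hT := ((Pw.add ((P2.mul_left (m:ℝ)).add (P3.mul_left (1/(m:ℝ))))).add ((P1.mul_left (m:ℝ)).add (P4.mul_left (1/(m:ℝ))))).add (P2.add P1)
  have := tsum_of_norm_bounded hT hbound
  rw [hdiff.tsum_eq, Real.norm_eq_abs] at this
  refine this.trans ?_
  have f1 : X ^ 2 * (V ^ 2 / (4 * (m:ℝ) ^ 2)) ≤ X ^ 2 * V ^ 2 / m * (1 / m) := by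
    rw [show X ^ 2 * V ^ 2 / (m:ℝ) * (1 / m) = X ^ 2 * (V ^ 2 / (1 * (m:ℝ) ^ 2)) by field_simp]
    gcongr
    norm_num
  have f2 : X ^ 2 * V ^ 2 / (m:ℝ) * (1 / m) ≤ X ^ 2 * V ^ 2 / m := by
    apply mul_le_of_le_one_right (by positivity)
    rw [div_le_one (by linarith)]; exact hm0
  have f3 : (m:ℝ) * (X ^ 2 * V ^ 2 / (m:ℝ) * (1 / m)) = X ^ 2 * V ^ 2 / m := by field_simp
  calc _ ≤ B ^ 2 / m * W + (m * (X ^ 2 * V ^ 2 / (m:ℝ) * (1 / m)) + 1 / m * (X ^ 2 * 1)) + (m * (X ^ 2 * V ^ 2 / (m:ℝ) * (1 / m)) + 1 / m * (X ^ 2 * 1)) + (X ^ 2 * V ^ 2 / m + X ^ 2 * V ^ 2 / m) := by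
        gcongr
        · exact n2.trans f1
        · exact n1.trans f1
        · exact n2.trans (f1.trans f2)
        · exact n1.trans (f1.trans f2)
    _ ≤ _ := by
      rw [f3, show (B ^ 2 * W + 4 * (X ^ 2 * V ^ 2 + X ^ 2)) / (m:ℝ) = B ^ 2 / m * W + 4 * (X ^ 2 * V ^ 2 / m) + 4 * (1 / m * (X ^ 2 * 1)) by ring]
      have : 0 ≤ 1 / (m:ℝ) * (X ^ 2 * 1) := by positivity
      linarith
end

section
lemma exp_sub_one_le (y Y : ℝ) (h0 : 0 ≤ y) (hY : y ≤ Y) : exp y - 1 ≤ y * exp Y := by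
  have h1 := Real.add_one_le_exp (-y)
  have h2 : exp y * exp (-y) = 1 := by rw [← Real.exp_add]; simp
  have h3 := Real.exp_pos y
  have h4 : exp y ≤ exp Y := exp_le_exp.mpr hY
  nlinarith

def Gm (m : ℕ) : ℝ := ∏ i ∈ Finset.range (m - 1), (4 * (m:ℝ)^2 - 4 * ((i:ℝ) + 1)^2)
def Qm (mu : ℝ) (m : ℕ) : ℝ := ∏ i ∈ Finset.range (m - 1), ((mu - 4 * ((i:ℝ) + 1)^2) / (4 * (m:ℝ)^2 - 4 * ((i:ℝ) + 1)^2))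

lemma Gfac_pos {m i : ℕ} (hi : i < m - 1) : 4 * (m:ℝ) * (m - (i + 1)) ≤ 4 * (m:ℝ)^2 - 4 * ((i:ℝ) + 1)^2 ∧ (1:ℝ) ≤ m - (i + 1) ∧ (1:ℝ) ≤ m := by
  have h1 : (i:ℝ) + 2 ≤ m := by exact_mod_cast (by omega : i + 2 ≤ m)
  have h0 : (0:ℝ) ≤ i := Nat.cast_nonneg i
  refine ⟨by nlinarith, by linarith, by linarith⟩

lemma Gfac_ne {m i : ℕ} (hi : i < m - 1) : (0:ℝ) < 4 * (m:ℝ)^2 - 4 * ((i:ℝ) + 1)^2 := by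
  obtain ⟨h1, h2, h3⟩ := Gfac_pos hi
  have : (0:ℝ) < 4 * (m:ℝ) * (m - (i + 1)) := by positivity
  linarith

lemma Q_bound (D : ℝ) (hD : 0 ≤ D) (m : ℕ) (hm : 1 ≤ m) (mu : ℝ) (hmu : |mu - 4 * (m:ℝ)^2| ≤ D) :
    |Qm mu m - 1| ≤ (D * exp D) * ((1 + log m) / m) := by
  have hm0 : (1:ℝ) ≤ m := by exact_mod_cast hm
  have hlog : 0 ≤ log m := Real.log_nonneg hm0
  have hlog2 : 1 + log m ≤ m := by linarith [Real.log_le_sub_one_of_pos (show (0:ℝ) < m by linarith)]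
  set x : ℕ → ℝ := fun i => (mu - 4 * (m:ℝ)^2) / (4 * (m:ℝ)^2 - 4 * ((i:ℝ) + 1)^2) with hx
  have e : Qm mu m = ∏ i ∈ Finset.range (m - 1), (1 + x i) := by
    unfold Qm
    apply Finset.prod_congr rfl
    intro i hi
    have := (Gfac_ne (Finset.mem_range.mp hi)).ne'
    simp only [hx]
    rw [eq_comm, one_add_div this]
    congr 1; ring
  have h1 := Finset.norm_prod_one_add_sub_one_le (Finset.range (m - 1)) x
  rw [← e, Real.norm_eq_abs] at h1
  have h2 : ∑ i ∈ Finset.range (m - 1), ‖x i‖ ≤ D * ((1 + log m) / m) := by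
    calc _ ≤ ∑ i ∈ Finset.range (m - 1), (D / m) * (1 / ((m:ℝ) - ((i + 1 : ℕ) : ℝ))) := by
          apply Finset.sum_le_sum
          intro i hi
          obtain ⟨g1, g2, g3⟩ := Gfac_pos (Finset.mem_range.mp hi)
          have g4 := Gfac_ne (Finset.mem_range.mp hi)
          simp only [hx]
          rw [norm_div, Real.norm_eq_abs, Real.norm_eq_abs, abs_of_pos g4, div_mul_div_comm, mul_one]
          push_cast
          apply div_le_div₀ hD hmu (by positivity)
          have : 0 ≤ (m:ℝ) * (m - (i + 1)) := by positivity
          linarith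
      _ ≤ ∑ i ∈ Finset.range m, (D / m) * (1 / ((m:ℝ) - i)) := by
          obtain ⟨n, rfl⟩ : ∃ n, m = n + 1 := ⟨m - 1, by omega⟩
          rw [Finset.sum_range_succ']
          simp only [Nat.add_sub_cancel]
          have : (0:ℝ) ≤ D / ((n + 1 : ℕ) : ℝ) * (1 / (((n + 1 : ℕ):ℝ) - ((0:ℕ):ℝ))) := by
            rw [Nat.cast_zero, sub_zero]; positivity
          linarith
      _ = D / m * ∑ i ∈ Finset.range m, (1 / ((m:ℝ) - i)) := by rw [Finset.mul_sum]
      _ ≤ D / m * (1 + log m) := by gcongr; exact sum_recip m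
      _ = _ := by ring
  have h3 : (1 + log m) / m ≤ 1 := by rw [div_le_one (by linarith)]; exact hlog2
  have h4 : 0 ≤ (1 + log m) / m := by positivity
  have h5 := exp_sub_one_le (D * ((1 + log m) / m)) D (by positivity) (mul_le_of_le_one_right hD h3)
  have h6 := exp_le_exp.mpr h2
  linarith

lemma prod_ddk (mu : ℝ) (m : ℕ) (hm : 1 ≤ m) : |∏ i ∈ Finset.range m, ddk mu i| = |mu| * (Gm m * |Qm mu m|) := by
  have hG : 0 ≤ Gm m := Finset.prod_nonneg fun i hi => (Gfac_ne (Finset.mem_range.mp hi)).le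
  rw [← abs_of_nonneg hG, ← abs_mul, ← abs_mul]
  have e : Gm m * Qm mu m = ∏ i ∈ Finset.range (m - 1), (mu - 4 * ((i:ℝ) + 1)^2) := by
    unfold Gm Qm
    rw [← Finset.prod_mul_distrib]
    apply Finset.prod_congr rfl
    intro i hi
    have := (Gfac_ne (Finset.mem_range.mp hi)).ne'
    exact mul_div_cancel₀ _ this
  rw [e]
  obtain ⟨n, rfl⟩ : ∃ n, m = n + 1 := ⟨m - 1, by omega⟩
  rw [Finset.prod_range_succ', abs_mul, abs_mul, mul_comm, Nat.add_sub_cancel, Finset.abs_prod, Finset.abs_prod]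
  congr 1
  · unfold ddk; simp
  · apply Finset.prod_congr rfl
    intro i _
    unfold ddk
    rw [abs_sub_comm]
    push_cast; rfl

def Od (m : ℕ) : ℝ := ∏ i ∈ Finset.range m, (2 * (i:ℝ) + 1)
def Pc (t : ℝ) (m : ℕ) : ℝ := ∏ i ∈ Finset.range m, (1 - t^2 / (2 * (i:ℝ) + 1)^2)

lemma prod_pp (α t : ℝ) (m : ℕ) : ∏ i ∈ Finset.range m, pp α t (i + 1) = (4 * α^2)^m * Od m ^ 2 * Pc t m := by
  unfold Od Pc
  have h3 : (4 * α^2)^m = ∏ i ∈ Finset.range m, (4 * α^2) := by simp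
  rw [h3, ← Finset.prod_pow, ← Finset.prod_mul_distrib, ← Finset.prod_mul_distrib]
  apply Finset.prod_congr rfl
  intro i _
  unfold pp
  push_cast
  have : (2 * (i:ℝ) + 1) ≠ 0 := by positivity
  field_simp
  ring

lemma Od_fac (n : ℕ) : Od (n + 1) * (2 ^ n * (n.factorial : ℝ)) = ((2 * n + 1).factorial : ℝ) := by
  induction n with
  | zero => simp [Od]
  | succ n ih =>
    rw [show 2 * (n + 1) + 1 = (2 * n + 1) + 1 + 1 by ring, Nat.factorial_succ (2*n+1+1), Nat.factorial_succ (2*n+1)]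
    push_cast
    rw [← ih]
    have : Od (n + 1 + 1) = Od (n + 1) * (2 * ((n + 1 : ℕ):ℝ) + 1) := by unfold Od; rw [Finset.prod_range_succ]
    rw [this, Nat.factorial_succ n]
    push_cast
    ring

lemma Gm_fac (n : ℕ) : Gm (n + 1) * ((n:ℝ) + 1) = 8 ^ n * Od (n + 1) * (n.factorial : ℝ) := by
  have e : Gm (n + 1) = 4 ^ n * (n.factorial : ℝ) * ((n + 2).ascFactorial n : ℝ) := by
    have h1 : (n.factorial : ℝ) = ∏ i ∈ Finset.range n, ((n:ℝ) - i) := by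
      rw [← Nat.descFactorial_self, Nat.descFactorial_eq_prod_range]
      push_cast
      apply Finset.prod_congr rfl
      intro i hi
      rw [Nat.cast_sub (Finset.mem_range.mp hi).le]
    have h2 : ((n + 2).ascFactorial n : ℝ) = ∏ i ∈ Finset.range n, ((n:ℝ) + 2 + i) := by
      rw [Nat.ascFactorial_eq_prod_range]; push_cast; rfl
    have h3 : (4:ℝ) ^ n = ∏ i ∈ Finset.range n, (4:ℝ) := by simp
    rw [h1, h2, h3, ← Finset.prod_mul_distrib, ← Finset.prod_mul_distrib]
    unfold Gm
    rw [Nat.add_sub_cancel]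
    apply Finset.prod_congr rfl
    intro i _
    push_cast; ring
  have h := Nat.factorial_mul_ascFactorial (n + 1) n
  have h' : ((n + 1).factorial : ℝ) * ((n + 2).ascFactorial n : ℝ) = ((2 * n + 1).factorial : ℝ) := by
    rw [show 2 * n + 1 = n + 1 + n by ring]; exact_mod_cast h
  rw [Nat.factorial_succ, ← Od_fac] at h'
  push_cast at h'
  have hf : (0:ℝ) < n.factorial := by positivity
  have h'' : ((n:ℝ) + 1) * ((n + 2).ascFactorial n : ℝ) = Od (n + 1) * 2 ^ n := by
    apply mul_right_cancel₀ hf.ne'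
    linear_combination h'
  rw [e, show (8:ℝ) = 4 * 2 by norm_num, mul_pow]
  linear_combination 4 ^ n * (n.factorial : ℝ) * h''

lemma Pc_shift (t : ℝ) (m : ℕ) : Pc (t + 2) m * ((2 * m - 1 - t) * (1 + t)) = Pc t m * ((-1 - t) * (2 * m + 1 + t)) := by
  induction m with
  | zero => simp [Pc]
  | succ m ih =>
    have e1 : ∀ s, Pc s (m + 1) = Pc s m * (1 - s^2 / (2 * (m:ℝ) + 1)^2) := by intro s; unfold Pc; rw [Finset.prod_range_succ]
    have hne : (2 * (m:ℝ) + 1) ≠ 0 := by positivity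
    rw [e1, e1]
    have f1 : ∀ s : ℝ, 1 - s^2 / (2 * (m:ℝ) + 1)^2 = (2 * m + 1 - s) * (2 * m + 1 + s) / (2 * (m:ℝ) + 1)^2 := by
      intro s; field_simp; ring
    rw [f1, f1]
    push_cast
    rw [show Pc (t + 2) m * ((2 * (m:ℝ) + 1 - (t + 2)) * (2 * m + 1 + (t + 2)) / (2 * (m:ℝ) + 1) ^ 2) * ((2 * (m + 1) - 1 - t) * (1 + t))
      = (Pc (t + 2) m * ((2 * m - 1 - t) * (1 + t))) * ((2 * m + 3 + t) * (2 * m + 1 - t) / (2 * (m:ℝ) + 1) ^ 2) by ring, ih]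
    ring

open Filter Topology

lemma Pc_even (n : ℕ) : Tendsto (Pc (2 * n)) atTop (𝓝 ((-1) ^ n)) := by
  induction n with
  | zero =>
    have : Pc (2 * ((0:ℕ):ℝ)) = fun _ => 1 := by ext m; simp [Pc]
    rw [this]; simp
  | succ n ih =>
    have hlim : Tendsto (fun m : ℕ => (2 * (m:ℝ) + 1 + 2 * n) / (2 * m - 1 - 2 * n)) atTop (𝓝 1) := by
      have h1 : Tendsto (fun m : ℕ => (2 + (1 + 2 * (n:ℝ)) / m) / (2 - (1 + 2 * (n:ℝ)) / m)) atTop (𝓝 ((2 + 0) / (2 - 0))) := by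
        have := tendsto_const_div_atTop_nhds_zero_nat (1 + 2 * (n:ℝ))
        exact (tendsto_const_nhds.add this).div (tendsto_const_nhds.sub this) (by norm_num)
      rw [show ((2:ℝ) + 0) / (2 - 0) = 1 by norm_num] at h1
      refine h1.congr' ?_
      filter_upwards [eventually_gt_atTop 0] with m hm
      have : (m:ℝ) ≠ 0 := by positivity
      rw [← mul_div_mul_right _ _ this]
      congr 1 <;> field_simp <;> ring
    have h2 := (ih.mul hlim).neg
    rw [show -((-1:ℝ)^n*1) = (-1)^(n+1) by ring] at h2
    refine h2.congr' ?_
    filter_upwards [eventually_gt_atTop (n + 1)] with m hm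
    have hm' : (n:ℝ) + 2 ≤ m := by exact_mod_cast hm
    have h3 : (0:ℝ) < 2 * m - 1 - 2 * n := by linarith
    have h4 := Pc_shift (2 * n) m
    have h5 : (0:ℝ) < 1 + 2 * n := by positivity
    have h6 : Pc (2 * n + 2) m * (2 * m - 1 - 2 * n) = - (Pc (2 * n) m * (2 * m + 1 + 2 * n)) := by
      apply mul_right_cancel₀ h5.ne'
      linear_combination h4
    push_cast
    rw [show 2 * ((n:ℝ) + 1) = 2 * n + 2 by ring, eq_div_of_mul_eq h3.ne' h6]
    ring

lemma prod_even_odd (t : ℝ) (n : ℕ) : ∏ j ∈ Finset.range (2 * n), (1 - t^2 / ((j:ℝ) + 1)^2) =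
    Pc t n * ∏ j ∈ Finset.range n, (1 - (t/2)^2 / ((j:ℝ) + 1)^2) := by
  unfold Pc
  induction n with
  | zero => simp
  | succ n ih =>
    rw [show 2 * (n + 1) = 2 * n + 1 + 1 by ring, Finset.prod_range_succ, Finset.prod_range_succ, ih, Finset.prod_range_succ, Finset.prod_range_succ]
    push_cast
    have : (1 - t^2 / (2 * (n:ℝ) + 1 + 1)^2) = 1 - (t/2)^2 / ((n:ℝ) + 1)^2 := by
      field_simp; ring
    rw [this]; ring

lemma Pc_tendsto (t : ℝ) : Tendsto (Pc t) atTop (𝓝 (cos (π * t / 2))) := by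
  by_cases hs : sin (π * (t / 2)) = 0
  · obtain ⟨n, hn⟩ := sin_eq_zero_iff.mp hs
    have ht : t = 2 * n := by
      have : π ≠ 0 := Real.pi_ne_zero
      have h : π * t = π * (2 * n) := by linarith
      exact mul_left_cancel₀ this h
    have h1 := Pc_even n.natAbs
    have e : Pc t = Pc (2 * (n.natAbs : ℝ)) := by
      ext m; unfold Pc
      have : (n.natAbs : ℝ) ^ 2 = (n:ℝ) ^ 2 := by
        rw [Nat.cast_natAbs, Int.cast_abs, sq_abs]
      rw [ht, mul_pow, mul_pow, this]
    rw [e]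
    convert h1 using 2
    rw [ht, show π * (2 * (n:ℝ)) / 2 = n * π by ring, cos_int_mul_pi]
    obtain ⟨k, h⟩ := Int.eq_nat_or_neg n
    rcases h with h | h
    · rw [h]; simp
    · rw [h]; simp [← inv_pow]
  · have h1 := (Real.tendsto_euler_sin_prod t).comp (tendsto_id.const_mul_atTop' (show 0 < 2 by norm_num) : Tendsto (fun n : ℕ => 2 * n) atTop atTop)
    have h2 := Real.tendsto_euler_sin_prod (t / 2)
    have h3 := h1.div (h2.const_mul 2) (mul_ne_zero two_ne_zero hs)
    have e : sin (π * t) / (2 * sin (π * (t / 2))) = cos (π * t / 2) := by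
      rw [show π * t = 2 * (π * (t / 2)) by ring, sin_two_mul, show 2 * (π * (t / 2)) / 2 = π * (t / 2) by ring]
      exact mul_div_cancel_left₀ _ (mul_ne_zero two_ne_zero hs)
    rw [e] at h3
    refine h3.congr' ?_
    filter_upwards [h2.eventually_ne hs] with n hn
    simp only [Function.comp, Pi.div_apply]
    rw [prod_even_odd, div_eq_iff (mul_ne_zero two_ne_zero hn)]
    ring

lemma Pc_tail (t : ℝ) (m n : ℕ) (hm : 1 ≤ m) (hn : m ≤ n) : |Pc t n - Pc t m| ≤ |Pc t m| * (t^2 * exp (t^2) / m) := by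
  have hm0 : (1:ℝ) ≤ m := by exact_mod_cast hm
  have e : Pc t n = Pc t m * ∏ i ∈ Finset.Ico m n, (1 + -(t^2 / (2 * (i:ℝ) + 1)^2)) := by
    unfold Pc
    simp only [← sub_eq_add_neg]
    rw [Finset.prod_range_mul_prod_Ico _ hn]
  rw [e, show ∀ a b : ℝ, a * b - a = a * (b - 1) by intros; ring, abs_mul]
  gcongr
  have h1 := Finset.norm_prod_one_add_sub_one_le (Finset.Ico m n) (fun i : ℕ => -(t^2 / (2 * (i:ℝ) + 1)^2))
  rw [Real.norm_eq_abs] at h1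
  have h2 : ∀ n, m ≤ n → ∑ i ∈ Finset.Ico m n, ‖-(t^2 / (2 * (i:ℝ) + 1)^2)‖ ≤ t^2 * (1 / m - 1 / n) := by
    intro n hn
    induction n, hn using Nat.le_induction with
    | base => simp
    | succ k hk ih =>
      rw [Finset.sum_Ico_succ_top hk]
      have hk0 : (1:ℝ) ≤ k := by exact_mod_cast hm.trans hk
      have q : ‖-(t^2 / (2 * (k:ℝ) + 1)^2)‖ ≤ t^2 * (1 / k - 1 / (k + 1)) := by
        rw [norm_neg, Real.norm_eq_abs, abs_of_nonneg (by positivity), div_eq_mul_one_div]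
        gcongr
        rw [div_sub_div _ _ (by positivity) (by positivity), div_le_div_iff₀ (by positivity) (by positivity)]
        nlinarith
      push_cast
      linarith
  have hn0 : (0:ℝ) ≤ 1 / (n:ℝ) := by positivity
  have h3 : ∑ i ∈ Finset.Ico m n, ‖-(t^2 / (2 * (i:ℝ) + 1)^2)‖ ≤ t^2 * (1 / m) :=
    (h2 n hn).trans (by gcongr; linarith)
  have h4 : t^2 * (1 / (m:ℝ)) ≤ t^2 := mul_le_of_le_one_right (sq_nonneg t) (by rw [div_le_one (by linarith)]; exact hm0)
  have h5 := exp_sub_one_le (t^2 * (1 / m)) (t^2) (by positivity) h4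
  have h6 := exp_le_exp.mpr h3
  calc _ ≤ _ := h1
    _ ≤ t^2 * (1 / m) * exp (t^2) := by linarith
    _ = _ := by ring

theorem Pc_bound (t : ℝ) : ∃ C, 0 ≤ C ∧ ∃ M : ℕ, ∀ m, M ≤ m → |Pc t m - cos (π * t / 2)| ≤ C * |cos (π * t / 2)| / m ∧ |Pc t m| ≤ 2 * |cos (π * t / 2)| := by
  set K := t^2 * exp (t^2) with hK
  have hK0 : 0 ≤ K := by positivity
  refine ⟨2 * K, by positivity, ⌈2 * K⌉₊ + 1, ?_⟩
  intro m hm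
  have hm1 : 1 ≤ m := by omega
  have hm0 : (1:ℝ) ≤ m := by exact_mod_cast hm1
  have hmK : 2 * K ≤ m := by
    calc 2 * K ≤ ⌈2 * K⌉₊ := Nat.le_ceil _
      _ ≤ m := by exact_mod_cast (by omega : ⌈2 * K⌉₊ ≤ m)
  have h1 : |cos (π * t / 2) - Pc t m| ≤ |Pc t m| * (K / m) := by
    have := ((Pc_tendsto t).sub_const (Pc t m)).abs
    refine le_of_tendsto this ?_
    filter_upwards [eventually_ge_atTop m] with n hn
    exact Pc_tail t m n hm1 hn
  have h2 : K / m ≤ 1 / 2 := by rw [div_le_div_iff₀ (by linarith) (by norm_num)]; linarith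
  have h3 : |Pc t m| ≤ 2 * |cos (π * t / 2)| := by
    have a1 := abs_sub_abs_le_abs_sub (Pc t m) (cos (π * t / 2))
    rw [abs_sub_comm] at a1
    have := mul_le_mul_of_nonneg_left h2 (abs_nonneg (Pc t m))
    linarith
  refine ⟨?_, h3⟩
  rw [abs_sub_comm]
  refine h1.trans ?_
  calc _ ≤ 2 * |cos (π * t / 2)| * (K / m) := by gcongr
    _ = _ := by ring

/-- Convergence with rate `log m / m`. -/
def Ap (X : ℕ → ℝ) (c : ℝ) : Prop := (fun m : ℕ => X m - c) =O[atTop] (fun m : ℕ => log m / m)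

lemma rate_tendsto : Tendsto (fun m : ℕ => log m / (m:ℝ)) atTop (𝓝 0) := by
  have h := (Real.isLittleO_log_id_atTop.tendsto_div_nhds_zero).comp tendsto_natCast_atTop_atTop (α := ℕ)
  exact h

lemma Ap.tendsto {X : ℕ → ℝ} {c : ℝ} (h : Ap X c) : Tendsto X atTop (𝓝 c) := by
  have := h.trans_tendsto rate_tendsto
  have h2 := this.add_const c
  simpa using h2

lemma Ap.mul {X Y : ℕ → ℝ} {c d : ℝ} (hX : Ap X c) (hY : Ap Y d) : Ap (fun m => X m * Y m) (c * d) := by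
  have h1 : (fun m => (X m - c) * Y m) =O[atTop] (fun m : ℕ => log m / (m:ℝ) * 1) := Asymptotics.IsBigO.mul hX (hY.tendsto.isBigO_one ℝ)
  have h2 : (fun m => c * (Y m - d)) =O[atTop] (fun m : ℕ => log m / (m:ℝ)) := Asymptotics.IsBigO.const_mul_left hY c
  simp only [mul_one] at h1
  refine (h1.add h2).congr_left fun m => by ring

lemma Ap.inv {X : ℕ → ℝ} {c : ℝ} (hX : Ap X c) (hc : c ≠ 0) : Ap (fun m => (X m)⁻¹) c⁻¹ := by
  have h1 : (fun m => (X m - c) * ((X m)⁻¹ * (-c⁻¹))) =O[atTop] (fun m : ℕ => log m / (m:ℝ) * 1) :=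
    Asymptotics.IsBigO.mul hX (((hX.tendsto.inv₀ hc).mul_const (-c⁻¹)).isBigO_one ℝ)
  simp only [mul_one] at h1
  refine h1.congr' ?_ EventuallyEq.rfl
  filter_upwards [hX.tendsto.eventually_ne hc] with m hm
  field_simp
  ring

lemma Ap.abs {X : ℕ → ℝ} {c : ℝ} (hX : Ap X c) : Ap (fun m => |X m|) |c| := by
  refine Asymptotics.IsBigO.trans ?_ hX
  refine Asymptotics.IsBigO.of_bound 1 (Eventually.of_forall fun m => ?_)
  rw [one_mul]
  exact abs_abs_sub_abs_le_abs_sub _ _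

lemma Ap.of_bound {X : ℕ → ℝ} {c C : ℝ} (hC : 0 ≤ C) (h : ∀ᶠ m : ℕ in atTop, |X m - c| ≤ C * ((1 + log m) / m)) : Ap X c := by
  refine Asymptotics.IsBigO.of_bound (2 * C) ?_
  filter_upwards [h, eventually_ge_atTop 3] with m hm h3
  have hm3 : (3:ℝ) ≤ m := by exact_mod_cast h3
  have hlog : 1 ≤ log m := by
    rw [Real.le_log_iff_exp_le (by linarith)]
    linarith [Real.exp_one_lt_d9]
  rw [Real.norm_eq_abs, Real.norm_eq_abs, abs_of_nonneg (show 0 ≤ log m / (m:ℝ) by positivity)]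
  refine hm.trans ?_
  calc C * ((1 + log m) / m) ≤ C * ((log m + log m) / m) := by gcongr
    _ = _ := by ring

lemma Ap.of_bound' {X : ℕ → ℝ} {c C : ℝ} (hC : 0 ≤ C) (h : ∀ᶠ m : ℕ in atTop, |X m - c| ≤ C / m) : Ap X c := by
  refine Ap.of_bound hC ?_
  filter_upwards [h, eventually_ge_atTop 1] with m hm h1
  have hm3 : (1:ℝ) ≤ m := by exact_mod_cast h1
  have hlog : 0 ≤ log m := Real.log_nonneg hm3
  refine hm.trans ?_
  rw [← mul_div_assoc]
  gcongr
  nlinarith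
end

section
section Final
open Filter Topology

def Kf (α : ℝ) (m : ℕ) : ℝ := 2 * (α^2)^m / (16^(m-1) * ((m-1).factorial:ℝ)^2)

lemma Kf_eq (α : ℝ) (m : ℕ) (hm : 1 ≤ m) : 2 * ((4 * α^2)^m * Od m ^ 2) = Kf α m * (4 * (m:ℝ)^2) * Gm m ^ 2 := by
  obtain ⟨n, rfl⟩ : ∃ n, m = n + 1 := ⟨m - 1, by omega⟩
  have h := Gm_fac n
  unfold Kf
  rw [Nat.add_sub_cancel]
  have hf : (0:ℝ) < n.factorial := by positivity
  have e : Gm (n+1) ^ 2 * (((n + 1 : ℕ):ℝ))^2 = (8 ^ n * Od (n + 1) * (n.factorial : ℝ))^2 := by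
    rw [← h]; push_cast; ring
  rw [show ∀ a b c : ℝ, a * (4 * b) * c = 4 * a * (c * b) by intros; ring, e]
  have e8 : ((8:ℝ)^n)^2 = 4^n * 16^n := by rw [← pow_mul, mul_comm, pow_mul, ← mul_pow]; norm_num
  simp only [mul_pow]
  rw [e8, pow_succ (4:ℝ)]
  field_simp

lemma ddk_ne {D mu : ℝ} {m : ℕ} (hm : 1 ≤ m) (hD : D ≤ m) (hmu : |mu - 4 * (m:ℝ)^2| ≤ D) : ∀ k < m, ddk mu k ≠ 0 := by
  intro k hk h
  unfold ddk at h
  have h1 : (k:ℝ) + 1 ≤ m := by exact_mod_cast hk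
  have h0 : (0:ℝ) ≤ k := Nat.cast_nonneg k
  have := (abs_le.mp hmu).1
  nlinarith

lemma Gm_pos (m : ℕ) : 0 < Gm m := Finset.prod_pos fun i hi => Gfac_ne (Finset.mem_range.mp hi)

theorem main_alpha (α t : ℝ) {lamP : ℕ → ℝ} (hP : EnumPer (pot (-4 * α * t) (-2 * α^2)) lamP) :
    ∃ X : ℕ → ℝ, Ap X 1 ∧ ∀ᶠ m : ℕ in atTop, lamP (2 * m) - lamP (2 * m - 1) = X m * |Pc t m| * Kf α m := by
  set V := |-4 * α * t| + |-2 * α^2| with hV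
  have hV0 : 0 ≤ V := by positivity
  set D := V + 2 * α^2 with hD
  have hD0 : 0 ≤ D := by positivity
  have hex : ∀ m : ℕ, ∃ (le lo : ℝ) (fe fo : ℝ → ℝ), 1 ≤ m → V ≤ m → (|le - lo| = lamP (2 * m) - lamP (2 * m - 1) ∧
      |le - 4 * (m:ℝ)^2| ≤ V ∧ |lo - 4 * (m:ℝ)^2| ≤ V ∧
      GoodEF (-4 * α * t) (-2 * α^2) le m (fun x => cos (2 * m * x)) fe ∧ GoodEF (-4 * α * t) (-2 * α^2) lo m (fun x => sin (2 * m * x)) fo) := by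
    intro m
    by_cases h : 1 ≤ m ∧ V ≤ m
    · obtain ⟨le, lo, fe, fo, h'⟩ := exists_pair hP m h.1 h.2
      exact ⟨le, lo, fe, fo, fun _ _ => h'⟩
    · exact ⟨0, 0, 0, 0, fun h1 h2 => absurd ⟨h1, h2⟩ h⟩
  choose le lo fe fo hall using hex
  set F := Fb (α^2/4) 0 with hF
  have hF1 : 1 ≤ F := Fb_ge_one (by positivity) 0
  have hF0 : F ≠ 0 := by linarith
  obtain ⟨N, hN⟩ := exists_nat_ge D
  have hbig : ∀ᶠ m : ℕ in atTop, 2 ≤ m ∧ D ≤ m := by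
    filter_upwards [eventually_ge_atTop 2, eventually_ge_atTop N] with m h1 h2
    exact ⟨h1, hN.trans (by exact_mod_cast h2)⟩
  have hα2 : 0 ≤ 2 * α^2 := by positivity
  have hfacts : ∀ m : ℕ, 2 ≤ m → D ≤ m → 1 ≤ m ∧ |le m - lo m| = lamP (2 * m) - lamP (2 * m - 1) ∧
      |le m + 2 * α^2 - 4 * (m:ℝ)^2| ≤ D ∧ |lo m + 2 * α^2 - 4 * (m:ℝ)^2| ≤ D ∧
      GoodEF (-4 * α * t) (-2 * α^2) (le m) m (fun x => cos (2 * m * x)) (fe m) ∧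
      GoodEF (-4 * α * t) (-2 * α^2) (lo m) m (fun x => sin (2 * m * x)) (fo m) := by
    intro m h2 hm
    obtain ⟨a1, a2, a3, a4, a5⟩ := hall m (by omega) (by linarith)
    refine ⟨by omega, a1, ?_, ?_, a4, a5⟩
    · rw [abs_le] at a2 ⊢; constructor <;> linarith
    · rw [abs_le] at a3 ⊢; constructor <;> linarith
  have Ar : Ap (fun m => rr α (fe m) m) (F / 2) := by
    obtain ⟨C, hC, h⟩ := rr_main α V
    refine Ap.of_bound' hC ?_
    filter_upwards [hbig] with m hm
    obtain ⟨b1, b2, b3, b4, b5, b6⟩ := hfacts m hm.1 hm.2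
    exact h m b1 (fe m) b5.1.1.continuous b5.2.2.2.2
  have Al : Ap (fun m => ll α (fo m) m) (F / 2) := by
    obtain ⟨C, hC, h⟩ := ll_main α V
    refine Ap.of_bound' hC ?_
    filter_upwards [hbig] with m hm
    obtain ⟨b1, b2, b3, b4, b5, b6⟩ := hfacts m hm.1 hm.2
    exact h m b1 (fo m) b6.1.1.continuous b6.2.2.2.2
  have AS : Ap (fun m => ∑' k : ℕ, ll α (fo m) (k + 1) * rr α (fe m) (k + 1)) (1 / 4) := by
    obtain ⟨C, hC, h⟩ := S_main α V
    refine Ap.of_bound' hC ?_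
    filter_upwards [hbig] with m hm
    obtain ⟨b1, b2, b3, b4, b5, b6⟩ := hfacts m hm.1 hm.2
    exact h m b1 (fe m) (fo m) b5.1.1.continuous b6.1.1.continuous b5.2.2.2.2 b6.2.2.2.2 (telescope b5.1 b6.1).1
  have AQe : Ap (fun m => Qm (le m + 2 * α^2) m) 1 := by
    refine Ap.of_bound (C := D * exp D) (by positivity) ?_
    filter_upwards [hbig] with m hm
    obtain ⟨b1, b2, b3, b4, b5, b6⟩ := hfacts m hm.1 hm.2
    exact Q_bound D hD0 m b1 _ b3
  have AQo : Ap (fun m => Qm (lo m + 2 * α^2) m) 1 := by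
    refine Ap.of_bound (C := D * exp D) (by positivity) ?_
    filter_upwards [hbig] with m hm
    obtain ⟨b1, b2, b3, b4, b5, b6⟩ := hfacts m hm.1 hm.2
    exact Q_bound D hD0 m b1 _ b4
  obtain ⟨Ce, hCe, hes⟩ := es_bound α t D hD0
  have Aee : Ap (fun m => es (epsq α t (le m + 2 * α^2)) 2 m) F := by
    refine Ap.of_bound hCe ?_
    filter_upwards [hbig] with m hm
    obtain ⟨b1, b2, b3, b4, b5, b6⟩ := hfacts m hm.1 hm.2
    exact hes m hm.1 hm.2 _ b3 2 (by norm_num) le_rfl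
  have Aeo : Ap (fun m => es (epsq α t (lo m + 2 * α^2)) 0 m) F := by
    refine Ap.of_bound hCe ?_
    filter_upwards [hbig] with m hm
    obtain ⟨b1, b2, b3, b4, b5, b6⟩ := hfacts m hm.1 hm.2
    exact hes m hm.1 hm.2 _ b4 0 le_rfl (by norm_num)
  have Aν : Ap (fun m => (le m + 2 * α^2) / (4 * (m:ℝ)^2)) 1 := by
    refine Ap.of_bound' hD0 ?_
    filter_upwards [hbig] with m hm
    obtain ⟨b1, b2, b3, b4, b5, b6⟩ := hfacts m hm.1 hm.2
    have hm0 : (1:ℝ) ≤ m := by exact_mod_cast b1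
    have h4 : (0:ℝ) < 4 * (m:ℝ)^2 := by positivity
    rw [div_sub_one h4.ne', abs_div, abs_of_pos h4]
    apply div_le_div₀ hD0 b3 (by linarith)
    nlinarith
  have Aden := ((((Aν.mul AS).mul AQe).mul AQo).mul Aee).mul Aeo
  have hden0 : 1 * (1 / 4) * 1 * 1 * F * F ≠ 0 := by
    have := mul_ne_zero hF0 hF0
    intro h; apply this; linarith
  have AX := ((Ar.mul Al).mul (Aden.inv hden0)).abs
  have hlim : |F / 2 * (F / 2) * (1 * (1 / 4) * 1 * 1 * F * F)⁻¹| = 1 := by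
    rw [show F / 2 * (F / 2) * (1 * (1 / 4) * 1 * 1 * F * F)⁻¹ = 1 by
      have := mul_inv_cancel₀ hF0
      rw [mul_inv, mul_inv, mul_inv]
      linear_combination (F * F⁻¹ + 1) * this]
    simp
  rw [hlim] at AX
  refine ⟨_, AX, ?_⟩
  filter_upwards [hbig, Aden.tendsto.eventually_ne hden0] with m hm hne
  obtain ⟨b1, b2, b3, b4, b5, b6⟩ := hfacts m hm.1 hm.2
  have hm0 : (1:ℝ) ≤ m := by exact_mod_cast b1
  have h4 : (0:ℝ) < 4 * (m:ℝ)^2 := by positivity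
  have ho0 := ddk_ne b1 hm.2 b4 0 (by omega)
  have hG := gap_exact b5.1 b6.1 m b1 (ddk_ne b1 hm.2 b3) (ddk_ne b1 hm.2 b4)
  have hG2 := congrArg abs hG
  simp only [abs_mul, abs_pow, abs_neg, abs_one, one_pow, mul_one, prod_ddk _ m b1, prod_pp, b2] at hG2
  have hd : |ddk (lo m + 2 * α^2) 0| = |lo m + 2 * α^2| := by
    unfold ddk
    rw [abs_sub_comm]
    simp only [Nat.cast_zero, ne_eq, OfNat.ofNat_ne_zero, not_false_eq_true, zero_pow, mul_zero, sub_zero]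
  rw [hd] at hG2
  rw [← abs_pos, hd] at ho0
  have hKf := Kf_eq α m b1
  have hGp := Gm_pos m
  have hOd : |Od m| ^ 2 = Od m ^ 2 := sq_abs _
  have hμ : |le m + 2 * α^2| = 4 * (m:ℝ)^2 * |(le m + 2 * α^2) / (4 * (m:ℝ)^2)| := by
    rw [abs_div, abs_of_pos h4, mul_div_cancel₀ _ h4.ne']
  have hα' : |(4:ℝ)| * |α| ^ 2 = 4 * α^2 := by rw [sq_abs]; norm_num
  rw [hμ, hOd, hα', abs_two] at hG2
  have hdabs := abs_pos.mpr hne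
  simp only [abs_mul, abs_inv] at hdabs ⊢
  generalize |(le m + 2 * α^2) / (4 * (m:ℝ)^2)| = ν at *
  generalize |lo m + 2 * α^2| = mo at *
  generalize |∑' k : ℕ, ll α (fo m) (k + 1) * rr α (fe m) (k + 1)| = S at *
  generalize |Qm (le m + 2 * α^2) m| = Qe at *
  generalize |Qm (lo m + 2 * α^2) m| = Qo at *
  generalize |es (epsq α t (le m + 2 * α^2)) 2 m| = ee at *
  generalize |es (epsq α t (lo m + 2 * α^2)) 0 m| = eo at *
  generalize |rr α (fe m) m| = r at *
  generalize |ll α (fo m) m| = l at *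
  generalize |Pc t m| = P at *
  generalize lamP (2 * m) - lamP (2 * m - 1) = g at *
  have key : g * (ν * S * Qe * Qo * ee * eo) = r * l * P * Kf α m := by
    have hz : mo * (4 * (m:ℝ)^2) * Gm m ^ 2 ≠ 0 := by positivity
    apply mul_right_cancel₀ hz
    linear_combination hG2 + mo * r * l * P * hKf
  rw [show r * l * (ν * S * Qe * Qo * ee * eo)⁻¹ * P * Kf α m = (r * l * P * Kf α m) * (ν * S * Qe * Qo * ee * eo)⁻¹ by ring, ← key, mul_inv_cancel_right₀ hdabs.ne']

theorem final_bound (α t : ℝ) {lamP : ℕ → ℝ} (hP : EnumPer (pot (-4 * α * t) (-2 * α^2)) lamP) :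
    ∃ C > 0, ∃ M : ℕ, 0 < M ∧ ∀ m : ℕ, M ≤ m →
      abs (lamP (2 * m) - lamP (2 * m - 1) - Kf α m * |cos (π * t / 2)|) ≤ C * (Kf α m * |cos (π * t / 2)|) * log m / m := by
  obtain ⟨X, hX, hg⟩ := main_alpha α t hP
  obtain ⟨C1, hC1, hX⟩ := hX.exists_pos
  obtain ⟨C2, hC2, M2, hPc⟩ := Pc_bound t
  have hev : ∀ᶠ m : ℕ in atTop, abs (lamP (2 * m) - lamP (2 * m - 1) - Kf α m * |cos (π * t / 2)|) ≤
      (2 * C1 + C2) * (Kf α m * |cos (π * t / 2)|) * log m / m := by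
    filter_upwards [hg, hX.bound, eventually_ge_atTop M2, eventually_ge_atTop 3] with m h1 h2 h3 h4
    have hm3 : (3:ℝ) ≤ m := by exact_mod_cast h4
    have hlog : 1 ≤ log m := by
      rw [Real.le_log_iff_exp_le (by linarith)]
      linarith [Real.exp_one_lt_d9]
    obtain ⟨p1, p2⟩ := hPc m h3
    rw [Real.norm_eq_abs, Real.norm_eq_abs, abs_of_nonneg (show 0 ≤ log m / (m:ℝ) by positivity)] at h2
    have hK : 0 ≤ Kf α m := by unfold Kf; positivity
    rw [h1, show X m * |Pc t m| * Kf α m - Kf α m * |cos (π * t / 2)| = Kf α m * ((X m - 1) * |Pc t m| + (|Pc t m| - |cos (π * t / 2)|)) by ring,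
      abs_mul, abs_of_nonneg hK]
    have q1 : abs ((X m - 1) * |Pc t m| + (|Pc t m| - |cos (π * t / 2)|)) ≤ C1 * (log m / m) * (2 * |cos (π * t / 2)|) + C2 * |cos (π * t / 2)| / m * log m := by
      refine (abs_add_le _ _).trans (add_le_add ?_ ?_)
      · rw [abs_mul, abs_abs]
        gcongr
      · refine (abs_abs_sub_abs_le_abs_sub _ _).trans (p1.trans ?_)
        exact le_mul_of_one_le_right (by positivity) hlog
    refine (mul_le_mul_of_nonneg_left q1 hK).trans (le_of_eq ?_)
    ring
  obtain ⟨M, hM⟩ := eventually_atTop.mp hev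
  exact ⟨2 * C1 + C2, by positivity, M + 1, by omega, fun m hm => hM m (by omega)⟩

lemma A_eq (c m1 q p : ℝ) (hc : c < 0) (hq : 0 < q) (hp : p = q ^ m1) (m : ℕ) (hm : 1 ≤ m) :
    q ^ (2 * m1 * (m : ℝ)) * |c| ^ m / (2 ^ (3 * m - 3) * ((2 * m - 2).doubleFactorial : ℝ) ^ 2) = Kf (√(-c/2) * p) m := by
  obtain ⟨n, rfl⟩ : ∃ n, m = n + 1 := ⟨m - 1, by omega⟩
  have h1 : q ^ (2 * m1 * ((n + 1 : ℕ) : ℝ)) = (p^2)^(n+1) := by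
    rw [Real.rpow_mul hq.le, Real.rpow_natCast, mul_comm, Real.rpow_mul hq.le, hp, Real.rpow_two]
  have h2 : (√(-c/2) * p)^2 = -c/2 * p^2 := by rw [mul_pow, Real.sq_sqrt (by linarith)]
  unfold Kf
  rw [h1, h2, abs_of_neg hc, show 3 * (n + 1) - 3 = 3 * n by omega, show 2 * (n + 1) - 2 = 2 * n by omega, Nat.doubleFactorial_two_mul,
    Nat.add_sub_cancel]
  push_cast
  have hf : (0:ℝ) < n.factorial := by positivity
  have e8 : (2:ℝ)^(3*n) * (2^n)^2 = 16^n * 2^n := by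
    rw [← pow_mul, ← pow_add, ← mul_pow, show 3 * n + n * 2 = 5 * n by ring, pow_mul]; norm_num
  rw [mul_pow (2^n : ℝ), ← mul_assoc, e8, show -c/2 * p^2 = p^2 * (-c) / 2 by ring, div_pow, mul_pow, pow_succ (2:ℝ)]
  field_simp

end Final
end

theorem stmt8 (b c m1 q : ℝ) (hc : c < 0) (hm1 : 0 < m1) (hq : 0 < q)
    (lamP lamM : ℕ → ℝ)
    (hP : EnumPer (fun x => b * q ^ m1 * Real.cos (2 * x) + c * q ^ (2 * m1) * Real.cos (4 * x))
      lamP)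
    (hM : EnumSemi (fun x => b * q ^ m1 * Real.cos (2 * x) + c * q ^ (2 * m1) * Real.cos (4 * x))
      lamM)
    (A : ℕ → ℝ)
    (hA : ∀ m : ℕ, 1 ≤ m →
      A m = q ^ (2 * m1 * (m : ℝ)) * |c| ^ m /
          (2 ^ (3 * m - 3) * ((2 * m - 2).doubleFactorial : ℝ) ^ 2) *
        |Real.cos (b * Real.pi / (4 * Real.sqrt (-2 * c)))|) :
    ∃ C > 0, ∃ M : ℕ, 0 < M ∧ ∀ m : ℕ, M ≤ m →
      |gapLen lamP lamM (2 * m) - A m| ≤ C * A m * Real.log m / m := by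
  have hs0 : 0 < √(-c/2) := Real.sqrt_pos.mpr (by linarith)
  have hs2 : √(-c/2) ^ 2 = -c/2 := Real.sq_sqrt (by linarith)
  have hsq : √(-2 * c) = 2 * √(-c/2) := by
    rw [show -2 * c = 2 ^ 2 * (-c/2) by ring, Real.sqrt_mul (by norm_num), Real.sqrt_sq (by norm_num)]
  have hp2 : q ^ (2 * m1) = (q ^ m1) ^ 2 := by
    rw [mul_comm, Real.rpow_mul hq.le, Real.rpow_two]
  have hpot : (fun x => b * q ^ m1 * Real.cos (2 * x) + c * q ^ (2 * m1) * Real.cos (4 * x)) =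
      pot (-4 * (√(-c/2) * q ^ m1) * (-b / (4 * √(-c/2)))) (-2 * (√(-c/2) * q ^ m1) ^ 2) := by
    funext x
    unfold pot
    have e1 : -4 * (√(-c/2) * q ^ m1) * (-b / (4 * √(-c/2))) = b * q ^ m1 := by
      have gen : ∀ s u : ℝ, s ≠ 0 → -4 * (s * u) * (-b / (4 * s)) = b * u := by
        intro s u hs
        field_simp
      exact gen _ _ hs0.ne'
    have e2 : -2 * (√(-c/2) * q ^ m1) ^ 2 = c * q ^ (2 * m1) := by
      rw [mul_pow, hs2, hp2]; ring
    rw [e1, e2]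
  rw [hpot] at hP
  obtain ⟨C, hC, M, hM0, h⟩ := final_bound (√(-c/2) * q ^ m1) (-b / (4 * √(-c/2))) hP
  refine ⟨C, hC, M, hM0, fun m hm => ?_⟩
  have hm1' : 1 ≤ m := by omega
  have hcos : cos (π * (-b / (4 * √(-c/2))) / 2) = cos (b * π / (4 * √(-2 * c))) := by
    rw [hsq, ← Real.cos_neg]
    congr 1
    have gen : ∀ s : ℝ, s ≠ 0 → -(π * (-b / (4 * s)) / 2) = b * π / (4 * (2 * s)) := by
      intro s hs
      field_simp
    exact gen _ hs0.ne'
  have hA' : A m = Kf (√(-c/2) * q ^ m1) m * |cos (π * (-b / (4 * √(-c/2))) / 2)| := by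
    rw [hA m hm1', A_eq c m1 q (q ^ m1) hc hq rfl m hm1', hcos]
  have hgap : gapLen lamP lamM (2 * m) = lamP (2 * m) - lamP (2 * m - 1) := by
    unfold gapLen
    rw [if_neg (by simp)]
  rw [hgap, hA']
  exact h m hm
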